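/- arXiv:1411.3842 — 5 statements merged into one kernel-verified Lean document; each statement's English description precedes it below -/
import Mathlib

section
/- Let K ⊂ ℝ² be an o-symmetric convex body with o in its interior and K ⊆ B². Let p, q ∈ ∂K with ‖p‖ = ‖q‖ = 1, and suppose the angle between the vectors p and q equals 2α with 2α ∈ (0, π/2]. Let S = {t·p + s·q : t, s ≥ 0}. Then V(K ∩ S) + V(K* ∩ S) ≤ 2α. -/
/-!
Let `β = 2α`, choose coordinates in which `p = (1, 0)` and `q = (cos β, sin β)`, and let
`h θ = max {⟨x, (cos θ, sin θ)⟩ : x ∈ K}` be the support function of `K`. The bound is obtained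
from three estimates on `[0, β]`.

* In polar coordinates `K* ∩ S` lies in `{r ≤ 1 / h θ}`, so `V(K* ∩ S) ≤ ½ ∫ h⁻²`
  (`IsSupport.polar_sector_area`).
* Likewise `K ∩ S` lies in `{r ≤ h θ}`, a region of area `½ ∫ h²`. That region also contains, for
  almost every `θ`, the open segment on the supporting line of direction `θ` between the foot of the
  perpendicular from the origin and the contact point. These segments avoid `K`, are pairwise
  disjoint, and sweep out the area `½ ∫ h'²` (change of variables with Jacobian `|h' - t|`). Hence
  `V(K ∩ S) + ½ ∫ h'² ≤ ½ ∫ h²` (`IsSupport.sector_area`).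
* It remains to see that `∫ (h² + h⁻² - 2) ≤ ∫ h'²`. Write `h = cos φ`. Since `K` lies in the unit
  disk, `φ` is 1-Lipschitz (`IsSupport.lipschitz`), and `φ 0 = φ β = 0` since `p, q ∈ K`. The claim
  becomes `∫ sin² φ (φ'² - tan² φ) ≥ 0` (`variational_ineq`).

The last inequality is proved by calibration. Let `M ≤ π / 4` be the maximum of `φ`,
`t = ½ sin M tan M` and `c = 2 t / √(1 + 4 t²)`. There is a function `calib` with `calib 0 = 0` and
`sin² φ (φ'² - tan² φ) + 4 t² ≥ calib' φ * |φ'|` whenever `|φ'| ≤ 1` (`calib_pointwise`). Integrating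
over the two sides of a maximum point gives `∫ sin² φ (φ'² - tan² φ) + 4 t² β ≥ 2 calib M`, while
`calib M ≥ π t²` (`calib_value`) and `β ≤ π / 2`. The pointwise bound starts from the identity
`y² s² + 4 b² = 4 b y s + (2 b - y s)²`, where `y = sin φ`, `s = |φ'|`,
`b² = t² - (½ sin φ tan φ)²`; the first summand of `calib` accounts for `4 b y s`, the second for the
square, which is bounded below because `s ≤ 1`.
-/

open MeasureTheory Real
open scoped Pointwise RealInnerProductSpace ENNReal

noncomputable section

abbrev E2 := EuclideanSpace ℝ (Fin 2)

/-- The polar body `K* = {y : ⟪x,y⟫ ≤ 1 for all x ∈ K}`. -/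
def polarBody (K : Set E2) : Set E2 := {y | ∀ x ∈ K, ⟪x, y⟫ ≤ 1}

/-! ### The calibration function -/

lemma integral_quarter_disk : ∫ x in (0:ℝ)..1, √(1 - x ^ 2) = π / 4 := by
  have hc : Continuous fun x : ℝ => √(1 - x ^ 2) := by fun_prop
  have h1 := intervalIntegral.integral_add_adjacent_intervals
    (hc.intervalIntegrable (μ := volume) (-1) 0) (hc.intervalIntegrable (μ := volume) 0 1)
  have h2 : ∫ x in (-1:ℝ)..0, √(1 - x ^ 2) = ∫ x in (0:ℝ)..1, √(1 - x ^ 2) := by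
    have := intervalIntegral.integral_comp_neg (a := 0) (b := 1) fun x : ℝ => √(1 - x ^ 2)
    simpa using this.symm
  rw [h2, integral_sqrt_one_sub_sq] at h1
  linarith

lemma integral_mul_sqrt_one_sub_sq : ∫ x in (0:ℝ)..1, x * √(1 - x ^ 2) = 1 / 3 := by
  have hc : Continuous fun x : ℝ => x * √(1 - x ^ 2) := by fun_prop
  rw [intervalIntegral.integral_eq_sub_of_hasDerivAt_of_le (f := fun x => -(√(1 - x ^ 2)) ^ 3 / 3)
    zero_le_one (by fun_prop) ?_ (hc.intervalIntegrable _ _)]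
  · norm_num
  · intro x hx
    have hpos : 0 < 1 - x ^ 2 := by nlinarith [hx.1, hx.2]
    have h1 : HasDerivAt (fun x : ℝ => 1 - x ^ 2) (-(2 * x)) x := by
      simpa using (hasDerivAt_pow 2 x).const_sub 1
    have h2 := ((((h1.sqrt hpos.ne').pow 3).neg).div_const 3)
    refine h2.congr_deriv ?_
    have := Real.sqrt_pos.2 hpos
    push_cast
    field_simp

/-- The value at `M` of the first summand of `calib`, where `½ sin M tan M = t`. -/
lemma integral_profile {t : ℝ} (ht : 0 ≤ t) :
    ∫ s in (0:ℝ)..t, 4 * √(t ^ 2 - s ^ 2) * (1 - s) = π * t ^ 2 - 4 / 3 * t ^ 3 := by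
  have h := intervalIntegral.mul_integral_comp_mul_left (a := 0) (b := 1) (c := t)
    (f := fun s => 4 * √(t ^ 2 - s ^ 2) * (1 - s))
  simp only [mul_zero, mul_one] at h
  rw [← h]
  have h2 : ∀ x : ℝ, 4 * √(t ^ 2 - (t * x) ^ 2) * (1 - t * x)
      = 4 * t * √(1 - x ^ 2) - 4 * t ^ 2 * (x * √(1 - x ^ 2)) := by
    intro x
    have : t ^ 2 - (t * x) ^ 2 = t ^ 2 * (1 - x ^ 2) := by ring
    rw [this, Real.sqrt_mul (sq_nonneg t), Real.sqrt_sq ht]; ring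
  simp_rw [h2]
  rw [intervalIntegral.integral_sub, intervalIntegral.integral_const_mul,
    intervalIntegral.integral_const_mul, integral_quarter_disk, integral_mul_sqrt_one_sub_sq]
  · ring
  · exact Continuous.intervalIntegrable (by fun_prop) _ _
  · exact Continuous.intervalIntegrable (by fun_prop) _ _

/-- The calibration function: a primitive of `calibDeriv` vanishing at `0`. Its first summand is an
integral in the variable `½ sin x tan x`, its second one in the variable `sin x`. -/
def calib (t c x : ℝ) : ℝ :=
  (∫ s in (0:ℝ)..(sin x * tan x / 2), 4 * √(t ^ 2 - s ^ 2) * (1 - s))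
    + ∫ s in (0:ℝ)..(sin x), (max (c - s) 0) ^ 2

/-- The derivative of `calib t c` at points where `cos x ≠ 0`. -/
def calibDeriv (t c x : ℝ) : ℝ :=
  4 * √(t ^ 2 - (sin x * tan x / 2) ^ 2) * (1 - sin x * tan x / 2)
      * (sin x * (1 + 1 / cos x ^ 2) / 2)
    + (max (c - sin x) 0) ^ 2 * cos x

lemma hasDerivAt_calib (t c : ℝ) {x : ℝ} (hx : cos x ≠ 0) :
    HasDerivAt (calib t c) (calibDeriv t c x) x := by
  have hS : HasDerivAt (fun x => sin x * tan x / 2) (sin x * (1 + 1 / cos x ^ 2) / 2) x := by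
    refine (((hasDerivAt_sin x).mul (hasDerivAt_tan hx)).div_const 2).congr_deriv ?_
    rw [tan_eq_sin_div_cos]; field_simp
  have c1 : Continuous fun s : ℝ => 4 * √(t ^ 2 - s ^ 2) * (1 - s) := by fun_prop
  have c2 : Continuous fun s : ℝ => (max (c - s) 0) ^ 2 := by fun_prop
  exact ((c1.integral_hasStrictDerivAt 0 _).hasDerivAt.comp x hS).add
    ((c2.integral_hasStrictDerivAt 0 _).hasDerivAt.comp x (hasDerivAt_sin x))

/-- The calibration inequality, for an angle `x` (a value of `φ`) and a slope `s` (a value of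
the derivative of `φ`). -/
lemma calib_pointwise {t c x s : ℝ} (ht : 0 ≤ t)
    (hc : c = 2 * t / √(1 + 4 * t ^ 2))
    (hx0 : 0 ≤ x) (hx : x ≤ π / 4) (hxt : sin x * tan x / 2 ≤ t) (hs : |s| ≤ 1) :
    calibDeriv t c x * |s| ≤ (sin x * s) ^ 2 - (sin x * tan x) ^ 2 + 4 * t ^ 2 := by
  have hpi := pi_pos
  have hy0 : 0 ≤ sin x := sin_nonneg_of_nonneg_of_le_pi hx0 (by linarith)
  have hcos : 0 < cos x := cos_pos_of_mem_Ioo ⟨by linarith, by linarith⟩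
  have hcos1 : cos x ≤ 1 := cos_le_one x
  have hyt : sin x * tan x = sin x ^ 2 / cos x := by rw [tan_eq_sin_div_cos]; ring
  rw [hyt] at hxt
  rw [calibDeriv, hyt]
  have hsc := sin_sq_add_cos_sq x
  set y := sin x
  set h := cos x
  set S := y ^ 2 / h / 2 with hSdef
  have hS0 : 0 ≤ S := by positivity
  set b := √(t ^ 2 - S ^ 2) with hb
  have hb0 : 0 ≤ b := sqrt_nonneg _
  have hb2 : b ^ 2 = t ^ 2 - S ^ 2 := sq_sqrt (by nlinarith)
  have hy2 : (y * s) ^ 2 = y ^ 2 * |s| ^ 2 := by rw [sq_abs]; ring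
  have hS2 : (y ^ 2 / h) ^ 2 = 4 * S ^ 2 := by rw [hSdef]; ring
  rw [hy2, hS2]
  have hs0 := abs_nonneg s
  -- the weight `1 - S` in `calibDeriv` makes its product with the derivative of `S` at most `sin x`
  have h1 : (1 - S) * (y * (1 + 1 / h ^ 2) / 2) ≤ y := by
    have hy' : y ^ 2 = 1 - h ^ 2 := by linarith
    have : (1 - S) * ((1 + 1 / h ^ 2) / 2) ≤ 1 := by
      rw [hSdef, hy']
      have e : (1 - (1 - h ^ 2) / h / 2) * ((1 + 1 / h ^ 2) / 2) - 1
        = (h - 1) ^ 3 * (h + 1) / (4 * h ^ 3) := by field_simp; ring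
      have : (h - 1) ^ 3 * (h + 1) / (4 * h ^ 3) ≤ 0 := by
        apply div_nonpos_of_nonpos_of_nonneg _ (by positivity)
        have : (h - 1) ^ 3 ≤ 0 := by
          have : 0 ≤ (1 - h) ^ 3 := pow_nonneg (by linarith) 3
          nlinarith
        nlinarith
      linarith
    calc _ = y * ((1 - S) * ((1 + 1 / h ^ 2) / 2)) := by ring
      _ ≤ y * 1 := by gcongr
      _ = y := mul_one y
  have h2 : 4 * b * (1 - S) * (y * (1 + 1 / h ^ 2) / 2) ≤ 4 * b * y := by
    calc _ = 4 * b * ((1 - S) * (y * (1 + 1 / h ^ 2) / 2)) := by ring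
      _ ≤ _ := by gcongr
  -- `y * |s| ≤ y`, and `c ≤ 2 * b` as long as `y ≤ c`
  have h3 : (max (c - y) 0) ^ 2 ≤ (2 * b - y * |s|) ^ 2 := by
    rcases le_total c y with hcy | hcy
    · rw [max_eq_right (by linarith)]; simpa using sq_nonneg _
    · rw [max_eq_left (by linarith)]
      have hc2 : c ^ 2 = 4 * t ^ 2 / (1 + 4 * t ^ 2) := by
        rw [hc, div_pow, sq_sqrt (by positivity)]; ring
      have hyc : y ^ 2 ≤ c ^ 2 := by gcongr
      have hcb : c ^ 2 ≤ (2 * b) ^ 2 := by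
        have hh : 4 * S ^ 2 * h ^ 2 = y ^ 2 * y ^ 2 := by rw [hSdef]; field_simp; ring
        have hc3 : c ^ 2 * (1 + 4 * t ^ 2) = 4 * t ^ 2 := by rw [hc2]; field_simp
        have : 4 * S ^ 2 ≤ 4 * t ^ 2 * c ^ 2 := by
          have hh1 : 1 - c ^ 2 ≤ h ^ 2 := by linarith
          have hh2 : 4 * S ^ 2 * (1 - c ^ 2) ≤ c ^ 2 * c ^ 2 := by
            calc 4 * S ^ 2 * (1 - c ^ 2) ≤ 4 * S ^ 2 * h ^ 2 := by gcongr
              _ = y ^ 2 * y ^ 2 := hh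
              _ ≤ _ := by gcongr
          have hh3 : (1 - c ^ 2) * (1 + 4 * t ^ 2) = 1 := by linarith
          calc 4 * S ^ 2 = 4 * S ^ 2 * (1 - c ^ 2) * (1 + 4 * t ^ 2) := by
                rw [mul_assoc, hh3, mul_one]
            _ ≤ c ^ 2 * c ^ 2 * (1 + 4 * t ^ 2) := by gcongr
            _ = c ^ 2 * (c ^ 2 * (1 + 4 * t ^ 2)) := by ring
            _ = _ := by rw [hc3]; ring
        rw [mul_pow, hb2]; linarith
      have hcb' : c ≤ 2 * b := le_of_sq_le_sq hcb (by positivity)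
      have : y * |s| ≤ y := by nlinarith
      have h0 : 0 ≤ c - y := by linarith
      gcongr
  have h4 : (max (c - y) 0) ^ 2 * h * |s| ≤ (max (c - y) 0) ^ 2 := by
    have : h * |s| ≤ 1 := by nlinarith
    calc _ = (max (c - y) 0) ^ 2 * (h * |s|) := by ring
      _ ≤ (max (c - y) 0) ^ 2 * 1 := by gcongr
      _ = _ := mul_one _
  have h5 : 4 * b * (1 - S) * (y * (1 + 1 / h ^ 2) / 2) * |s| ≤ 4 * b * y * |s| := by gcongr
  have h6 : (2 * b - y * |s|) ^ 2 = 4 * b ^ 2 - 4 * b * y * |s| + y ^ 2 * |s| ^ 2 := by ring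
  rw [add_mul]
  linarith

/-- The first summand of `calib t c M` is `π t² - 4 t³ / 3`, and the second is at least `c³ / 3`, which
is at least `4 t³ / 3` as `4 t² ≤ 1 / 2`. -/
lemma calib_value {t c M : ℝ} (ht : 0 ≤ t) (hE : 4 * t ^ 2 ≤ 1 / 2)
    (hc : c = 2 * t / √(1 + 4 * t ^ 2))
    (hM0 : 0 ≤ M) (hM : M ≤ π / 4) (hMt : sin M * tan M / 2 = t) :
    π * t ^ 2 ≤ calib t c M := by
  have hpi := pi_pos
  have hy0 : 0 ≤ sin M := sin_nonneg_of_nonneg_of_le_pi hM0 (by linarith)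
  have hcos : 0 < cos M := cos_pos_of_mem_Ioo ⟨by linarith, by linarith⟩
  have hc0 : 0 ≤ c := by rw [hc]; positivity
  have hc2 : c ^ 2 * (1 + 4 * t ^ 2) = 4 * t ^ 2 := by
    rw [hc, div_pow, sq_sqrt (by positivity)]; field_simp; ring
  have hsc := sin_sq_add_cos_sq M
  have hcM : c ≤ sin M := by
    refine le_of_sq_le_sq ?_ hy0
    have e : 4 * t ^ 2 * cos M ^ 2 = sin M ^ 2 * sin M ^ 2 := by
      rw [← hMt, tan_eq_sin_div_cos]; field_simp; ring
    -- `c = sin ψ` where `tan ψ = 2 t = sin M tan M`, so this is `ψ ≤ M`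
    have h1 : cos M ^ 2 * (1 + 4 * t ^ 2) * c ^ 2 ≤ cos M ^ 2 * (1 + 4 * t ^ 2) * sin M ^ 2 := by
      have : cos M ^ 2 * (1 + 4 * t ^ 2) * c ^ 2 = sin M ^ 2 * sin M ^ 2 := by
        rw [← e]; linear_combination cos M ^ 2 * hc2
      rw [this]
      have h3 : cos M ^ 2 * (1 + 4 * t ^ 2) = cos M ^ 2 + sin M ^ 2 * sin M ^ 2 := by
        rw [← e]; ring
      rw [h3]
      have : 0 ≤ (cos M ^ 2 - sin M ^ 2 * cos M ^ 2) * sin M ^ 2 := by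
        have h4 : cos M ^ 2 - sin M ^ 2 * cos M ^ 2 = cos M ^ 2 * cos M ^ 2 := by
          linear_combination (-cos M ^ 2) * hsc
        rw [h4]; positivity
      nlinarith
    exact le_of_mul_le_mul_left h1 (by positivity)
  have c2 : Continuous fun s : ℝ => (max (c - s) 0) ^ 2 := by fun_prop
  have h1 : c ^ 3 / 3 ≤ ∫ s in (0:ℝ)..(sin M), (max (c - s) 0) ^ 2 := by
    rw [← intervalIntegral.integral_add_adjacent_intervals (c2.intervalIntegrable 0 c)
      (c2.intervalIntegrable c (sin M))]
    have h2 : 0 ≤ ∫ s in c..(sin M), (max (c - s) 0) ^ 2 :=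
      intervalIntegral.integral_nonneg hcM fun s _ => by positivity
    have h3 : ∫ s in (0:ℝ)..c, (max (c - s) 0) ^ 2 = c ^ 3 / 3 := by
      have : ∫ s in (0:ℝ)..c, (max (c - s) 0) ^ 2 = ∫ s in (0:ℝ)..c, (c - s) ^ 2 := by
        apply intervalIntegral.integral_congr
        intro s hs
        rw [Set.uIcc_of_le hc0] at hs
        simp only
        rw [max_eq_left (by linarith [hs.2])]
      rw [this, intervalIntegral.integral_comp_sub_left (fun s => s ^ 2) c]
      simp; norm_num
    linarith
  have h2 : 4 * t ^ 3 ≤ c ^ 3 := by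
    set R := 1 + 4 * t ^ 2
    have hR : R ≤ 3 / 2 := by linarith
    have hR0 : 0 < √R := sqrt_pos.2 (by positivity)
    have hR2 : √R ^ 2 = R := sq_sqrt (by positivity)
    have hR3 : √R ^ 3 ≤ 2 := by
      refine le_of_sq_le_sq ?_ (by norm_num)
      calc (√R ^ 3) ^ 2 = (√R ^ 2) ^ 3 := by ring
        _ = R ^ 3 := by rw [hR2]
        _ ≤ (3 / 2) ^ 3 := by gcongr
        _ ≤ 2 ^ 2 := by norm_num
    rw [hc, div_pow, le_div_iff₀ (by positivity)]
    nlinarith [pow_nonneg ht 3]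
  rw [calib, hMt, integral_profile ht]
  linarith

/-! ### The variational inequality -/

lemma abs_deriv_le_one {φ : ℝ → ℝ} (hφ : LipschitzWith 1 φ) (θ : ℝ) : |deriv φ θ| ≤ 1 := by
  simpa using norm_deriv_le_of_lipschitz (x₀ := θ) hφ

lemma intervalIntegrable_sin_mul_deriv {φ : ℝ → ℝ} (hφ : LipschitzWith 1 φ) (a b : ℝ) :
    IntervalIntegrable (fun θ => (sin (φ θ) * deriv φ θ) ^ 2) volume a b := by
  have hm : Measurable fun θ => (sin (φ θ) * deriv φ θ) ^ 2 :=
    ((continuous_sin.comp hφ.continuous).measurable.mul (measurable_deriv φ)).pow_const 2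
  refine (intervalIntegrable_const (c := (1:ℝ))).mono_fun hm.aestronglyMeasurable ?_
  filter_upwards with θ
  have h1 := abs_deriv_le_one hφ θ
  have h2 := abs_sin_le_one (φ θ)
  rw [norm_pow, norm_mul]
  simp only [Real.norm_eq_abs, abs_one]
  exact pow_le_one₀ (by positivity) (mul_le_one₀ h2 (abs_nonneg _) h1)

/-- The integrated calibration inequality over `[a, b]`, used with `ε = 1` on the left of a maximum
point of `φ` and with `ε = -1` on its right. -/
lemma calib_le_integral {φ : ℝ → ℝ} (hφ : LipschitzWith 1 φ) {t c M a b ε : ℝ} (ht : 0 ≤ t)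
    (hc : c = 2 * t / √(1 + 4 * t ^ 2)) (hM : M ≤ π / 4) (hMt : sin M * tan M / 2 = t)
    (hab : a ≤ b) (hmem : ∀ θ ∈ Set.Icc a b, φ θ ∈ Set.Icc 0 M) (hε : |ε| = 1)
    (hG : ∀ x ∈ Set.Icc 0 M, 0 ≤ calibDeriv t c x) :
    ε * (calib t c (φ b) - calib t c (φ a)) ≤
      ∫ θ in a..b, ((sin (φ θ) * deriv φ θ) ^ 2 - (sin (φ θ) * tan (φ θ)) ^ 2 + 4 * t ^ 2) := by
  have hpi := pi_pos
  have hcos : ∀ x ∈ Set.Icc 0 M, cos x ≠ 0 := fun x hx =>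
    (cos_pos_of_mem_Ioo ⟨by linarith [hx.1], by linarith [hx.2]⟩).ne'
  have hcont : ContinuousOn (calibDeriv t c) (Set.Icc 0 M) := by
    have ht : ContinuousOn tan (Set.Icc 0 M) := continuousOn_tan.mono fun x hx => hcos x hx
    unfold calibDeriv
    fun_prop (disch := intro x hx; exact pow_ne_zero 2 (hcos x hx))
  obtain ⟨C, hC⟩ := isCompact_Icc.exists_bound_of_continuousOn hcont
  have hLip : LipschitzOnWith C.toNNReal (calib t c) (Set.Icc 0 M) := by
    refine Convex.lipschitzOnWith_of_nnnorm_hasDerivWithin_le (convex_Icc 0 M)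
      (fun x hx => (hasDerivAt_calib t c (hcos x hx)).hasDerivWithinAt) fun x hx => ?_
    rw [← NNReal.coe_le_coe, coe_nnnorm]
    exact (hC x hx).trans (le_coe_toNNReal C)
  have hLip2 : LipschitzOnWith (C.toNNReal * 1) (calib t c ∘ φ) (Set.uIcc a b) := by
    rw [Set.uIcc_of_le hab]
    exact hLip.comp hφ.lipschitzOnWith hmem
  have hac := hLip2.absolutelyContinuousOnInterval
  have hftc := hac.integral_deriv_eq_sub
  rw [Function.comp_apply, Function.comp_apply] at hftc
  rw [← hftc, ← intervalIntegral.integral_const_mul]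
  have hcont2 : ContinuousOn (fun θ => (sin (φ θ) * tan (φ θ)) ^ 2) (Set.uIcc a b) := by
    rw [Set.uIcc_of_le hab]
    have ht : ContinuousOn (fun θ => tan (φ θ)) (Set.Icc a b) :=
      continuousOn_tan.comp hφ.continuous.continuousOn fun x hx => hcos _ (hmem x hx)
    have := hφ.continuous.continuousOn (s := Set.Icc a b)
    fun_prop
  refine intervalIntegral.integral_mono_ae_restrict hab (hac.intervalIntegrable_deriv.const_mul ε)
    (((intervalIntegrable_sin_mul_deriv hφ a b).sub hcont2.intervalIntegrable).add
      intervalIntegrable_const) ?_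
  filter_upwards [ae_restrict_mem measurableSet_Icc, ae_restrict_of_ae hφ.ae_differentiableAt_real]
    with θ hθ hd
  have hx := hmem θ hθ
  have hder : deriv (calib t c ∘ φ) θ = calibDeriv t c (φ θ) * deriv φ θ :=
    ((hasDerivAt_calib t c (hcos _ hx)).comp θ hd.hasDerivAt).deriv
  have hxt : sin (φ θ) * tan (φ θ) / 2 ≤ t := by
    rw [← hMt]
    have h1 : sin (φ θ) ≤ sin M :=
      sin_le_sin_of_le_of_le_pi_div_two (by linarith [hx.1]) (by linarith) hx.2
    have h2 : tan (φ θ) ≤ tan M := by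
      rcases hx.2.eq_or_lt with h | h
      · rw [h]
      · exact (tan_lt_tan_of_lt_of_lt_pi_div_two (by linarith [hx.1]) (by linarith) h).le
    have h3 : 0 ≤ tan (φ θ) := tan_nonneg_of_nonneg_of_le_pi_div_two hx.1 (by linarith [hx.2])
    have h4 : 0 ≤ sin M := sin_nonneg_of_nonneg_of_le_pi (hx.1.trans hx.2) (by linarith)
    gcongr
  refine le_trans ?_ (calib_pointwise ht hc hx.1 (hx.2.trans hM) hxt (abs_deriv_le_one hφ θ))
  simp only [hder]
  calc ε * (calibDeriv t c (φ θ) * deriv φ θ) ≤ |ε * (calibDeriv t c (φ θ) * deriv φ θ)| :=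
        le_abs_self _
    _ = _ := by rw [abs_mul, abs_mul, hε, one_mul, abs_of_nonneg (hG _ hx)]

lemma calibDeriv_nonneg {t c x : ℝ} (hx0 : 0 ≤ x) (hx : x ≤ π / 4) : 0 ≤ calibDeriv t c x := by
  have hpi := pi_pos
  have hy0 : 0 ≤ sin x := sin_nonneg_of_nonneg_of_le_pi hx0 (by linarith)
  have hcos : 0 < cos x := cos_pos_of_mem_Ioo ⟨by linarith, by linarith⟩
  have ht0 : 0 ≤ tan x := tan_nonneg_of_nonneg_of_le_pi_div_two hx0 (by linarith)
  have ht1 : tan x ≤ 1 := by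
    rcases hx.eq_or_lt with h | h
    · rw [h, tan_pi_div_four]
    · rw [← tan_pi_div_four]
      exact (tan_lt_tan_of_lt_of_lt_pi_div_two (by linarith) (by linarith) h).le
  have : 0 ≤ 1 - sin x * tan x / 2 := by nlinarith [sin_le_one x]
  unfold calibDeriv
  positivity

/-- The one-dimensional variational inequality behind the bound: the Lipschitz condition and
`β ≤ π / 2` force `φ ≤ π / 4` on `[0, β]`, and the calibration applies. -/
lemma variational_ineq {φ : ℝ → ℝ} (hφ : LipschitzWith 1 φ) {β : ℝ} (hβ0 : 0 ≤ β)
    (hβ : β ≤ π / 2) (h0 : φ 0 = 0) (h1 : φ β = 0) (hnn : ∀ θ, 0 ≤ φ θ) :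
    0 ≤ ∫ θ in (0:ℝ)..β, ((sin (φ θ) * deriv φ θ) ^ 2 - (sin (φ θ) * tan (φ θ)) ^ 2) := by
  have hpi := pi_pos
  obtain ⟨θ₀, hθ₀, hmax⟩ := isCompact_Icc.exists_isMaxOn (Set.nonempty_Icc.2 hβ0)
    hφ.continuous.continuousOn
  have hd : ∀ x y, φ x - φ y ≤ |x - y| := fun x y => by
    have := hφ.dist_le_mul x y
    rw [Real.dist_eq, Real.dist_eq] at this
    simpa using (le_abs_self _).trans this
  have hM : φ θ₀ ≤ π / 4 := by
    have e1 := hd θ₀ 0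
    have e2 := hd θ₀ β
    rw [h0, sub_zero, sub_zero, abs_of_nonneg hθ₀.1] at e1
    rw [h1, sub_zero, abs_of_nonpos (by linarith [hθ₀.2])] at e2
    linarith
  have hmem : ∀ θ ∈ Set.Icc 0 β, φ θ ∈ Set.Icc 0 (φ θ₀) := fun θ hθ => ⟨hnn θ, hmax hθ⟩
  set M := φ θ₀ with hMdef
  have hM0 : 0 ≤ M := hnn _
  set t := sin M * tan M / 2 with ht
  have hsin0 : 0 ≤ sin M := sin_nonneg_of_nonneg_of_le_pi hM0 (by linarith)
  have htan0 : 0 ≤ tan M := tan_nonneg_of_nonneg_of_le_pi_div_two hM0 (by linarith)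
  have ht0 : 0 ≤ t := by positivity
  have hE : 4 * t ^ 2 ≤ 1 / 2 := by
    have hcM : √2 / 2 ≤ cos M := by
      rw [← cos_pi_div_four]
      exact cos_le_cos_of_nonneg_of_le_pi hM0 (by linarith) hM
    have hc2 : 1 / 2 ≤ cos M ^ 2 := by
      calc (1:ℝ) / 2 = (√2 / 2) ^ 2 := by rw [div_pow, sq_sqrt (by norm_num)]; norm_num
        _ ≤ _ := by gcongr
    have hsc := sin_sq_add_cos_sq M
    have e : 4 * t ^ 2 = sin M ^ 2 * sin M ^ 2 / cos M ^ 2 := by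
      rw [ht, tan_eq_sin_div_cos]; ring
    rw [e, div_le_iff₀ (by linarith)]
    nlinarith [sq_nonneg (sin M)]
  have hG : ∀ x ∈ Set.Icc 0 M, 0 ≤ calibDeriv t (2 * t / √(1 + 4 * t ^ 2)) x :=
    fun x hx => calibDeriv_nonneg hx.1 (hx.2.trans hM)
  have A := calib_le_integral hφ (ε := 1) ht0 rfl hM rfl hθ₀.1
    (fun θ hθ => hmem θ ⟨hθ.1, hθ.2.trans hθ₀.2⟩) (by simp) hG
  have B := calib_le_integral hφ (ε := -1) ht0 rfl hM rfl hθ₀.2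
    (fun θ hθ => hmem θ ⟨hθ₀.1.trans hθ.1, hθ.2⟩) (by simp) hG
  have V := calib_value ht0 hE rfl hM0 hM rfl
  have Z : calib t (2 * t / √(1 + 4 * t ^ 2)) 0 = 0 := by simp [calib]
  rw [h0, Z] at A
  rw [h1, Z] at B
  have hcont2 : ContinuousOn (fun θ => (sin (φ θ) * tan (φ θ)) ^ 2) (Set.Icc 0 β) := by
    have ht : ContinuousOn (fun θ => tan (φ θ)) (Set.Icc 0 β) :=
      continuousOn_tan.comp hφ.continuous.continuousOn fun x hx =>
        (cos_pos_of_mem_Ioo ⟨by linarith [(hmem x hx).1], by linarith [(hmem x hx).2]⟩).ne'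
    have := hφ.continuous.continuousOn (s := Set.Icc 0 β)
    fun_prop
  have hinteg : IntervalIntegrable
      (fun θ => (sin (φ θ) * deriv φ θ) ^ 2 - (sin (φ θ) * tan (φ θ)) ^ 2) volume 0 β :=
    (intervalIntegrable_sin_mul_deriv hφ 0 β).sub
      (ContinuousOn.intervalIntegrable (by rwa [Set.uIcc_of_le hβ0]))
  have hinteg' := hinteg.add (intervalIntegrable_const (c := 4 * t ^ 2))
  have hsum := intervalIntegral.integral_add_adjacent_intervals
    (hinteg'.mono_set (c := 0) (d := θ₀) (by
      rw [Set.uIcc_of_le hβ0, Set.uIcc_of_le hθ₀.1]; exact Set.Icc_subset_Icc_right hθ₀.2))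
    (hinteg'.mono_set (c := θ₀) (d := β) (by
      rw [Set.uIcc_of_le hβ0, Set.uIcc_of_le hθ₀.2]; exact Set.Icc_subset_Icc_left hθ₀.1))
  rw [intervalIntegral.integral_add hinteg intervalIntegrable_const] at hsum
  simp only [intervalIntegral.integral_const, sub_zero, smul_eq_mul] at hsum
  have : β * (4 * t ^ 2) ≤ π / 2 * (4 * t ^ 2) := by gcongr
  linarith

/-! ### Areas in polar and tangential coordinates -/

/-- Tonelli over a set, slicing by the second coordinate. -/
lemma setLIntegral_slice {s : Set (ℝ × ℝ)} (hs : MeasurableSet s) {f : ℝ × ℝ → ℝ≥0∞}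
    (hf : Measurable f) :
    ∫⁻ p in s, f p = ∫⁻ θ, ∫⁻ r in {r | (r, θ) ∈ s}, f (r, θ) := by
  rw [← lintegral_indicator hs, Measure.volume_eq_prod,
    lintegral_prod_symm _ (hf.indicator hs).aemeasurable]
  refine lintegral_congr fun θ => ?_
  rw [← lintegral_indicator (s := {r | (r, θ) ∈ s}) (measurable_prodMk_right hs)]
  rfl

lemma setLIntegral_Ioo_ofReal {f : ℝ → ℝ} (hf : Continuous f) {a b : ℝ} (hab : a ≤ b)
    (hnn : ∀ x ∈ Set.Ioo a b, 0 ≤ f x) :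
    ∫⁻ x in Set.Ioo a b, ENNReal.ofReal (f x) = ENNReal.ofReal (∫ x in a..b, f x) := by
  rw [intervalIntegral.integral_of_le hab, integral_Ioc_eq_integral_Ioo,
    ofReal_integral_eq_lintegral_ofReal]
  · exact (hf.integrableOn_Icc (a := a) (b := b)).mono_set Set.Ioo_subset_Icc_self
  · filter_upwards [ae_restrict_mem measurableSet_Ioo] with x hx using hnn x hx

lemma lintegral_Icc_radius (R : ℝ) :
    ∫⁻ r in Set.Icc 0 R, ENNReal.ofReal |r| ≤ ENNReal.ofReal (R ^ 2 / 2) := by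
  rcases le_or_gt 0 R with h | h
  · rw [setLIntegral_congr Ioo_ae_eq_Icc.symm,
      setLIntegral_Ioo_ofReal continuous_abs h fun x _ => abs_nonneg x]
    have : ∫ x in (0:ℝ)..R, |x| = ∫ x in (0:ℝ)..R, x := by
      apply intervalIntegral.integral_congr
      intro x hx
      rw [Set.uIcc_of_le h] at hx
      exact abs_of_nonneg hx.1
    rw [this]; simp
  · simp [Set.Icc_eq_empty (not_le.2 h)]

lemma lintegral_uIoo_sub (d : ℝ) :
    ∫⁻ t in Set.uIoo 0 d, ENNReal.ofReal |d - t| = ENNReal.ofReal (d ^ 2 / 2) := by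
  rcases le_total 0 d with h | h
  · rw [Set.uIoo_of_le h, setLIntegral_Ioo_ofReal (by fun_prop) h fun x _ => abs_nonneg _]
    have : ∫ x in (0:ℝ)..d, |d - x| = ∫ x in (0:ℝ)..d, (d - x) := by
      apply intervalIntegral.integral_congr
      intro x hx
      rw [Set.uIcc_of_le h] at hx
      exact abs_of_nonneg (by linarith [hx.2])
    rw [this, intervalIntegral.integral_comp_sub_left (fun x => x) d]; simp
  · rw [Set.uIoo_of_ge h, setLIntegral_Ioo_ofReal (by fun_prop) h fun x _ => abs_nonneg _]
    have : ∫ x in d..(0:ℝ), |d - x| = ∫ x in d..(0:ℝ), (x - d) := by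
      apply intervalIntegral.integral_congr
      intro x hx
      rw [Set.uIcc_of_le h] at hx
      simp only
      rw [abs_sub_comm]
      exact abs_of_nonneg (by linarith [hx.1])
    rw [this, intervalIntegral.integral_comp_sub_right (fun x => x) d]; simp

/-- Area of a set inside the polar region `{r ≤ R θ, θ ∈ [0, β]}`; no measurability of `A` is needed. -/
lemma polar_area_le {R : ℝ → ℝ} (hR : Measurable R) {β : ℝ} {A : Set (ℝ × ℝ)}
    (hA : ∀ z ∈ A, ∃ θ ∈ Set.Icc 0 β, ∃ r ∈ Set.Icc 0 (R θ), z = (r * cos θ, r * sin θ)) :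
    volume A ≤ ∫⁻ θ in Set.Icc 0 β, ENNReal.ofReal (R θ ^ 2 / 2) := by
  set s : Set (ℝ × ℝ) := {p | p.2 ∈ Set.Icc 0 β ∧ p.1 ∈ Set.Icc 0 (R p.2)} with hs
  have hsm : MeasurableSet s := by
    refine (measurable_snd measurableSet_Icc).inter ?_
    exact (measurableSet_le measurable_const measurable_fst).inter
      (measurableSet_le measurable_fst (hR.comp measurable_snd))
  have hsub : A ⊆ polarCoord.symm '' s := by
    intro z hz
    obtain ⟨θ, hθ, r, hr, rfl⟩ := hA z hz
    exact ⟨(r, θ), ⟨hθ, hr⟩, by simp⟩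
  calc volume A ≤ volume (polarCoord.symm '' s) := measure_mono hsub
    _ ≤ ∫⁻ p in s, ENNReal.ofReal |(fderivPolarCoordSymm p).det| :=
      addHaar_image_le_lintegral_abs_det_fderiv _ hsm
        fun p _ => (hasFDerivAt_polarCoord_symm p).hasFDerivWithinAt
    _ = ∫⁻ p in s, ENNReal.ofReal |p.1| := by simp_rw [det_fderivPolarCoordSymm]
    _ = ∫⁻ θ, ∫⁻ r in {r | (r, θ) ∈ s}, ENNReal.ofReal |r| := by
      rw [setLIntegral_slice hsm (by fun_prop)]
    _ ≤ ∫⁻ θ, (Set.Icc 0 β).indicator (fun θ => ENNReal.ofReal (R θ ^ 2 / 2)) θ := by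
      refine lintegral_mono fun θ => ?_
      by_cases hθ : θ ∈ Set.Icc 0 β
      · rw [Set.indicator_of_mem hθ]
        have : {r | (r, θ) ∈ s} = Set.Icc 0 (R θ) := by
          ext r; simp only [hs, Set.mem_ofPred_eq]; exact and_iff_right hθ
        rw [this]
        exact lintegral_Icc_radius _
      · have : {r | (r, θ) ∈ s} = ∅ := by
          ext r; simp only [hs, Set.mem_ofPred_eq, Set.mem_empty_iff_false, iff_false]
          exact fun h => hθ h.1
        rw [this]; simp
    _ = _ := lintegral_indicator measurableSet_Icc _

/-- The point at signed distance `t` from the foot `h θ (cos θ, sin θ)` along the supporting line with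
normal direction `θ`; the argument is `p = (t, θ)`. -/
def tangentSweep (h : ℝ → ℝ) (p : ℝ × ℝ) : ℝ × ℝ :=
  (h p.2 * cos p.2 - p.1 * sin p.2, h p.2 * sin p.2 + p.1 * cos p.2)

/-- The Fréchet derivative of `tangentSweep h` at `p`, when `h` is differentiable at `p.2`. -/
def tangentSweepDeriv (h : ℝ → ℝ) (p : ℝ × ℝ) : ℝ × ℝ →L[ℝ] ℝ × ℝ :=
  (Matrix.toLin (.finTwoProd ℝ) (.finTwoProd ℝ)
    !![-sin p.2, deriv h p.2 * cos p.2 - h p.2 * sin p.2 - p.1 * cos p.2;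
      cos p.2, deriv h p.2 * sin p.2 + h p.2 * cos p.2 - p.1 * sin p.2]).toContinuousLinearMap

lemma det_tangentSweepDeriv (h : ℝ → ℝ) (p : ℝ × ℝ) :
    (tangentSweepDeriv h p).det = -(deriv h p.2 - p.1) := by
  unfold tangentSweepDeriv
  simp only [LinearMap.det_toContinuousLinearMap, LinearMap.det_toLin, Matrix.det_fin_two_of]
  linear_combination -(deriv h p.2 - p.1) * sin_sq_add_cos_sq p.2

lemma hasFDerivAt_tangentSweep {h : ℝ → ℝ} {p : ℝ × ℝ} (hd : DifferentiableAt ℝ h p.2) :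
    HasFDerivAt (tangentSweep h) (tangentSweepDeriv h p) p := by
  unfold tangentSweepDeriv
  rw [Matrix.toLin_finTwoProd_toContinuousLinearMap]
  have e1 := hd.hasDerivAt.comp_hasFDerivAt p (hasFDerivAt_snd (𝕜 := ℝ) (E := ℝ) (F := ℝ))
  have e2 := (hasDerivAt_cos p.2).comp_hasFDerivAt p (hasFDerivAt_snd (𝕜 := ℝ) (E := ℝ) (F := ℝ))
  have e3 := (hasDerivAt_sin p.2).comp_hasFDerivAt p (hasFDerivAt_snd (𝕜 := ℝ) (E := ℝ) (F := ℝ))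
  have e4 := hasFDerivAt_fst (𝕜 := ℝ) (E := ℝ) (F := ℝ) (p := p)
  have := HasFDerivAt.prodMk ((e1.mul e2).sub (e4.mul e3)) ((e1.mul e3).add (e4.mul e2))
  refine this.congr_fderiv ?_
  ext <;> simp <;> ring

/-- The segments of the supporting lines strictly between foot and contact point sweep out the area
`½ ∫ h'²`: the Jacobian `|h' - t|` integrates to `h'² / 2` over `t` between `0` and `h'`. -/
lemma volume_tangentSweep_image {h : ℝ → ℝ} {β : ℝ}
    (hdiff : ∀ᵐ θ, DifferentiableAt ℝ h θ) {s : Set (ℝ × ℝ)}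
    (hs : s = {p | p.2 ∈ Set.Icc 0 β ∧ DifferentiableAt ℝ h p.2 ∧ p.1 ∈ Set.uIoo 0 (deriv h p.2)})
    (hinj : Set.InjOn (tangentSweep h) s) :
    volume (tangentSweep h '' s) = ∫⁻ θ in Set.Icc 0 β, ENNReal.ofReal (deriv h θ ^ 2 / 2) := by
  have hdm : Measurable fun p : ℝ × ℝ => deriv h p.2 := (measurable_deriv h).comp measurable_snd
  have hsm : MeasurableSet s := by
    rw [hs]
    refine (measurable_snd measurableSet_Icc).inter (MeasurableSet.inter ?_ ?_)
    · exact measurable_snd (measurableSet_of_differentiableAt ℝ h)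
    · exact (measurableSet_lt (measurable_const.min hdm) measurable_fst).inter
        (measurableSet_lt measurable_fst (measurable_const.max hdm))
  rw [← lintegral_abs_det_fderiv_eq_addHaar_image (f' := tangentSweepDeriv h) _ hsm
    (fun p hp => (hasFDerivAt_tangentSweep (by rw [hs] at hp; exact hp.2.1)).hasFDerivWithinAt) hinj]
  simp_rw [det_tangentSweepDeriv, abs_neg]
  rw [setLIntegral_slice hsm (f := fun p => ENNReal.ofReal |deriv h p.2 - p.1|)
    (((hdm.sub measurable_fst).abs).ennreal_ofReal), ← lintegral_indicator measurableSet_Icc]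
  refine lintegral_congr_ae ?_
  filter_upwards [hdiff] with θ hd
  by_cases hθ : θ ∈ Set.Icc 0 β
  · rw [Set.indicator_of_mem hθ]
    have : {r | (r, θ) ∈ s} = Set.uIoo 0 (deriv h θ) := by
      ext r; simp only [hs, Set.mem_ofPred_eq]; tauto
    rw [this]
    exact lintegral_uIoo_sub _
  · have : {r | (r, θ) ∈ s} = ∅ := by
      ext r; simp only [hs, Set.mem_ofPred_eq, Set.mem_empty_iff_false, iff_false]
      exact fun h => hθ h.1
    rw [this, Set.indicator_of_notMem hθ]; simp

/-! ### Support functions -/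

/-- The component of `z` in the direction `(cos θ, sin θ)`. -/
def dirDot (z : ℝ × ℝ) (θ : ℝ) : ℝ := z.1 * cos θ + z.2 * sin θ

/-- The component of `z` in the direction `(-sin θ, cos θ)`. -/
def dirPerp (z : ℝ × ℝ) (θ : ℝ) : ℝ := z.2 * cos θ - z.1 * sin θ

/-- `h` is the support function of `K` as a function of the angle, the supremum being attained, and
`K` lies in the closed unit disk. -/
structure IsSupport (K : Set (ℝ × ℝ)) (h : ℝ → ℝ) : Prop where
  le : ∀ z ∈ K, ∀ θ, dirDot z θ ≤ h θ
  attained : ∀ θ, ∃ z ∈ K, dirDot z θ = h θ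
  disk : ∀ z ∈ K, z.1 ^ 2 + z.2 ^ 2 ≤ 1

lemma dirDot_add (z : ℝ × ℝ) (θ δ : ℝ) :
    dirDot z (θ + δ) = dirDot z θ * cos δ + dirPerp z θ * sin δ := by
  simp only [dirDot, dirPerp, cos_add, sin_add]; ring

lemma dirPerp_add (z : ℝ × ℝ) (θ δ : ℝ) :
    dirPerp z (θ + δ) = dirPerp z θ * cos δ - dirDot z θ * sin δ := by
  simp only [dirDot, dirPerp, cos_add, sin_add]; ring

lemma dirDot_sq_add (z : ℝ × ℝ) (θ : ℝ) :
    dirDot z θ ^ 2 + dirPerp z θ ^ 2 = z.1 ^ 2 + z.2 ^ 2 := by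
  simp only [dirDot, dirPerp]
  linear_combination (z.1 ^ 2 + z.2 ^ 2) * sin_sq_add_cos_sq θ

lemma eq_of_dirDot (z : ℝ × ℝ) (θ : ℝ) :
    z = (dirDot z θ * cos θ - dirPerp z θ * sin θ, dirDot z θ * sin θ + dirPerp z θ * cos θ) := by
  have := sin_sq_add_cos_sq θ
  ext
  · simp only [dirDot, dirPerp]; linear_combination (-z.1) * this
  · simp only [dirDot, dirPerp]; linear_combination (-z.2) * this

lemma hasDerivAt_dirDot (z : ℝ × ℝ) (θ : ℝ) : HasDerivAt (dirDot z) (dirPerp z θ) θ := by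
  refine (((hasDerivAt_cos θ).const_mul z.1).add ((hasDerivAt_sin θ).const_mul z.2)).congr_deriv ?_
  simp only [dirPerp]; ring

lemma dirDot_tangentSweep (h : ℝ → ℝ) (p : ℝ × ℝ) :
    dirDot (tangentSweep h p) p.2 = h p.2 := by
  simp only [dirDot, tangentSweep]
  linear_combination h p.2 * sin_sq_add_cos_sq p.2

lemma dirPerp_tangentSweep (h : ℝ → ℝ) (p : ℝ × ℝ) :
    dirPerp (tangentSweep h p) p.2 = p.1 := by
  simp only [dirPerp, tangentSweep]
  linear_combination p.1 * sin_sq_add_cos_sq p.2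

/-- The value of a sinusoid at `θ` in terms of its values at `a` and `b`. -/
lemma dirDot_interp (z : ℝ × ℝ) (a b θ : ℝ) :
    sin (b - a) * dirDot z θ = sin (b - θ) * dirDot z a + sin (θ - a) * dirDot z b := by
  simp only [dirDot, sin_sub]; ring

namespace IsSupport

variable {K : Set (ℝ × ℝ)} {h : ℝ → ℝ}

lemma le_one (H : IsSupport K h) (θ : ℝ) : h θ ≤ 1 := by
  obtain ⟨z, hz, e⟩ := H.attained θ
  have := dirDot_sq_add z θ
  have := H.disk z hz
  rw [← e]
  nlinarith [sq_nonneg (dirPerp z θ)]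

lemma neg_one_le (H : IsSupport K h) (θ : ℝ) : -1 ≤ h θ := by
  obtain ⟨z, hz, e⟩ := H.attained θ
  have := dirDot_sq_add z θ
  have := H.disk z hz
  rw [← e]
  nlinarith [sq_nonneg (dirPerp z θ)]

/-- In terms of `h = cos φ`, the contact point in direction `y` has tangential component at most
`sin (φ y)`, so `h x ≥ cos (φ y + |x - y|)`. -/
lemma lipschitz (H : IsSupport K h) : LipschitzWith 1 fun θ => arccos (h θ) := by
  refine LipschitzWith.of_le_add fun x y => ?_
  set δ := dist x y with hδ
  have hδ0 : 0 ≤ δ := dist_nonneg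
  rcases le_total π (arccos (h y) + δ) with hπ | hπ
  · exact (arccos_le_pi _).trans hπ
  have hφ0 := arccos_nonneg (h y)
  rw [← arccos_cos (by linarith : 0 ≤ arccos (h y) + δ) hπ]
  refine arccos_le_arccos ?_
  obtain ⟨z, hz, e⟩ := H.attained y
  refine le_trans ?_ (H.le z hz x)
  have hx : dirDot z x = dirDot z y * cos (x - y) + dirPerp z y * sin (x - y) := by
    rw [← dirDot_add]; congr 1; ring
  have hb : |dirPerp z y| ≤ √(1 - h y ^ 2) := by
    apply abs_le_sqrt
    have := dirDot_sq_add z y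
    have := H.disk z hz
    rw [← e]; linarith
  have hcos : cos (x - y) = cos δ := by rw [hδ, Real.dist_eq, cos_abs]
  have hsin : |sin (x - y)| = sin δ := by
    have h0 : 0 ≤ sin δ := sin_nonneg_of_nonneg_of_le_pi hδ0 (by linarith)
    rw [← abs_of_nonneg h0, hδ, Real.dist_eq]
    rcases abs_choice (x - y) with h | h <;> rw [h]
    rw [sin_neg, abs_neg]
  rw [hx, cos_add, cos_arccos (H.neg_one_le y) (H.le_one y), sin_arccos, e, hcos]
  have : |dirPerp z y * sin (x - y)| ≤ √(1 - h y ^ 2) * sin δ := by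
    rw [abs_mul, hsin]
    exact mul_le_mul_of_nonneg_right hb (by rw [← hsin]; positivity)
  linarith [neg_abs_le (dirPerp z y * sin (x - y))]

lemma arccos_le_abs_sub (H : IsSupport K h) {θ₀ : ℝ} (h₀ : h θ₀ = 1) (θ : ℝ) :
    arccos (h θ) ≤ |θ - θ₀| := by
  have := H.lipschitz.dist_le_mul θ θ₀
  simp only [h₀, arccos_one, Real.dist_eq, sub_zero, NNReal.coe_one, one_mul] at this
  exact (le_abs_self _).trans this

lemma continuous (H : IsSupport K h) : Continuous h := by
  have : h = fun θ => cos (arccos (h θ)) := by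
    ext θ; rw [cos_arccos (H.neg_one_le θ) (H.le_one θ)]
  rw [this]
  exact continuous_cos.comp H.lipschitz.continuous

lemma ae_differentiableAt (H : IsSupport K h) : ∀ᵐ θ, DifferentiableAt ℝ h θ := by
  filter_upwards [H.lipschitz.ae_differentiableAt_real] with θ hθ
  have : h = fun θ => cos (arccos (h θ)) := by
    ext θ; rw [cos_arccos (H.neg_one_le θ) (H.le_one θ)]
  rw [this]
  exact hθ.cos

/-- If `z` is not strictly inside the supporting half-planes of directions `a` and `b`, then neither is
it for the directions in between. -/
lemma interp (H : IsSupport K h) {z : ℝ × ℝ} {a b θ : ℝ} (hab : b - a < π)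
    (haθ : a < θ) (hθb : θ < b) (ha : h a ≤ dirDot z a) (hb : h b ≤ dirDot z b) :
    h θ ≤ dirDot z θ := by
  obtain ⟨w, hw, e⟩ := H.attained θ
  have h1 := dirDot_interp w a b θ
  have h2 := dirDot_interp z a b θ
  have s1 : 0 < sin (b - a) := sin_pos_of_pos_of_lt_pi (by linarith) hab
  have s2 : 0 < sin (b - θ) := sin_pos_of_pos_of_lt_pi (by linarith) (by linarith)
  have s3 : 0 < sin (θ - a) := sin_pos_of_pos_of_lt_pi (by linarith) (by linarith)
  have h3 := mul_le_mul_of_nonneg_left ((H.le w hw a).trans ha) s2.le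
  have h4 := mul_le_mul_of_nonneg_left ((H.le w hw b).trans hb) s3.le
  rw [← e]
  refine le_of_mul_le_mul_left ?_ s1
  linarith

/-- At a differentiability point of `h`, the contact point has tangential component `deriv h θ`. -/
lemma perp_eq_deriv (H : IsSupport K h) {z : ℝ × ℝ} (hz : z ∈ K) {θ : ℝ}
    (hd : DifferentiableAt ℝ h θ) (e : dirDot z θ = h θ) : dirPerp z θ = deriv h θ := by
  have hmin : IsLocalMin (fun η => h η - dirDot z η) θ := by
    filter_upwards with η
    rw [e, sub_self]
    linarith [H.le z hz η]
  have := hmin.hasDerivAt_eq_zero (hd.hasDerivAt.sub (hasDerivAt_dirDot z θ))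
  linarith

/-- A point of the supporting line of direction `θ` lying before the contact point is strictly inside
the supporting half-planes of the directions in `(θ, θ + π)`. -/
lemma lt_right (H : IsSupport K h) {z : ℝ × ℝ} {θ ψ : ℝ} (hd : DifferentiableAt ℝ h θ)
    (e : dirDot z θ = h θ) (ht : dirPerp z θ < deriv h θ) (h1 : θ < ψ) (h2 : ψ - θ < π) :
    dirDot z ψ < h ψ := by
  by_contra! hc
  have hder : HasDerivWithinAt (fun η => h η - dirDot z η) (deriv h θ - dirPerp z θ)
    (Set.Ioi θ) θ := (hd.hasDerivAt.sub (hasDerivAt_dirDot z θ)).hasDerivWithinAt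
  rw [hasDerivWithinAt_iff_tendsto_slope' (by simp)] at hder
  have : deriv h θ - dirPerp z θ ≤ 0 := by
    refine le_of_tendsto hder ?_
    filter_upwards [Ioo_mem_nhdsGT h1] with η hη
    rw [slope_def_field, e, sub_self, sub_zero]
    refine div_nonpos_of_nonpos_of_nonneg ?_ (by linarith [hη.1])
    linarith [H.interp h2 hη.1 hη.2 e.ge hc]
  linarith

/-- A point of the supporting line of direction `θ` lying past the contact point is strictly inside the
supporting half-planes of the directions in `(θ - π, θ)`. -/
lemma lt_left (H : IsSupport K h) {z : ℝ × ℝ} {θ ψ : ℝ} (hd : DifferentiableAt ℝ h θ)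
    (e : dirDot z θ = h θ) (ht : deriv h θ < dirPerp z θ) (h1 : ψ < θ) (h2 : θ - ψ < π) :
    dirDot z ψ < h ψ := by
  by_contra! hc
  have hder : HasDerivWithinAt (fun η => h η - dirDot z η) (deriv h θ - dirPerp z θ)
    (Set.Iio θ) θ := (hd.hasDerivAt.sub (hasDerivAt_dirDot z θ)).hasDerivWithinAt
  rw [hasDerivWithinAt_iff_tendsto_slope' (by simp)] at hder
  have : 0 ≤ deriv h θ - dirPerp z θ := by
    refine ge_of_tendsto hder ?_
    filter_upwards [Ioo_mem_nhdsLT h1] with η hη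
    rw [slope_def_field, e, sub_self, sub_zero]
    refine div_nonneg_of_nonpos ?_ (by linarith [hη.2])
    linarith [H.interp h2 hη.1 hη.2 hc e.ge]
  linarith

lemma sq_add_deriv_sq_le (H : IsSupport K h) {θ : ℝ} (hd : DifferentiableAt ℝ h θ) :
    h θ ^ 2 + deriv h θ ^ 2 ≤ 1 := by
  obtain ⟨z, hz, e⟩ := H.attained θ
  rw [← H.perp_eq_deriv hz hd e, ← e, dirDot_sq_add]
  exact H.disk z hz

end IsSupport

lemma mem_uIoo_cases {t d : ℝ} (ht : t ∈ Set.uIoo 0 d) : (0 < t ∧ t < d) ∨ (d < t ∧ t < 0) := by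
  rcases le_total 0 d with h | h
  · rw [Set.uIoo_of_le h] at ht; exact Or.inl ht
  · rw [Set.uIoo_of_ge h] at ht; exact Or.inr ht

/-- The pairs `(t, θ)` for which `tangentSweep h (t, θ)` lies strictly between the foot of the
perpendicular and the contact point on the supporting line of direction `θ ∈ [0, β]`. -/
def sweepDomain (h : ℝ → ℝ) (β : ℝ) : Set (ℝ × ℝ) :=
  {p | p.2 ∈ Set.Icc 0 β ∧ DifferentiableAt ℝ h p.2 ∧ p.1 ∈ Set.uIoo 0 (deriv h p.2)}

namespace IsSupport

variable {K : Set (ℝ × ℝ)} {h : ℝ → ℝ} {β : ℝ}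

lemma injOn_sweep (H : IsSupport K h) (hβ : β ≤ π / 2) (hpos : ∀ θ ∈ Set.Icc 0 β, 0 < h θ) :
    Set.InjOn (tangentSweep h) (sweepDomain h β) := by
  have hpi := pi_pos
  have key : ∀ p ∈ sweepDomain h β, ∀ q ∈ sweepDomain h β,
      tangentSweep h p = tangentSweep h q → ¬ p.2 < q.2 := by
    rintro p ⟨hp1, hp2, hp3⟩ q ⟨hq1, hq2, hq3⟩ e hlt
    have ep := dirDot_tangentSweep h p
    have eq := dirDot_tangentSweep h q
    have fp := dirPerp_tangentSweep h p
    have fq := dirPerp_tangentSweep h q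
    rw [← e] at eq fq
    have hgap : q.2 - p.2 ≤ π / 2 := by linarith [hp1.1, hq1.2]
    -- a common point with `p.1 > 0` or `q.1 < 0` is strictly inside the other half-plane; the case
    -- `p.1 < 0 < q.1` contradicts that the tangential component decreases from `p.2` to `q.2`
    rcases mem_uIoo_cases hp3 with ⟨a1, a2⟩ | ⟨a1, a2⟩
    · have := H.lt_right hp2 ep (by rwa [fp]) hlt (by linarith)
      linarith
    · rcases mem_uIoo_cases hq3 with ⟨b1, b2⟩ | ⟨b1, b2⟩
      · have := dirPerp_add (tangentSweep h p) p.2 (q.2 - p.2)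
        rw [add_sub_cancel, fq, fp, ep] at this
        have c1 : 0 ≤ cos (q.2 - p.2) := cos_nonneg_of_mem_Icc ⟨by linarith, hgap⟩
        have c2 : 0 ≤ sin (q.2 - p.2) := sin_nonneg_of_nonneg_of_le_pi (by linarith) (by linarith)
        have := hpos _ hp1
        nlinarith
      · have := H.lt_left hq2 eq (by rwa [fq]) hlt (by linarith)
        linarith
  intro p hp q hq e
  have h2 : p.2 = q.2 :=
    le_antisymm (not_lt.1 (key q hq p hp e.symm)) (not_lt.1 (key p hp q hq e))
  have h1 : p.1 = q.1 := by
    rw [← dirPerp_tangentSweep h p, ← dirPerp_tangentSweep h q, e, h2]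
  exact Prod.ext h1 h2

lemma sweep_notMem (H : IsSupport K h) {p : ℝ × ℝ} (hp : p ∈ sweepDomain h β) :
    tangentSweep h p ∉ K := by
  intro hK
  obtain ⟨hp1, hp2, hp3⟩ := hp
  have := H.perp_eq_deriv hK hp2 (dirDot_tangentSweep h p)
  rw [dirPerp_tangentSweep] at this
  rcases mem_uIoo_cases hp3 with ⟨a1, a2⟩ | ⟨a1, a2⟩ <;> linarith

/-- The swept points stay in the polar region `{r ≤ h θ}`. A swept point has polar angle `θ + δ` with
`tan δ = t / h θ`; it stays in `[0, β]` because `|δ| ≤ φ θ`, and `φ θ ≤ min θ (β - θ)`. -/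
lemma sweep_polar (H : IsSupport K h) (hpos : ∀ θ ∈ Set.Icc 0 β, 0 < h θ)
    (h0 : h 0 = 1) (h1 : h β = 1) {p : ℝ × ℝ} (hp : p ∈ sweepDomain h β) :
    ∃ θ ∈ Set.Icc 0 β, ∃ r ∈ Set.Icc 0 (h θ), tangentSweep h p = (r * cos θ, r * sin θ) := by
  have hpi := pi_pos
  obtain ⟨hp1, hp2, hp3⟩ := hp
  have ep := dirDot_tangentSweep h p
  have fp := dirPerp_tangentSweep h p
  set z := tangentSweep h p
  set θ := p.2
  set t := p.1
  have hh : 0 < h θ := hpos _ hp1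
  set r := √(h θ ^ 2 + t ^ 2) with hr
  have hr0 : 0 < r := sqrt_pos.2 (by positivity)
  have hr2 : r ^ 2 = h θ ^ 2 + t ^ 2 := sq_sqrt (by positivity)
  have htd : t ^ 2 < deriv h θ ^ 2 := by
    rcases mem_uIoo_cases hp3 with ⟨a1, a2⟩ | ⟨a1, a2⟩ <;> nlinarith
  have hr1 : r < 1 := by nlinarith [H.sq_add_deriv_sq_le hp2]
  set δ := arctan (t / h θ) with hδ
  have hrt : √(1 + (t / h θ) ^ 2) = r / h θ := by
    rw [sqrt_eq_iff_mul_self_eq (by positivity) (by positivity)]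
    field_simp; linarith
  have hcos : r * cos δ = h θ := by
    rw [hδ, cos_arctan, hrt]; field_simp
  have hsin : r * sin δ = t := by
    rw [hδ, sin_arctan, hrt]; field_simp
  have hδφ : |δ| ≤ arccos (h θ) := by
    by_contra! hc
    have hl := cos_lt_cos_of_nonneg_of_le_pi (arccos_nonneg _)
      (by rw [abs_le]; constructor <;> linarith [arctan_lt_pi_div_two (t / h θ),
        neg_pi_div_two_lt_arctan (t / h θ)]) hc
    rw [cos_abs, cos_arccos (H.neg_one_le θ) (H.le_one θ)] at hl
    nlinarith
  have hl0 := H.arccos_le_abs_sub h0 θ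
  have hl1 := H.arccos_le_abs_sub h1 θ
  rw [sub_zero, abs_of_nonneg hp1.1] at hl0
  rw [abs_of_nonpos (by linarith [hp1.2])] at hl1
  have hab := abs_le.1 hδφ
  have hzr : dirDot z (θ + δ) = r := by
    rw [dirDot_add, ep, fp, ← hcos, ← hsin]
    linear_combination r * sin_sq_add_cos_sq δ
  have hzp : dirPerp z (θ + δ) = 0 := by
    rw [dirPerp_add, ep, fp, ← hcos, ← hsin]; ring
  have d1 := arctan_lt_pi_div_two (t / h θ)
  have d2 := neg_pi_div_two_lt_arctan (t / h θ)
  refine ⟨θ + δ, ⟨by linarith, by linarith⟩, r, ⟨hr0.le, ?_⟩, ?_⟩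
  · rw [← hzr]
    rcases mem_uIoo_cases hp3 with ⟨a1, a2⟩ | ⟨a1, a2⟩
    · have : 0 < δ := arctan_pos.2 (by positivity)
      exact (H.lt_right hp2 ep (by rwa [fp]) (by linarith) (by linarith)).le
    · have : δ < 0 := arctan_lt_zero.2 (div_neg_of_neg_of_pos a2 hh)
      exact (H.lt_left hp2 ep (by rwa [fp]) (by linarith) (by linarith)).le
  · have := eq_of_dirDot z (θ + δ)
    rw [hzr, hzp] at this
    simpa using this

/-- Both `C` and the swept region lie in `{r ≤ h θ}`, and they are separated by `K`. -/
lemma sector_area (H : IsSupport K h) (hK : MeasurableSet K) (hβ : β ≤ π / 2)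
    (hpos : ∀ θ ∈ Set.Icc 0 β, 0 < h θ) (h0 : h 0 = 1) (h1 : h β = 1) {C : Set (ℝ × ℝ)}
    (hCK : C ⊆ K)
    (hC : ∀ z ∈ C, ∃ θ ∈ Set.Icc 0 β, ∃ r, 0 ≤ r ∧ z = (r * cos θ, r * sin θ)) :
    volume C + ∫⁻ θ in Set.Icc 0 β, ENNReal.ofReal (deriv h θ ^ 2 / 2) ≤
      ∫⁻ θ in Set.Icc 0 β, ENNReal.ofReal (h θ ^ 2 / 2) := by
  rw [← volume_tangentSweep_image H.ae_differentiableAt rfl (H.injOn_sweep hβ hpos)]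
  set A := tangentSweep h '' sweepDomain h β with hA
  have hAK : ∀ z ∈ A, z ∉ K := by
    rintro _ ⟨p, hp, rfl⟩; exact H.sweep_notMem hp
  change volume C + volume A ≤ _
  calc volume C + volume A ≤ volume ((C ∪ A) ∩ K) + volume ((C ∪ A) \ K) := by
        gcongr
        · exact fun z hz => ⟨Or.inl hz, hCK hz⟩
        · exact fun z hz => ⟨Or.inr hz, hAK z hz⟩
    _ = volume (C ∪ A) := measure_inter_add_sdiff _ hK
    _ ≤ _ := by
      refine polar_area_le H.continuous.measurable ?_
      rintro z (hz | ⟨p, hp, rfl⟩)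
      · obtain ⟨θ, hθ, r, hr, rfl⟩ := hC z hz
        refine ⟨θ, hθ, r, ⟨hr, ?_⟩, rfl⟩
        refine le_trans (le_of_eq ?_) (H.le _ (hCK hz) θ)
        simp only [dirDot]
        linear_combination (-r) * sin_sq_add_cos_sq θ
      · exact H.sweep_polar hpos h0 h1 hp

lemma polar_sector_area (H : IsSupport K h)
    (hpos : ∀ θ ∈ Set.Icc 0 β, 0 < h θ) {D : Set (ℝ × ℝ)}
    (hD : ∀ z ∈ D, ∀ x ∈ K, x.1 * z.1 + x.2 * z.2 ≤ 1)
    (hDS : ∀ z ∈ D, ∃ θ ∈ Set.Icc 0 β, ∃ r, 0 ≤ r ∧ z = (r * cos θ, r * sin θ)) :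
    volume D ≤ ∫⁻ θ in Set.Icc 0 β, ENNReal.ofReal ((h θ)⁻¹ ^ 2 / 2) := by
  refine polar_area_le H.continuous.measurable.inv fun z hz => ?_
  obtain ⟨θ, hθ, r, hr, rfl⟩ := hDS z hz
  refine ⟨θ, hθ, r, ⟨hr, ?_⟩, rfl⟩
  obtain ⟨w, hw, e⟩ := H.attained θ
  have := hD _ hz w hw
  simp only [dirDot] at e
  change r ≤ (h θ)⁻¹
  rw [← one_div, le_div_iff₀ (hpos θ hθ), ← e]
  linarith

end IsSupport

/-! ### The inequality in coordinates -/

lemma exists_isSupport {K : Set (ℝ × ℝ)} (hK : IsCompact K) (hne : K.Nonempty)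
    (hdisk : ∀ z ∈ K, z.1 ^ 2 + z.2 ^ 2 ≤ 1) : ∃ h, IsSupport K h := by
  have hc : ∀ θ, ContinuousOn (fun z => dirDot z θ) K := fun θ =>
    Continuous.continuousOn (by unfold dirDot; fun_prop)
  choose w hw hmax using fun θ => hK.exists_isMaxOn hne (hc θ)
  exact ⟨fun θ => dirDot (w θ) θ, fun z hz θ => hmax θ hz, fun θ => ⟨w θ, hw θ, rfl⟩, hdisk⟩

namespace IsSupport

variable {K : Set (ℝ × ℝ)} {h : ℝ → ℝ} {β : ℝ}

lemma integrableOn_sq_add_inv_sq (H : IsSupport K h) (hpos : ∀ θ ∈ Set.Icc 0 β, 0 < h θ) :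
    IntegrableOn (fun θ => h θ ^ 2 / 2 + (h θ)⁻¹ ^ 2 / 2) (Set.Icc 0 β) := by
  refine ContinuousOn.integrableOn_compact isCompact_Icc ?_
  have hc := H.continuous.continuousOn (s := Set.Icc 0 β)
  have hi := hc.inv₀ (fun θ hθ => (hpos θ hθ).ne')
  exact ((hc.pow 2).div_const 2).add ((hi.pow 2).div_const 2)

lemma integrableOn_deriv_sq (H : IsSupport K h) :
    IntegrableOn (fun θ => deriv h θ ^ 2 / 2) (Set.Icc 0 β) := by
  refine Measure.integrableOn_of_bounded (M := 1 / 2) (by simp)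
    (((measurable_deriv h).pow_const 2).div_const 2).aestronglyMeasurable ?_
  refine ae_restrict_of_ae ?_
  filter_upwards [H.ae_differentiableAt] with θ hd
  have := H.sq_add_deriv_sq_le hd
  rw [norm_of_nonneg (by positivity)]
  nlinarith [sq_nonneg (h θ)]

/-- `variational_ineq` for `φ = arccos h`, rewritten in terms of `h`. -/
lemma energy_ineq (H : IsSupport K h) (hβ0 : 0 ≤ β) (hβ : β ≤ π / 2)
    (h0 : h 0 = 1) (h1 : h β = 1) (hpos : ∀ θ ∈ Set.Icc 0 β, 0 < h θ) :
    (∫ θ in Set.Icc 0 β, (h θ ^ 2 / 2 + (h θ)⁻¹ ^ 2 / 2)) ≤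
      β + ∫ θ in Set.Icc 0 β, deriv h θ ^ 2 / 2 := by
  have hφ := H.lipschitz
  have hv := variational_ineq hφ hβ0 hβ (by simp [h0]) (by simp [h1]) (fun θ => arccos_nonneg _)
  have hint1 := H.integrableOn_sq_add_inv_sq hpos
  have hint2 : IntegrableOn (fun θ => deriv h θ ^ 2 / 2) (Set.Icc 0 β) := H.integrableOn_deriv_sq
  have hconst : (∫ θ in Set.Icc 0 β, (1:ℝ)) = β := by simp [hβ0]
  have hci : IntegrableOn (fun _ : ℝ => (1:ℝ)) (Set.Icc 0 β) := by simp
  have : 0 ≤ ∫ θ in Set.Icc 0 β, 2 * (1 + deriv h θ ^ 2 / 2 - (h θ ^ 2 / 2 + (h θ)⁻¹ ^ 2 / 2)) := by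
    rw [intervalIntegral.integral_of_le hβ0, ← integral_Icc_eq_integral_Ioc] at hv
    refine hv.trans_eq (setIntegral_congr_ae measurableSet_Icc ?_)
    filter_upwards [hφ.ae_differentiableAt_real] with θ hd hθ
    have hhc : h = fun θ => cos (arccos (h θ)) := by
      ext t; exact (cos_arccos (H.neg_one_le t) (H.le_one t)).symm
    have hd' : deriv h θ = - sin (arccos (h θ)) * deriv (fun θ => arccos (h θ)) θ := by
      conv_lhs => rw [hhc]
      exact (hd.hasDerivAt.cos).deriv
    have hp := hpos θ hθ
    rw [hd', tan_eq_sin_div_cos]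
    have hc : cos (arccos (h θ)) = h θ := cos_arccos (H.neg_one_le θ) (H.le_one θ)
    have hs := sin_sq_add_cos_sq (arccos (h θ))
    rw [hc] at hs ⊢
    set s := sin (arccos (h θ))
    have e : (s * (s / h θ)) ^ 2 = h θ ^ 2 + (h θ)⁻¹ ^ 2 - 2 := by
      have : s ^ 2 = 1 - h θ ^ 2 := by linarith
      rw [show (s * (s / h θ)) ^ 2 = (s ^ 2) ^ 2 / h θ ^ 2 by field_simp, this]
      field_simp; ring
    rw [e]; ring
  have hci2 : IntegrableOn (fun θ => 1 + deriv h θ ^ 2 / 2) (Set.Icc 0 β) := hci.add hint2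
  rw [integral_const_mul, integral_sub hci2 hint1,
    integral_add hci hint2, hconst] at this
  linarith

end IsSupport

/-- The sector inequality in coordinates, with `S` a set of points of polar angle in `[0, β]` and `D` a
set of points of the polar body. -/
theorem area_add_area_le {K : Set (ℝ × ℝ)} {β : ℝ} (hK : IsCompact K)
    (hdisk : ∀ z ∈ K, z.1 ^ 2 + z.2 ^ 2 ≤ 1)
    (hβ0 : 0 ≤ β) (hβ : β ≤ π / 2) (hp : ((1, 0) : ℝ × ℝ) ∈ K) (hq : (cos β, sin β) ∈ K)
    {S D : Set (ℝ × ℝ)}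
    (hS : ∀ z ∈ S, ∃ θ ∈ Set.Icc 0 β, ∃ r, 0 ≤ r ∧ z = (r * cos θ, r * sin θ))
    (hD : ∀ z ∈ D, ∀ x ∈ K, x.1 * z.1 + x.2 * z.2 ≤ 1) :
    volume (K ∩ S) + volume (D ∩ S) ≤ ENNReal.ofReal β := by
  obtain ⟨h, H⟩ := exists_isSupport hK ⟨_, hp⟩ hdisk
  have h0 : h 0 = 1 := le_antisymm (H.le_one 0) (by simpa [dirDot] using H.le _ hp 0)
  have h1 : h β = 1 := by
    refine le_antisymm (H.le_one β) (le_trans (le_of_eq ?_) (H.le _ hq β))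
    simp only [dirDot]; linarith [sin_sq_add_cos_sq β]
  have hpos : ∀ θ ∈ Set.Icc 0 β, 0 < h θ := by
    intro θ hθ
    have a1 := H.arccos_le_abs_sub h0 θ
    have a2 := H.arccos_le_abs_sub h1 θ
    rw [sub_zero, abs_of_nonneg hθ.1] at a1
    rw [abs_of_nonpos (by linarith [hθ.2])] at a2
    exact arccos_lt_pi_div_two.1 (by linarith [pi_pos])
  have hA := H.sector_area hK.measurableSet hβ hpos h0 h1 (C := K ∩ S) Set.inter_subset_left
    (fun z hz => hS z hz.2)
  have hB := H.polar_sector_area hpos (D := D ∩ S) (fun z hz => hD z hz.1) (fun z hz => hS z hz.2)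
  have hE := H.energy_ineq hβ0 hβ h0 h1 hpos
  have hint1 := H.integrableOn_sq_add_inv_sq hpos
  have hint2 : IntegrableOn (fun θ => deriv h θ ^ 2 / 2) (Set.Icc 0 β) := H.integrableOn_deriv_sq
  have hX := ofReal_integral_eq_lintegral_ofReal hint2 (.of_forall fun θ => by positivity)
  have hY := ofReal_integral_eq_lintegral_ofReal hint1 (.of_forall fun θ => by positivity)
  have hsum : (∫⁻ θ in Set.Icc 0 β, ENNReal.ofReal (h θ ^ 2 / 2)) +
      ∫⁻ θ in Set.Icc 0 β, ENNReal.ofReal ((h θ)⁻¹ ^ 2 / 2) =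
      ∫⁻ θ in Set.Icc 0 β, ENNReal.ofReal (h θ ^ 2 / 2 + (h θ)⁻¹ ^ 2 / 2) := by
    rw [← lintegral_add_left (by have := H.continuous.measurable; fun_prop)]
    exact lintegral_congr fun θ => (ENNReal.ofReal_add (by positivity) (by positivity)).symm
  rw [← hX] at hA
  refine (ENNReal.add_le_add_iff_right (ENNReal.ofReal_ne_top
    (r := ∫ θ in Set.Icc 0 β, deriv h θ ^ 2 / 2))).1 ?_
  rw [← ENNReal.ofReal_add hβ0 (integral_nonneg fun θ => by positivity)]
  calc _ = (volume (K ∩ S) + ENNReal.ofReal (∫ θ in Set.Icc 0 β, deriv h θ ^ 2 / 2))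
          + volume (D ∩ S) := by ring
    _ ≤ _ := add_le_add hA hB
    _ = _ := hsum.trans hY.symm
    _ ≤ _ := ENNReal.ofReal_le_ofReal hE

/-! ### Transport to the Euclidean plane -/

/-- The cone spanned by `(1, 0)` and `(cos β, sin β)` consists of points with polar angle in `[0, β]`. -/
lemma cone_polar {β : ℝ} (hβ0 : 0 < β) (hβ : β ≤ π / 2) {t s : ℝ} (ht : 0 ≤ t) (hs : 0 ≤ s) :
    ∃ θ ∈ Set.Icc 0 β, ∃ r, 0 ≤ r ∧
      ((t + s * cos β, s * sin β) : ℝ × ℝ) = (r * cos θ, r * sin θ) := by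
  have hsβ : 0 < sin β := sin_pos_of_pos_of_lt_pi hβ0 (by linarith [pi_pos])
  have hcβ : 0 ≤ cos β := cos_nonneg_of_neg_pi_div_two_le_of_le (by linarith) hβ
  set w : ℂ := ⟨t + s * cos β, s * sin β⟩ with hw
  have harg0 : 0 ≤ w.arg := Complex.arg_nonneg_iff.2 (by simp only [hw]; positivity)
  have hre : ‖w‖ * cos w.arg = t + s * cos β := Complex.norm_mul_cos_arg w
  have him : ‖w‖ * sin w.arg = s * sin β := Complex.norm_mul_sin_arg w
  rcases eq_or_ne w 0 with h | h
  · refine ⟨0, ⟨le_rfl, hβ0.le⟩, 0, le_rfl, ?_⟩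
    rw [h, norm_zero, zero_mul] at hre him
    rw [← hre, ← him]; simp
  refine ⟨w.arg, ⟨harg0, ?_⟩, ‖w‖, norm_nonneg _, by rw [hre, him]⟩
  by_contra! hlt
  have hn : 0 < ‖w‖ := norm_pos_iff.2 h
  have harg1 : w.arg ≤ π := Complex.arg_le_pi w
  have hpos : 0 < sin (w.arg - β) :=
    sin_pos_of_pos_of_lt_pi (by linarith) (by linarith)
  have : ‖w‖ * sin (w.arg - β) = - (t * sin β) := by
    rw [sin_sub]; linear_combination cos β * him - sin β * hre
  have h1 := mul_pos hn hpos
  have h2 := mul_nonneg ht hsβ.le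
  linarith

/-- The coordinates of the plane in an orthonormal basis, as a measurable equivalence from `ℝ × ℝ`. -/
def planeChart (b : OrthonormalBasis (Fin 2) ℝ E2) : ℝ × ℝ ≃ᵐ E2 :=
  (MeasurableEquiv.finTwoArrow.symm.trans (MeasurableEquiv.toLp 2 (Fin 2 → ℝ))).trans
    b.repr.symm.toHomeomorph.toMeasurableEquiv

lemma planeChart_apply (b : OrthonormalBasis (Fin 2) ℝ E2) (z : ℝ × ℝ) :
    planeChart b z = z.1 • b 0 + z.2 • b 1 := by
  have : planeChart b z = b.repr.symm (WithLp.toLp 2 ![z.1, z.2]) := rfl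
  rw [this, ← b.sum_repr_symm]
  simp

lemma volume_preimage_planeChart (b : OrthonormalBasis (Fin 2) ℝ E2) (A : Set E2) :
    volume (planeChart b ⁻¹' A) = volume A := by
  have : MeasurePreserving (planeChart b) :=
    (b.measurePreserving_repr_symm.comp (PiLp.volume_preserving_toLp (Fin 2))).comp
      (volume_preserving_finTwoArrow ℝ).symm
  exact this.measure_preimage_equiv A

lemma inner_planeChart (b : OrthonormalBasis (Fin 2) ℝ E2) (x z : ℝ × ℝ) :
    ⟪planeChart b x, planeChart b z⟫ = x.1 * z.1 + x.2 * z.2 := by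
  have h01 : ⟪b 0, b 1⟫ = 0 := b.orthonormal.2 (by decide)
  have h10 : ⟪b 1, b 0⟫ = 0 := b.orthonormal.2 (by decide)
  simp only [planeChart_apply, inner_add_left, inner_add_right, real_inner_smul_left,
    real_inner_smul_right, h01, h10, real_inner_self_eq_norm_sq, b.orthonormal.1]
  ring

/-- An orthonormal basis in which `p = (1, 0)` and `q = (cos β, sin β)`. -/
lemma exists_adapted_basis {p q : E2} (hpn : ‖p‖ = 1) (hqn : ‖q‖ = 1) {β : ℝ}
    (hpq : ⟪p, q⟫ = cos β) (hs : sin β ≠ 0) :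
    ∃ b : OrthonormalBasis (Fin 2) ℝ E2, b 0 = p ∧ q = cos β • b 0 + sin β • b 1 := by
  set e : E2 := (sin β)⁻¹ • (q - cos β • p) with he
  have hpp : ⟪p, p⟫ = (1:ℝ) := by rw [real_inner_self_eq_norm_sq, hpn]; norm_num
  have hqq : ⟪q, q⟫ = (1:ℝ) := by rw [real_inner_self_eq_norm_sq, hqn]; norm_num
  have hpe : ⟪p, e⟫ = 0 := by
    simp only [he, real_inner_smul_right, inner_sub_right, hpq, hpp]; ring
  have hee : ⟪e, e⟫ = (1:ℝ) := by
    simp only [he, real_inner_smul_right, real_inner_smul_left, inner_sub_right, inner_sub_left,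
      hpq, hpp, hqq, real_inner_comm p q]
    field_simp
    linarith [sin_sq_add_cos_sq β]
  have hen : ‖e‖ = 1 := by
    rw [real_inner_self_eq_norm_sq] at hee
    nlinarith [norm_nonneg e]
  have hon : Orthonormal ℝ ![p, e] := by
    constructor
    · intro i; fin_cases i <;> simp [hpn, hen]
    · intro i j hij
      fin_cases i <;> fin_cases j <;> simp_all [real_inner_comm]
  have hfr : Fintype.card (Fin 2) = Module.finrank ℝ E2 := by simp
  let B := basisOfOrthonormalOfCardEqFinrank hon hfr
  have hB : ⇑B = ![p, e] := coe_basisOfOrthonormalOfCardEqFinrank hon hfr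
  refine ⟨B.toOrthonormalBasis (by rw [hB]; exact hon), ?_, ?_⟩
  · simp [hB]
  · simp only [Module.Basis.coe_toOrthonormalBasis, hB]
    simp [he, smul_smul, hs]

/-- The sector inequality (*): for boundary points p, q of K on the unit circle
spanning an angle 2α ∈ (0, π/2], we have V(K∩S) + V(K*∩S) ≤ 2α. -/
theorem sector_sum_bound
    (K : Set E2) (hKcomp : IsCompact K) (hKconv : Convex ℝ K)
    (h0 : (0 : E2) ∈ interior K) (hsym : K = -K)
    (hKB : K ⊆ Metric.closedBall 0 1)
    (p q : E2) (hp : p ∈ frontier K) (hq : q ∈ frontier K)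
    (hpn : ‖p‖ = 1) (hqn : ‖q‖ = 1)
    (α : ℝ) (hangle : InnerProductGeometry.angle p q = 2 * α)
    (hα : 2 * α ∈ Set.Ioc 0 (π / 2))
    (S : Set E2)
    (hS : S = {x : E2 | ∃ t s : ℝ, 0 ≤ t ∧ 0 ≤ s ∧ x = t • p + s • q}) :
    volume (K ∩ S) + volume (polarBody K ∩ S) ≤ ENNReal.ofReal (2 * α) := by
  obtain ⟨hα0, hα1⟩ := hα
  set β := 2 * α
  have hpK : p ∈ K := hKcomp.isClosed.frontier_subset hp
  have hqK : q ∈ K := hKcomp.isClosed.frontier_subset hq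
  have hpq : ⟪p, q⟫ = cos β := by
    rw [← hangle, InnerProductGeometry.cos_angle, hpn, hqn]; simp
  have hs : sin β ≠ 0 := (sin_pos_of_pos_of_lt_pi hα0 (by linarith [pi_pos])).ne'
  obtain ⟨b, rfl, rfl⟩ := exists_adapted_basis hpn hqn hpq hs
  rw [← volume_preimage_planeChart b, ← volume_preimage_planeChart b,
    Set.preimage_inter, Set.preimage_inter]
  have hcomp : IsCompact (planeChart b ⁻¹' K) := by
    have hc : Continuous (planeChart b).symm := by
      have : ⇑(planeChart b).symm = fun x => (⟪b 0, x⟫, ⟪b 1, x⟫) := by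
        ext x
        all_goals
          obtain ⟨z, rfl⟩ := (planeChart b).surjective x
          have h01 : ⟪b 0, b 1⟫ = 0 := b.orthonormal.2 (by decide)
          have h10 : ⟪b 1, b 0⟫ = 0 := b.orthonormal.2 (by decide)
          rw [MeasurableEquiv.symm_apply_apply]
          simp [planeChart_apply, inner_add_right, real_inner_smul_right, h01, h10]
      rw [this]; fun_prop
    rw [← MeasurableEquiv.image_symm]
    exact hKcomp.image hc
  refine area_add_area_le hcomp ?_ hα0.le hα1 ?_ ?_ ?_ ?_
  · intro z hz
    have h1 : ‖planeChart b z‖ ≤ 1 := by simpa using hKB hz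
    have h2 := inner_planeChart b z z
    rw [real_inner_self_eq_norm_sq] at h2
    nlinarith [norm_nonneg (planeChart b z)]
  · simpa [planeChart_apply] using hpK
  · simpa [planeChart_apply] using hqK
  · intro z hz
    rw [Set.mem_preimage, hS] at hz
    obtain ⟨t, s, ht, hs, e⟩ := hz
    have : z = (t + s * cos β, s * sin β) := by
      apply (planeChart b).injective
      rw [e]; simp only [planeChart_apply]
      module
    rw [this]
    exact cone_polar hα0 hα1 ht hs
  · intro z hz x hx
    rw [← inner_planeChart b]
    exact hz _ hx
end
end

section
/- The function g(β) = (β/2)·(sin β + 1/sin β) + cos β is strictly increasing on the interval (0, π/2]; in particular, g(β) ≤ g(π/2) = π/2 for every β ∈ (0, π/2]. -/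
/-!
Since `1 - sin² β = cos² β`, the derivative of `g` is
`cos² β / (2 sin² β) * (sin β - β cos β)` (`hasDerivAt_g`). On `(0, π/2)` this is positive because
`β < tan β`, so `g` is strictly increasing on `(0, π/2]`, where it is continuous; the bound is
monotonicity together with the value `g (π/2) = π/2`.
-/

open Real

lemma hasDerivAt_g {β : ℝ} (hs : Real.sin β ≠ 0) :
    HasDerivAt (fun β : ℝ => β / 2 * (Real.sin β + 1 / Real.sin β) + Real.cos β)
      (Real.cos β ^ 2 / (2 * Real.sin β ^ 2) * (Real.sin β - β * Real.cos β)) β := by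
  have h := (((hasDerivAt_id β).div_const 2).mul ((Real.hasDerivAt_sin β).add
    ((hasDerivAt_const β (1 : ℝ)).div (Real.hasDerivAt_sin β) hs))).add (Real.hasDerivAt_cos β)
  refine h.congr_deriv ?_
  simp only [id, Pi.add_apply, Pi.div_apply]
  field_simp
  have hc : Real.cos β ^ 3 = Real.cos β * (1 - Real.sin β ^ 2) := by
    rw [← Real.cos_sq']; ring
  ring_nf
  rw [hc, Real.cos_sq']
  ring


/-- The function g(β) = (β/2)(sin β + 1/sin β) + cos β is strictly increasing on (0, π/2],
g(π/2) = π/2, and hence g(β) ≤ π/2 there. -/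
theorem g_strictMono_and_bound :
    StrictMonoOn (fun β : ℝ => β / 2 * (Real.sin β + 1 / Real.sin β) + Real.cos β)
      (Set.Ioc 0 (π / 2)) ∧
    (π / 2 / 2 * (Real.sin (π / 2) + 1 / Real.sin (π / 2)) + Real.cos (π / 2) = π / 2) ∧
    ∀ β ∈ Set.Ioc 0 (π / 2),
      β / 2 * (Real.sin β + 1 / Real.sin β) + Real.cos β ≤ π / 2 := by
  have hpos : ∀ β ∈ Set.Ioc 0 (π / 2), 0 < Real.sin β := fun β hβ =>
    Real.sin_pos_of_pos_of_lt_pi hβ.1 (by linarith [hβ.2, Real.pi_pos])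
  have hmono : StrictMonoOn
      (fun β : ℝ => β / 2 * (Real.sin β + 1 / Real.sin β) + Real.cos β)
      (Set.Ioc 0 (π / 2)) := by
    refine strictMonoOn_of_deriv_pos (convex_Ioc _ _)
      (fun β hβ => (hasDerivAt_g (hpos β hβ).ne').continuousAt.continuousWithinAt) ?_
    intro β hβ
    rw [interior_Ioc] at hβ
    have hs := hpos β ⟨hβ.1, hβ.2.le⟩
    have hc : 0 < Real.cos β :=
      Real.cos_pos_of_mem_Ioo ⟨by linarith [hβ.1, Real.pi_pos], hβ.2⟩
    rw [(hasDerivAt_g hs.ne').deriv]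
    have ht := Real.lt_tan hβ.1 hβ.2
    rw [Real.tan_eq_sin_div_cos, lt_div_iff₀ hc] at ht
    exact mul_pos (by positivity) (sub_pos.mpr ht)
  have hval : π / 2 / 2 * (Real.sin (π / 2) + 1 / Real.sin (π / 2)) + Real.cos (π / 2)
      = π / 2 := by
    rw [Real.sin_pi_div_two, Real.cos_pi_div_two]; ring
  refine ⟨hmono, hval, fun β hβ => ?_⟩
  exact (hmono.monotoneOn hβ ⟨by positivity, le_rfl⟩ hβ.2).trans_eq hval
end

section
/- Let K ⊂ ℝ² be an o-symmetric convex body such that B² is the John ellipse of K, i.e. B² ⊆ K and |det T| ≤ 1 for every invertible linear map T : ℝ² → ℝ² with T(B²) ⊆ K. Then V(K) + V(K*) ≤ 2π. -/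
/-!
Let `h` be the support function of `K` as a function of the angle `θ` of the normal. Then
`2 V(K) = ∫ h² - h'²` and `2 V(K*) = ∫ 1 / h²` over a full turn, so with `f = h - 1 ≥ 0`
`2 V(K) + 2 V(K*) = 4π + ∫ ((h - 1/h)² - h'²) ≤ 4π + ∫ (4 f² - f'²)`,
because `h - 1/h ≤ 2 (h - 1)` for `h ≥ 1` (`integrand_le`). The function `f` vanishes at the
contact directions. Maximality of the disk forces consecutive contact directions to be at most
`π / 2` apart (`exists_contact`, `exists_contacts`), and on an interval of length at most `π / 2`
Wirtinger's inequality gives `4 ∫ f² ≤ ∫ f'²`.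

Since `h` is only Lipschitz, the formula for `V(K)` is replaced by an upper bound through a `C²`
majorant `H` of `h` with `H + H'' > 0` and `H - h = O(ε)`, a double moving average of `h` plus a
constant (`exists_smooth`). The bound `V(K) ≤ ½ ∫ H (H + H'')` (`volume_le`) is the polar area
formula in the variable `φ = θ + arctan (H' / H)`, the angle of the boundary point with normal
angle `θ`. `H - 1` is only `O(ε)` at contact directions, so `wirtinger` is stated with the constant
`4 κ²`, `κ < 1`, and a boundary error; the theorem follows by letting `ε → 0` and then `κ → 1`.
-/

open MeasureTheory Real
open scoped Pointwise RealInnerProductSpace ENNReal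

noncomputable section

/-! ### Directions and polar coordinates -/

/-- The unit vector at angle `θ`. -/
def ed (θ : ℝ) : E2 := !₂[cos θ, sin θ]

/-- The support function of `K`, as a function of the angle of the outer normal. -/
def supp (K : Set E2) (θ : ℝ) : ℝ := sSup ((fun x : E2 => ⟪x, ed θ⟫) '' K)

lemma inner_ed (x : E2) (θ : ℝ) : ⟪x, ed θ⟫ = x 0 * cos θ + x 1 * sin θ := by
  simp [ed, PiLp.inner_apply, Fin.sum_univ_two]; ring

lemma norm_ed (θ : ℝ) : ‖ed θ‖ = 1 := by
  simp [ed, EuclideanSpace.norm_eq, Fin.sum_univ_two]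

lemma ed_add_pi (θ : ℝ) : ed (θ + π) = -ed θ := by
  ext i; fin_cases i <;> simp [ed]

lemma continuous_ed : Continuous ed := by
  unfold ed
  fun_prop

lemma exists_smul_ed (v : E2) : ∃ θ : ℝ, v = ‖v‖ • ed θ := by
  refine ⟨Complex.arg ⟨v 0, v 1⟩, ?_⟩
  have hn : ‖v‖ = ‖(⟨v 0, v 1⟩ : ℂ)‖ := by
    rw [EuclideanSpace.norm_eq, Complex.norm_def, Complex.normSq_mk]
    simp [Fin.sum_univ_two, sq]
  rw [hn]
  ext i; fin_cases i
  · simp [ed, Complex.norm_mul_cos_arg]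
  · simp [ed, Complex.norm_mul_sin_arg]

lemma volume_polar (S : Set E2) (hS : MeasurableSet S) :
    volume S = ∫⁻ θ in Set.Ioo (-π) π, ∫⁻ r in Set.Ioi (0:ℝ),
      S.indicator (fun _ => ENNReal.ofReal r) (r • ed θ) := by
  have e : MeasurePreserving (fun p : ℝ × ℝ => (!₂[p.1, p.2] : E2)) :=
    (PiLp.volume_preserving_toLp (Fin 2)).comp (volume_preserving_finTwoArrow ℝ).symm
  have h0 : volume S = ∫⁻ p : ℝ × ℝ, S.indicator (fun _ => (1 : ℝ≥0∞)) (!₂[p.1, p.2] : E2) := by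
    rw [e.lintegral_comp (measurable_const.indicator hS), lintegral_indicator_const hS, one_mul]
  have h1 : ∀ p : ℝ × ℝ, (!₂[(polarCoord.symm p).1, (polarCoord.symm p).2] : E2)
      = p.1 • ed p.2 := by
    intro p; ext i; fin_cases i <;> simp [ed]
  rw [h0, ← lintegral_comp_polarCoord_symm]
  simp_rw [h1]
  have h2 : ∀ p : ℝ × ℝ, ENNReal.ofReal p.1 • S.indicator (fun _ => (1 : ℝ≥0∞)) (p.1 • ed p.2)
      = S.indicator (fun _ => ENNReal.ofReal p.1) (p.1 • ed p.2) := by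
    intro p
    by_cases hp : p.1 • ed p.2 ∈ S <;> simp [hp]
  simp_rw [h2]
  have hm : Measurable (fun p : ℝ × ℝ =>
      S.indicator (fun _ => ENNReal.ofReal p.1) (p.1 • ed p.2)) := by
    have hc : Measurable (fun p : ℝ × ℝ => p.1 • ed p.2) :=
      (continuous_fst.smul (continuous_ed.comp continuous_snd)).measurable
    exact Measurable.indicator (f := fun p : ℝ × ℝ => ENNReal.ofReal p.1)
      (by fun_prop) (hc hS)
  rw [polarCoord_target, Measure.volume_eq_prod, ← Measure.prod_restrict,
    lintegral_prod_symm _ hm.aemeasurable]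

/-- A ray meeting `S` only within distance `R` carries at most the polar mass `R² / 2`. -/
lemma radial_le (S : Set E2) (θ R : ℝ) (hR : 0 ≤ R) (h : ∀ r, 0 < r → r • ed θ ∈ S → r ≤ R) :
    ∫⁻ r in Set.Ioi (0:ℝ), S.indicator (fun _ => ENNReal.ofReal r) (r • ed θ)
      ≤ ENNReal.ofReal (R ^ 2 / 2) := by
  have h1 : ∫⁻ r in Set.Ioi (0:ℝ), S.indicator (fun _ => ENNReal.ofReal r) (r • ed θ)
      ≤ ∫⁻ r in Set.Ioi (0:ℝ), (Set.Iic R).indicator (fun r => ENNReal.ofReal r) r := by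
    refine setLIntegral_mono' measurableSet_Ioi fun r hr => ?_
    by_cases hp : r • ed θ ∈ S
    · simp [hp, h r hr hp]
    · simp [hp]
  refine h1.trans ?_
  rw [setLIntegral_indicator measurableSet_Iic, Set.inter_comm, Set.Ioi_inter_Iic,
    ← ofReal_integral_eq_lintegral_ofReal, ← intervalIntegral.integral_of_le hR]
  · simp
  · exact (intervalIntegrable_iff_integrableOn_Ioc_of_le hR).1
      (Continuous.intervalIntegrable (by fun_prop) _ _)
  · exact (ae_restrict_iff' measurableSet_Ioc).2 (Filter.Eventually.of_forall fun r hr => hr.1.le)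

/-- Integrals of a periodic function over two periods agree; no measurability is needed. -/
lemma lintegral_period (g : ℝ → ℝ≥0∞) {T : ℝ} (hT : 0 < T) (hg : Function.Periodic g T) (a b : ℝ) :
    ∫⁻ x in Set.Ioc a (a + T), g x = ∫⁻ x in Set.Ioc b (b + T), g x := by
  refine (isAddFundamentalDomain_Ioc hT a).setLIntegral_eq (isAddFundamentalDomain_Ioc hT b) g ?_
  rintro ⟨c, n, rfl⟩ x
  have := (hg.int_mul n) x
  simpa [AddSubgroup.vadd_def, add_comm] using this

/-! ### The support function -/

section Body

variable {K : Set E2}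

lemma le_supp (hK : IsCompact K) {x : E2} (hx : x ∈ K) (θ : ℝ) : ⟪x, ed θ⟫ ≤ supp K θ := by
  refine le_csSup ?_ ⟨x, hx, rfl⟩
  exact (hK.image (by fun_prop : Continuous fun x : E2 => ⟪x, ed θ⟫)).bddAbove

lemma exists_supp (hK : IsCompact K) (hne : K.Nonempty) (θ : ℝ) :
    ∃ x ∈ K, ⟪x, ed θ⟫ = supp K θ :=
  (hK.image (by fun_prop : Continuous fun x : E2 => ⟪x, ed θ⟫)).sSup_mem (hne.image _)

lemma one_le_supp (hK : IsCompact K) (hBK : Metric.closedBall (0 : E2) 1 ⊆ K) (θ : ℝ) :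
    1 ≤ supp K θ := by
  have := le_supp hK (hBK (show ed θ ∈ _ by simp [norm_ed])) θ
  simpa [norm_ed] using this

lemma supp_periodic (hsym : K = -K) : Function.Periodic (supp K) π := by
  intro θ
  unfold supp
  congr 1
  ext y
  simp only [Set.mem_image, ed_add_pi, inner_neg_right]
  constructor
  · rintro ⟨x, hx, rfl⟩
    exact ⟨-x, by rw [hsym]; simpa using hx, by simp⟩
  · rintro ⟨x, hx, rfl⟩
    exact ⟨-x, by rw [hsym]; simpa using hx, by simp⟩

/-- The convexity property of a support function in angular form; it is a finite-difference
version of `h'' + h ≥ 0`. -/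
lemma supp_midpoint (hK : IsCompact K) (hne : K.Nonempty) (θ t : ℝ) :
    2 * cos t * supp K θ ≤ supp K (θ + t) + supp K (θ - t) := by
  obtain ⟨x, hx, h⟩ := exists_supp hK hne θ
  have h1 := le_supp hK hx (θ + t)
  have h2 := le_supp hK hx (θ - t)
  rw [inner_ed] at h h1 h2
  rw [cos_add, sin_add] at h1
  rw [cos_sub, sin_sub] at h2
  rw [← h]
  nlinarith

lemma supp_lipschitz (hK : IsCompact K) (hne : K.Nonempty) :
    ∃ M : ℝ, 0 ≤ M ∧ (∀ θ, supp K θ ≤ M) ∧ ∀ a b, |supp K a - supp K b| ≤ M * |a - b| := by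
  obtain ⟨M, hM⟩ := hK.isBounded.exists_norm_le
  have hM0 : 0 ≤ M := by
    obtain ⟨x, hx⟩ := hne
    exact (norm_nonneg _).trans (hM x hx)
  have hed : ∀ a b, ‖ed a - ed b‖ ≤ |a - b| := by
    intro a b
    have h1 : ‖ed a - ed b‖ ^ 2 = 2 - 2 * cos (a - b) := by
      rw [EuclideanSpace.norm_sq_eq, Fin.sum_univ_two, cos_sub]
      simp [ed]
      nlinarith [sin_sq_add_cos_sq a, sin_sq_add_cos_sq b]
    refine abs_le_of_sq_le_sq' ?_ (abs_nonneg _) |>.2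
    rw [h1, sq_abs]
    have := one_sub_sq_div_two_le_cos (x := a - b)
    linarith
  have key : ∀ a b, supp K a - supp K b ≤ M * |a - b| := by
    intro a b
    obtain ⟨x, hx, h⟩ := exists_supp hK hne a
    have h1 := le_supp hK hx b
    calc supp K a - supp K b ≤ ⟪x, ed a⟫ - ⟪x, ed b⟫ := by linarith
      _ = ⟪x, ed a - ed b⟫ := by rw [inner_sub_right]
      _ ≤ ‖x‖ * ‖ed a - ed b‖ := real_inner_le_norm _ _
      _ ≤ M * |a - b| := mul_le_mul (hM x hx) (hed a b) (norm_nonneg _) hM0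
  refine ⟨M, hM0, fun θ => ?_, fun a b => abs_sub_le_iff.2 ⟨key a b, ?_⟩⟩
  · obtain ⟨x, hx, h⟩ := exists_supp hK hne θ
    rw [← h]
    refine (real_inner_le_norm _ _).trans ?_
    rw [norm_ed, mul_one]
    exact hM x hx
  · rw [abs_sub_comm]; exact key b a

lemma mem_of_le_supp (hK : IsCompact K) (hne : K.Nonempty) (hconv : Convex ℝ K) {x : E2}
    (hx : ∀ θ, ⟪x, ed θ⟫ ≤ supp K θ) : x ∈ K := by
  by_contra hxK
  obtain ⟨f, u, h1, h2⟩ := geometric_hahn_banach_closed_point hconv hK.isClosed hxK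
  set v := (InnerProductSpace.toDual ℝ E2).symm f with hv
  have hf : ∀ y, f y = ⟪y, v⟫ := by
    intro y
    rw [real_inner_comm, hv, InnerProductSpace.toDual_symm_apply]
  obtain ⟨θ, hθ⟩ := exists_smul_ed v
  obtain ⟨y, hy, hyθ⟩ := exists_supp hK hne θ
  have h3 := h1 y hy
  rw [hf, hθ, inner_smul_right] at h2 h3
  have := mul_le_mul_of_nonneg_left (hx θ) (norm_nonneg v)
  rw [← hyθ] at this
  linarith

end Body

/-! ### Contact directions of the John ellipse -/

section John

variable {K : Set E2}

/-- The symmetric linear map with eigenvalue `α` in direction `ed m` and `β` in the orthogonal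
direction. -/
def stretch (m α β : ℝ) : E2 →ₗ[ℝ] E2 :=
  Matrix.toLin (PiLp.basisFun 2 ℝ (Fin 2)) (PiLp.basisFun 2 ℝ (Fin 2))
    !![α * cos m ^ 2 + β * sin m ^ 2, (α - β) * (cos m * sin m);
      (α - β) * (cos m * sin m), α * sin m ^ 2 + β * cos m ^ 2]

lemma det_stretch (m α β : ℝ) : LinearMap.det (stretch m α β) = α * β := by
  rw [stretch, LinearMap.det_toLin, Matrix.det_fin_two_of]
  linear_combination (α * β * (sin m ^ 2 + cos m ^ 2 + 1)) * sin_sq_add_cos_sq m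

lemma inner_stretch (m α β : ℝ) (y : E2) (θ : ℝ) :
    ⟪stretch m α β y, ed θ⟫ = α * cos (θ - m) * (y 0 * cos m + y 1 * sin m)
      + β * sin (θ - m) * (y 1 * cos m - y 0 * sin m) := by
  have h : ∀ i, stretch m α β y i = (!![α * cos m ^ 2 + β * sin m ^ 2, (α - β) * (cos m * sin m);
      (α - β) * (cos m * sin m), α * sin m ^ 2 + β * cos m ^ 2] : Matrix _ _ ℝ).mulVec y i := by
    intro i
    rw [stretch, ← Matrix.toLpLin_eq_toLin]
    rfl
  rw [inner_ed, h, h, cos_sub, sin_sub]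
  simp [Matrix.mulVec, dotProduct, Fin.sum_univ_two]
  ring

lemma inner_stretch_sq_le (m α β : ℝ) (y : E2) (hy : ‖y‖ ≤ 1) (θ : ℝ) :
    ⟪stretch m α β y, ed θ⟫ ^ 2 ≤ α ^ 2 * cos (θ - m) ^ 2 + β ^ 2 * sin (θ - m) ^ 2 := by
  have hy2 : y 0 ^ 2 + y 1 ^ 2 ≤ 1 := by
    have := EuclideanSpace.norm_sq_eq y
    simp only [Fin.sum_univ_two, Real.norm_eq_abs, sq_abs] at this
    rw [← this]
    exact pow_le_one₀ (norm_nonneg _) hy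
  rw [inner_stretch]
  set p := y 0 * cos m + y 1 * sin m
  set q := y 1 * cos m - y 0 * sin m
  have hpq : p ^ 2 + q ^ 2 ≤ 1 := by
    have : p ^ 2 + q ^ 2 = y 0 ^ 2 + y 1 ^ 2 := by
      linear_combination (y 0 ^ 2 + y 1 ^ 2) * sin_sq_add_cos_sq m
    linarith
  set A := α * cos (θ - m)
  set B := β * sin (θ - m)
  have : α ^ 2 * cos (θ - m) ^ 2 + β ^ 2 * sin (θ - m) ^ 2 = A ^ 2 + B ^ 2 := by ring
  rw [this]
  nlinarith [sq_nonneg (A * q - B * p), mul_le_mul_of_nonneg_left hpq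
    (add_nonneg (sq_nonneg A) (sq_nonneg B))]

/-- Maximality of the disk forces a contact direction in every interval of length exceeding
`π / 2`: otherwise stretching the disk towards the middle of the interval, and shrinking it
slightly less in the orthogonal direction, gives a larger ellipse in `K`. -/
lemma exists_contact (hK : IsCompact K) (hconv : Convex ℝ K) (hsym : K = -K)
    (hBK : Metric.closedBall (0 : E2) 1 ⊆ K)
    (hJohn : ∀ T : E2 →ₗ[ℝ] E2, Function.Bijective T →
      ⇑T '' Metric.closedBall (0 : E2) 1 ⊆ K → |LinearMap.det T| ≤ 1)
    (m w : ℝ) (hw : π / 4 < w) (hw' : w < π / 2) :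
    ∃ θ ∈ Set.Icc (m - w) (m + w), supp K θ = 1 := by
  by_contra! hno
  have hπ := pi_pos
  have hne : K.Nonempty := ⟨0, hBK (by simp)⟩
  have hcont : Continuous (supp K) := by
    obtain ⟨M, hM0, -, hM⟩ := supp_lipschitz hK hne
    exact (LipschitzWith.of_dist_le_mul (K := ⟨M, hM0⟩) (fun a b => hM a b)).continuous
  obtain ⟨θ₀, hθ₀, hmin⟩ := isCompact_Icc.exists_isMinOn
    (Set.nonempty_Icc.2 (by linarith : m - w ≤ m + w)) hcont.continuousOn
  set μ := supp K θ₀ with hμ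
  have hμ1 : 1 < μ := lt_of_le_of_ne (one_le_supp hK hBK θ₀) (Ne.symm (hno θ₀ hθ₀))
  have hcw : 0 < cos w := cos_pos_of_mem_Ioo ⟨by linarith, by linarith⟩
  have hsw : 0 < sin w := sin_pos_of_pos_of_lt_pi (by linarith) (by linarith)
  have hcs : cos w ^ 2 < sin w ^ 2 := by
    have h1 : cos (2 * w) < 0 := cos_neg_of_pi_div_two_lt_of_lt (by linarith) (by linarith)
    rw [cos_two_mul] at h1
    nlinarith [sin_sq_add_cos_sq w]
  -- `κ = cot² w < 1` is the ratio of the shrinking to the stretching parameter.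
  set κ := cos w ^ 2 / sin w ^ 2 with hκ
  have hκ0 : 0 < κ := by positivity
  have hκ1 : κ < 1 := (div_lt_one (by positivity)).2 hcs
  have hκs : κ * sin w ^ 2 = cos w ^ 2 := div_mul_cancel₀ _ (by positivity)
  obtain ⟨s, hs0, hs⟩ := exists_between (show 0 < min (1 - κ) (μ - 1) from
    lt_min (by linarith) (by linarith))
  have hs1 : s < 1 - κ := hs.trans_le (min_le_left _ _)
  have hs2 : s < μ - 1 := hs.trans_le (min_le_right _ _)
  have hks : κ * s < 1 := by nlinarith
  have hα2 : √(1 + s) ^ 2 = 1 + s := sq_sqrt (by linarith)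
  have hβ2 : √(1 - κ * s) ^ 2 = 1 - κ * s := sq_sqrt (by linarith)
  have hα : 0 < √(1 + s) := sqrt_pos.2 (by linarith)
  have hβ : 0 < √(1 - κ * s) := sqrt_pos.2 (by linarith)
  have hdet : 1 < √(1 + s) * √(1 - κ * s) := by
    have h1 : (√(1 + s) * √(1 - κ * s)) ^ 2 = (1 + s) * (1 - κ * s) := by
      rw [mul_pow, hα2, hβ2]
    have h2 : 1 < (1 + s) * (1 - κ * s) := by
      nlinarith [mul_pos hs0 (show 0 < 1 - κ - κ * s by nlinarith)]
    by_contra! h3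
    nlinarith [mul_pos hα hβ]
  have hT := hJohn (stretch m √(1 + s) √(1 - κ * s)) ?_ ?_
  · rw [det_stretch, abs_of_pos (by positivity)] at hT
    linarith
  · have hu : IsUnit (stretch m √(1 + s) √(1 - κ * s)) := by
      rw [LinearMap.isUnit_iff_isUnit_det, det_stretch]
      exact (by positivity : √(1 + s) * √(1 - κ * s) ≠ 0).isUnit
    exact (Module.End.isUnit_iff _).1 hu
  rintro _ ⟨y, hy, rfl⟩
  refine mem_of_le_supp hK hne hconv fun ψ => ?_
  -- Both sides are controlled by quantities of period `π`, so `ψ` may be moved next to `m`.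
  obtain ⟨n, hn, -⟩ := existsUnique_add_zsmul_mem_Ico hπ ψ (m - π / 2)
  set θ := ψ + n • π with hθ
  have hper : supp K θ = supp K ψ := (supp_periodic hsym).zsmul n ψ
  have hsq := inner_stretch_sq_le m √(1 + s) √(1 - κ * s) y (by simpa using hy) ψ
  have hcos : cos (ψ - m) ^ 2 = cos (θ - m) ^ 2 := by
    rw [cos_sq, cos_sq, show 2 * (θ - m) = 2 * (ψ - m) + n * (2 * π) by
      rw [hθ, zsmul_eq_mul]; ring, cos_add_int_mul_two_pi]
  have hsin : sin (ψ - m) ^ 2 = sin (θ - m) ^ 2 := by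
    rw [sin_sq, sin_sq, hcos]
  rw [hα2, hβ2, hcos, hsin] at hsq
  rw [← hper]
  have h1 := one_le_supp hK hBK θ
  have htr := sin_sq_add_cos_sq (θ - m)
  refine abs_le_of_sq_le_sq' (hsq.trans ?_) (by linarith) |>.2
  have hle : |θ - m| ≤ π / 2 := abs_le.2 ⟨by linarith [hn.1], by linarith [hn.2]⟩
  by_cases hin : |θ - m| ≤ w
  · have h2 : μ ≤ supp K θ := hmin (by
      rw [abs_le] at hin
      exact ⟨by linarith, by linarith⟩)
    have h3 : 1 + s ≤ supp K θ ^ 2 := by nlinarith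
    have h4 := mul_nonneg (mul_pos hκ0 hs0).le (sq_nonneg (sin (θ - m)))
    have h5 := mul_nonneg hs0.le (sq_nonneg (sin (θ - m)))
    have h6 : s * sin (θ - m) ^ 2 + s * cos (θ - m) ^ 2 = s := by rw [← mul_add, htr, mul_one]
    linarith
  · push Not at hin
    have hc : cos (θ - m) ^ 2 ≤ cos w ^ 2 := by
      rw [← cos_abs (θ - m)]
      refine pow_le_pow_left₀ (cos_nonneg_of_mem_Icc ⟨by linarith [abs_nonneg (θ - m)], hle⟩) ?_ 2
      exact cos_le_cos_of_nonneg_of_le_pi (by linarith) (by linarith) hin.le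
    have hsn : sin w ^ 2 ≤ sin (θ - m) ^ 2 := by
      linarith [sin_sq_add_cos_sq w]
    have : cos (θ - m) ^ 2 ≤ κ * sin (θ - m) ^ 2 := by
      have := mul_le_mul_of_nonneg_left hsn hκ0.le
      linarith
    have h2 := mul_le_mul_of_nonneg_left this hs0.le
    have h3 : 1 ≤ supp K θ ^ 2 := one_le_pow₀ h1
    linarith

/-- There are contact directions `a₀ ≤ a₁ ≤ a₂ ≤ a₀ + π` with consecutive gaps at most `π / 2`. -/
lemma exists_contacts (hK : IsCompact K) (hconv : Convex ℝ K) (hsym : K = -K)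
    (hBK : Metric.closedBall (0 : E2) 1 ⊆ K)
    (hJohn : ∀ T : E2 →ₗ[ℝ] E2, Function.Bijective T →
      ⇑T '' Metric.closedBall (0 : E2) 1 ⊆ K → |LinearMap.det T| ≤ 1) :
    ∃ a₀ a₁ a₂ : ℝ, supp K a₀ = 1 ∧ supp K a₁ = 1 ∧ supp K a₂ = 1 ∧
      a₀ ≤ a₁ ∧ a₁ ≤ a₂ ∧ a₂ ≤ a₀ + π ∧
      a₁ - a₀ ≤ π / 2 ∧ a₂ - a₁ ≤ π / 2 ∧ a₀ + π - a₂ ≤ π / 2 := by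
  have hπ := pi_pos
  have hcontact := exists_contact hK hconv hsym hBK hJohn
  have hne : K.Nonempty := ⟨0, hBK (by simp)⟩
  have hcont : Continuous (supp K) := by
    obtain ⟨M, hM0, -, hM⟩ := supp_lipschitz hK hne
    exact (LipschitzWith.of_dist_le_mul (K := ⟨M, hM0⟩) (fun a b => hM a b)).continuous
  obtain ⟨a₀, -, h₀⟩ := hcontact 0 (π / 3) (by linarith) (by linarith)
  have hclosed : IsClosed {θ | supp K θ = 1} := isClosed_eq hcont continuous_const
  have hc1 : IsCompact (Set.Icc a₀ (a₀ + π / 2) ∩ {θ | supp K θ = 1}) :=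
    isCompact_Icc.inter_right hclosed
  have hc2 : IsCompact (Set.Icc (a₀ + π / 2) (a₀ + π) ∩ {θ | supp K θ = 1}) :=
    isCompact_Icc.inter_right hclosed
  obtain ⟨a₁, ⟨⟨h11, h12⟩, h13⟩, hmax⟩ := hc1.exists_isGreatest
    ⟨a₀, ⟨le_rfl, by linarith⟩, h₀⟩
  obtain ⟨a₂, ⟨⟨h21, h22⟩, h23⟩, hmin⟩ := hc2.exists_isLeast
    ⟨a₀ + π, ⟨by linarith, le_rfl⟩, by rw [Set.mem_ofPred_eq, supp_periodic hsym, h₀]⟩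
  refine ⟨a₀, a₁, a₂, h₀, h13, h23, h11, by linarith, h22, by linarith, ?_, by linarith⟩
  by_contra! hgap
  obtain ⟨θ, ⟨h31, h32⟩, h33⟩ := hcontact ((a₁ + a₂) / 2) ((π / 4 + (a₂ - a₁) / 2) / 2)
    (by linarith) (by linarith)
  rcases le_total θ (a₀ + π / 2) with h | h
  · have := hmax ⟨⟨by linarith, h⟩, h33⟩
    linarith
  · have := hmin ⟨⟨h, by linarith⟩, h33⟩
    linarith

end John

/-! ### Smooth majorants of the support function -/

section Smoothing

/-- The mean of `h` over `[θ, θ + ε]`. -/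
def avg (h : ℝ → ℝ) (ε θ : ℝ) : ℝ := (∫ t in θ..(θ + ε), h t) / ε

lemma avg_mem {h : ℝ → ℝ} (hc : Continuous h) {ε : ℝ} (hε : 0 < ε) (θ lo hi : ℝ)
    (hlo : ∀ t ∈ Set.Icc θ (θ + ε), lo ≤ h t) (hhi : ∀ t ∈ Set.Icc θ (θ + ε), h t ≤ hi) :
    lo ≤ avg h ε θ ∧ avg h ε θ ≤ hi := by
  have h1 := intervalIntegral.integral_mono_on (μ := volume) (by linarith : θ ≤ θ + ε)
    (by simp) (hc.intervalIntegrable θ (θ + ε)) hlo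
  have h2 := intervalIntegral.integral_mono_on (μ := volume) (by linarith : θ ≤ θ + ε)
    (hc.intervalIntegrable θ (θ + ε)) (by simp) hhi
  simp only [intervalIntegral.integral_const, add_sub_cancel_left, smul_eq_mul] at h1 h2
  unfold avg
  rw [le_div_iff₀ hε, div_le_iff₀ hε]
  constructor <;> linarith

lemma avg_hasDerivAt {h : ℝ → ℝ} (hc : Continuous h) (ε θ : ℝ) :
    HasDerivAt (avg h ε) ((h (θ + ε) - h θ) / ε) θ := by
  have hF : ∀ x, HasDerivAt (fun u => ∫ t in (0:ℝ)..u, h t) (h x) x := fun x =>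
    intervalIntegral.integral_hasDerivAt_right (hc.intervalIntegrable _ _)
      (hc.stronglyMeasurableAtFilter _ _) hc.continuousAt
  have heq : avg h ε = fun θ => ((∫ t in (0:ℝ)..(θ + ε), h t) - ∫ t in (0:ℝ)..θ, h t) / ε := by
    ext x
    rw [avg, intervalIntegral.integral_interval_sub_left (hc.intervalIntegrable _ _)
      (hc.intervalIntegrable _ _)]
  rw [heq]
  exact (((hF (θ + ε)).comp_add_const θ ε).sub (hF θ)).div_const ε

lemma avg_periodic {h : ℝ → ℝ} {T : ℝ} (hp : Function.Periodic h T) (ε : ℝ) :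
    Function.Periodic (avg h ε) T := by
  intro θ
  have : ∫ t in θ..(θ + ε), h t = ∫ t in θ..(θ + ε), h (t + T) := by simp_rw [hp _]
  rw [avg, avg, this, intervalIntegral.integral_comp_add_right]
  congr 2
  ring

/-- A support function has a `C²` majorant `H` within `O(ε)` with `H + H'' > 0`: average `h`
twice and add a constant. The second derivative of the average is a second difference of `h`,
which the angular convexity `hmid` bounds below by `-h`. -/
lemma exists_smooth {h : ℝ → ℝ} {M : ℝ} (hM0 : 0 ≤ M) (hM : ∀ a b, |h a - h b| ≤ M * |a - b|)
    (hp : Function.Periodic h π) (h1 : ∀ θ, 1 ≤ h θ)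
    (hmid : ∀ θ t, 2 * cos t * h θ ≤ h (θ + t) + h (θ - t)) {ε : ℝ} (hε : 0 < ε) :
    ∃ H H₁ H₂ : ℝ → ℝ, (∀ θ, HasDerivAt H (H₁ θ) θ) ∧ (∀ θ, HasDerivAt H₁ (H₂ θ) θ) ∧
      Continuous H₂ ∧ Function.Periodic H π ∧ Function.Periodic H₁ π ∧
      (∀ θ, h θ ≤ H θ) ∧ (∀ θ, H θ ≤ h θ + (2 * M + 1) * ε) ∧ ∀ θ, 0 < H θ + H₂ θ := by
  have hc : Continuous h :=
    (LipschitzWith.of_dist_le_mul (K := ⟨M, hM0⟩) (fun a b => hM a b)).continuous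
  have hS := fun θ => avg_hasDerivAt hc ε θ
  have hSc : Continuous (avg h ε) :=
    continuous_iff_continuousAt.2 fun θ => (hS θ).continuousAt
  have hlow : ∀ θ, h θ - M * ε ≤ avg (avg h ε) ε (θ - ε) ∧
      avg (avg h ε) ε (θ - ε) ≤ h θ + M * ε := by
    intro θ
    have key : ∀ t ∈ Set.Icc (θ - ε) (θ - ε + ε), h θ - M * ε ≤ avg h ε t ∧
        avg h ε t ≤ h θ + M * ε := by
      intro t ht
      have hb : ∀ u ∈ Set.Icc t (t + ε), |h u - h θ| ≤ M * ε := by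
        intro u hu
        refine (hM u θ).trans (mul_le_mul_of_nonneg_left ?_ hM0)
        exact abs_le.2 ⟨by linarith [hu.1, hu.2, ht.1, ht.2], by linarith [hu.1, hu.2, ht.1, ht.2]⟩
      exact avg_mem hc hε t _ _ (fun u hu => by linarith [(abs_le.1 (hb u hu)).1])
        (fun u hu => by linarith [(abs_le.1 (hb u hu)).2])
    exact avg_mem hSc hε _ _ _ (fun t ht => (key t ht).1) (fun t ht => (key t ht).2)
  refine ⟨fun θ => avg (avg h ε) ε (θ - ε) + (M + 1) * ε,
    fun θ => (avg h ε θ - avg h ε (θ - ε)) / ε,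
    fun θ => ((h (θ + ε) - h θ) / ε - (h θ - h (θ - ε)) / ε) / ε, ?_, ?_, ?_, ?_, ?_, ?_, ?_, ?_⟩
  · intro θ
    have := ((avg_hasDerivAt hSc ε (θ - ε)).comp_sub_const θ ε).add_const ((M + 1) * ε)
    simpa using this
  · intro θ
    have := (hS (θ - ε)).comp_sub_const θ ε
    rw [sub_add_cancel] at this
    exact ((hS θ).sub this).div_const ε
  · fun_prop
  · intro θ
    have := avg_periodic (avg_periodic hp ε) ε (θ - ε)
    simp only [add_left_inj]
    rw [← this]
    congr 1
    ring
  · intro θ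
    have e1 := avg_periodic hp ε (θ - ε)
    have e2 := avg_periodic hp ε θ
    simp only
    rw [e2, ← e1, show θ + π - ε = θ - ε + π by ring]
  · intro θ
    have := (hlow θ).1
    simp only
    nlinarith
  · intro θ
    have := (hlow θ).2
    simp only
    nlinarith
  · intro θ
    have ha := (hlow θ).1
    have hb := hmid θ ε
    have hcos := one_sub_sq_div_two_le_cos (x := ε)
    have hd : ((h (θ + ε) - h θ) / ε - (h θ - h (θ - ε)) / ε) / ε
        = (h (θ + ε) + h (θ - ε) - 2 * h θ) / ε ^ 2 := by
      field_simp
      ring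
    have he : - h θ ≤ (h (θ + ε) + h (θ - ε) - 2 * h θ) / ε ^ 2 := by
      rw [le_div_iff₀ (by positivity)]
      nlinarith [h1 θ]
    simp only
    rw [hd]
    nlinarith

end Smoothing

/-! ### Area bounds -/

section Area

variable {K : Set E2}

/-- Each point of `K` in the direction of the boundary point `H ed(θ) + H' ed(θ + π/2)` of the
smooth body lies below the supporting line with normal `ed θ`; integrating along
`φ = θ + arctan (H' / H)` bounds the area of `K`. -/
lemma volume_le (hK : IsCompact K) {H H₁ H₂ : ℝ → ℝ}
    (hd : ∀ θ, HasDerivAt H (H₁ θ) θ) (hd' : ∀ θ, HasDerivAt H₁ (H₂ θ) θ)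
    (hc2 : Continuous H₂) (hp : Function.Periodic H π) (hp1 : Function.Periodic H₁ π)
    (hpos : ∀ θ, 0 < H θ) (hle : ∀ θ, supp K θ ≤ H θ) (hcurv : ∀ θ, 0 < H θ + H₂ θ) (a : ℝ) :
    volume K ≤ ENNReal.ofReal ((∫ θ in a..(a + 2 * π), H θ * (H θ + H₂ θ)) / 2) := by
  have hπ := pi_pos
  have hHc : Continuous H := continuous_iff_continuousAt.2 fun θ => (hd θ).continuousAt
  set φ : ℝ → ℝ := fun θ => θ + arctan (H₁ θ / H θ) with hφ
  set φ' : ℝ → ℝ := fun θ => H θ * (H θ + H₂ θ) / (H θ ^ 2 + H₁ θ ^ 2) with hφ'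
  have hden : ∀ θ, 0 < H θ ^ 2 + H₁ θ ^ 2 := fun θ => by have := hpos θ; positivity
  have hφd : ∀ θ, HasDerivAt φ (φ' θ) θ := by
    intro θ
    have h1 := (hasDerivAt_id θ).add ((hd' θ).div (hd θ) (hpos θ).ne').arctan
    refine h1.congr_deriv ?_
    have := (hpos θ).ne'
    have := (hden θ).ne'
    have h3 : 1 + (H₁ θ / H θ) ^ 2 = (H θ ^ 2 + H₁ θ ^ 2) / H θ ^ 2 := by field_simp
    simp only [hφ', Pi.div_apply]
    rw [h3]
    field_simp
    ring
  have hφ'pos : ∀ θ, 0 < φ' θ := fun θ => div_pos (mul_pos (hpos θ) (hcurv θ)) (hden θ)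
  have hmono : StrictMono φ := strictMono_of_hasDerivAt_pos hφd hφ'pos
  have hφc : Continuous φ := continuous_iff_continuousAt.2 fun θ => (hφd θ).continuousAt
  have hφper : ∀ θ, φ (θ + 2 * π) = φ θ + 2 * π := by
    intro θ
    have e1 : H (θ + 2 * π) = H θ := (by simpa using hp.nsmul 2 θ)
    have e2 : H₁ (θ + 2 * π) = H₁ θ := (by simpa using hp1.nsmul 2 θ)
    simp only [hφ, e1, e2]
    ring
  have himg : φ '' Set.Ioc a (a + 2 * π) = Set.Ioc (φ a) (φ a + 2 * π) := by
    rw [← hφper]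
    ext y
    constructor
    · rintro ⟨x, hx, rfl⟩
      exact ⟨hmono hx.1, hmono.monotone hx.2⟩
    · intro hy
      exact intermediate_value_Ioc (by linarith) hφc.continuousOn hy
  set g : ℝ → ℝ≥0∞ := fun φ => ∫⁻ r in Set.Ioi (0:ℝ),
      K.indicator (fun _ => ENNReal.ofReal r) (r • ed φ) with hg
  have hgper : Function.Periodic g (2 * π) := by
    intro θ
    have : ed (θ + 2 * π) = ed θ := by
      rw [two_mul, ← add_assoc, ed_add_pi, ed_add_pi, neg_neg]
    simp only [hg, this]
  have hbound : ∀ θ, g (φ θ) ≤ ENNReal.ofReal ((H θ ^ 2 + H₁ θ ^ 2) / 2) := by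
    intro θ
    have := radial_le K (φ θ) √(H θ ^ 2 + H₁ θ ^ 2) (sqrt_nonneg _) ?_
    · rwa [sq_sqrt (hden θ).le] at this
    intro r hr hrK
    have h1 := (le_supp hK hrK θ).trans (hle θ)
    have h2 : ⟪r • ed (φ θ), ed θ⟫ = r * cos (arctan (H₁ θ / H θ)) := by
      rw [inner_smul_left, inner_ed, show arctan (H₁ θ / H θ) = φ θ - θ by simp [hφ], cos_sub]
      simp [ed]
    rw [h2, cos_arctan] at h1
    have h3 : √(1 + (H₁ θ / H θ) ^ 2) = √(H θ ^ 2 + H₁ θ ^ 2) / H θ := by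
      have := (hpos θ).ne'
      rw [show 1 + (H₁ θ / H θ) ^ 2 = (H θ ^ 2 + H₁ θ ^ 2) / H θ ^ 2 by field_simp,
        sqrt_div (hden θ).le, sqrt_sq (hpos θ).le]
    have h4 := sqrt_pos.2 (hden θ)
    have h5 := hpos θ
    rw [h3, one_div_div, ← mul_div_assoc, div_le_iff₀ h4, mul_comm (H θ)] at h1
    exact le_of_mul_le_mul_right h1 h5
  have hcont : Continuous fun θ => H θ * (H θ + H₂ θ) / 2 := by fun_prop
  calc volume K = ∫⁻ θ in Set.Ioo (-π) π, g θ := volume_polar K hK.isClosed.measurableSet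
    _ = ∫⁻ θ in Set.Ioc (-π) (-π + 2 * π), g θ := by
      rw [show -π + 2 * π = π by ring]
      exact setLIntegral_congr Ioo_ae_eq_Ioc
    _ = ∫⁻ θ in Set.Ioc (φ a) (φ a + 2 * π), g θ := lintegral_period g (by linarith) hgper _ _
    _ = ∫⁻ θ in Set.Ioc a (a + 2 * π), ENNReal.ofReal |φ' θ| * g (φ θ) := by
      rw [← himg, lintegral_image_eq_lintegral_abs_deriv_mul measurableSet_Ioc
        (fun x _ => (hφd x).hasDerivWithinAt) hmono.injective.injOn]
    _ ≤ ∫⁻ θ in Set.Ioc a (a + 2 * π), ENNReal.ofReal (H θ * (H θ + H₂ θ) / 2) := by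
      refine lintegral_mono fun θ => ?_
      refine (mul_le_mul_right (hbound θ) _).trans ?_
      rw [abs_of_pos (hφ'pos θ), ← ENNReal.ofReal_mul (hφ'pos θ).le]
      refine ENNReal.ofReal_le_ofReal (le_of_eq ?_)
      have := (hden θ).ne'
      simp only [hφ']
      field_simp
    _ = ENNReal.ofReal ((∫ θ in a..(a + 2 * π), H θ * (H θ + H₂ θ)) / 2) := by
      rw [← ofReal_integral_eq_lintegral_ofReal, ← intervalIntegral.integral_of_le (by linarith),
        intervalIntegral.integral_div]
      · exact (intervalIntegrable_iff_integrableOn_Ioc_of_le (by linarith)).1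
          (hcont.intervalIntegrable _ _)
      · exact Filter.Eventually.of_forall fun θ =>
          div_nonneg (mul_pos (hpos θ) (hcurv θ)).le zero_le_two

lemma two_period {g : ℝ → ℝ} (hg : Continuous g) (hp : Function.Periodic g π) (a : ℝ) :
    ∫ θ in a..(a + 2 * π), g θ = 2 * ∫ θ in a..(a + π), g θ := by
  rw [← intervalIntegral.integral_add_adjacent_intervals (b := a + π)
    (hg.intervalIntegrable _ _) (hg.intervalIntegrable _ _),
    show a + 2 * π = a + π + π by ring, hp.intervalIntegral_add_eq (a + π) a]
  ring

/-- Integration by parts in the area formula; the boundary terms cancel by periodicity. -/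
lemma area_by_parts {H H₁ H₂ : ℝ → ℝ}
    (hd : ∀ θ, HasDerivAt H (H₁ θ) θ) (hd' : ∀ θ, HasDerivAt H₁ (H₂ θ) θ)
    (hc2 : Continuous H₂) (hp : Function.Periodic H π) (hp1 : Function.Periodic H₁ π) (a : ℝ) :
    (∫ θ in a..(a + 2 * π), H θ * (H θ + H₂ θ)) / 2
      = ∫ θ in a..(a + π), (H θ ^ 2 - H₁ θ ^ 2) := by
  have hHc : Continuous H := continuous_iff_continuousAt.2 fun θ => (hd θ).continuousAt
  have hH1c : Continuous H₁ := continuous_iff_continuousAt.2 fun θ => (hd' θ).continuousAt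
  have hc1 : Continuous fun θ => H θ ^ 2 - H₁ θ ^ 2 := by fun_prop
  have hc3 : Continuous fun θ => H₁ θ * H₁ θ + H θ * H₂ θ := by fun_prop
  have key := intervalIntegral.integral_deriv_mul_eq_sub (a := a) (b := a + 2 * π)
    (fun x _ => hd x) (fun x _ => hd' x) (hH1c.intervalIntegrable _ _) (hc2.intervalIntegrable _ _)
  have e1 : H (a + 2 * π) = H a := (by simpa using hp.nsmul 2 a)
  have e2 : H₁ (a + 2 * π) = H₁ a := (by simpa using hp1.nsmul 2 a)
  rw [e1, e2, sub_self] at key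
  have h2 : ∫ θ in a..(a + 2 * π), H θ * (H θ + H₂ θ)
      = (∫ θ in a..(a + 2 * π), (H θ ^ 2 - H₁ θ ^ 2))
        + ∫ θ in a..(a + 2 * π), (H₁ θ * H₁ θ + H θ * H₂ θ) := by
    rw [← intervalIntegral.integral_add (hc1.intervalIntegrable _ _) (hc3.intervalIntegrable _ _)]
    congr 1
    ext θ
    ring
  rw [h2, key, add_zero, two_period hc1 (fun θ => by simp only [hp θ, hp1 θ])]
  ring

lemma volume_polar_le (hK : IsCompact K) (hne : K.Nonempty) (hc : Continuous (supp K))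
    (hp : Function.Periodic (supp K) π) (h1 : ∀ θ, 1 ≤ supp K θ) (a : ℝ) :
    volume (polarBody K) ≤ ENNReal.ofReal (∫ θ in a..(a + π), 1 / supp K θ ^ 2) := by
  have hπ := pi_pos
  have hpos : ∀ θ, 0 < supp K θ := fun θ => by linarith [h1 θ]
  have hcl : IsClosed (polarBody K) := by
    have : polarBody K = ⋂ x ∈ K, {y | ⟪x, y⟫ ≤ 1} := by ext y; simp [polarBody]
    rw [this]
    exact isClosed_biInter fun x _ => isClosed_le (by fun_prop) continuous_const
  have hcont : Continuous fun θ => 1 / supp K θ ^ 2 :=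
    continuous_const.div (hc.pow 2) fun θ => (pow_pos (hpos θ) 2).ne'
  have hper : Function.Periodic (fun θ => 1 / supp K θ ^ 2) π := fun θ => by simp only [hp θ]
  have hbound : ∀ θ, (∫⁻ r in Set.Ioi (0:ℝ),
      (polarBody K).indicator (fun _ => ENNReal.ofReal r) (r • ed θ))
        ≤ ENNReal.ofReal ((1 / supp K θ ^ 2) / 2) := by
    intro θ
    have := radial_le (polarBody K) θ (1 / supp K θ) (one_div_pos.2 (hpos θ)).le ?_
    · rwa [div_pow, one_pow] at this
    intro r hr hrK
    obtain ⟨x, hx, hxθ⟩ := exists_supp hK hne θ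
    have h2 := hrK x hx
    rw [inner_smul_right, hxθ] at h2
    rwa [le_div_iff₀ (hpos θ)]
  rw [volume_polar _ hcl.measurableSet]
  refine (lintegral_mono hbound).trans ?_
  rw [setLIntegral_congr Ioo_ae_eq_Ioc, ← ofReal_integral_eq_lintegral_ofReal,
    ← intervalIntegral.integral_of_le (by linarith), intervalIntegral.integral_div]
  · refine ENNReal.ofReal_le_ofReal (le_of_eq ?_)
    have := two_period hcont hper (-π)
    rw [show -π + 2 * π = π by ring] at this
    rw [this, hper.intervalIntegral_add_eq (-π) a]
    ring
  · exact (intervalIntegrable_iff_integrableOn_Ioc_of_le (by linarith)).1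
      ((hcont.div_const 2).intervalIntegrable _ _)
  · exact Filter.Eventually.of_forall fun θ => by have := hpos θ; positivity

end Area

/-! ### Wirtinger's inequality and the analytic estimate -/

section Wirtinger

/-- Wirtinger's inequality on an interval of length at most `π / 2`, with constant `4 κ²` for
`κ < 1` and with an error term for small nonzero boundary values. With
`c = -2κ tan (2κ(θ - m))`, `m` the midpoint, one has `c' = -4κ² - c²`, so that
`f'² - 4κ² f² - (c f²)' = (f' - c f)² ≥ 0`. -/
lemma wirtinger {f f₁ : ℝ → ℝ} (hd : ∀ θ, HasDerivAt f (f₁ θ) θ) (hc : Continuous f₁)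
    {a b κ η : ℝ} (hab : a ≤ b) (hlen : b - a ≤ π / 2) (hκ : 0 < κ) (hκ1 : κ < 1)
    (ha : f a ^ 2 ≤ η) (hb : f b ^ 2 ≤ η) :
    -(4 * κ * tan (κ * (π / 2)) * η) ≤ ∫ θ in a..b, (f₁ θ ^ 2 - 4 * κ ^ 2 * f θ ^ 2) := by
  have hπ := pi_pos
  have hfc : Continuous f := continuous_iff_continuousAt.2 fun θ => (hd θ).continuousAt
  set m := (a + b) / 2 with hm
  set g : ℝ → ℝ := fun θ => -2 * κ * tan (2 * κ * (θ - m)) * f θ ^ 2 with hg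
  have hangle : ∀ θ ∈ Set.Icc a b, 0 < cos (2 * κ * (θ - m)) := by
    intro θ hθ
    have h1 : |θ - m| ≤ π / 4 := abs_le.2 ⟨by linarith [hθ.1], by linarith [hθ.2]⟩
    have h2 : |2 * κ * (θ - m)| < π / 2 := by
      rw [abs_mul, abs_of_pos (by positivity : 0 < 2 * κ)]
      nlinarith
    exact cos_pos_of_mem_Ioo (abs_lt.1 h2)
  have hgd : ∀ θ ∈ Set.Icc a b, HasDerivAt g
      (f₁ θ ^ 2 - 4 * κ ^ 2 * f θ ^ 2 - (f₁ θ + 2 * κ * tan (2 * κ * (θ - m)) * f θ) ^ 2) θ := by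
    intro θ hθ
    have hcos := (hangle θ hθ).ne'
    have h1 : HasDerivAt (fun θ => 2 * κ * (θ - m)) (2 * κ) θ := by
      simpa using ((hasDerivAt_id θ).sub_const m).const_mul (2 * κ)
    have h2 := (((Real.hasDerivAt_tan hcos).comp θ h1).const_mul (-2 * κ)).mul ((hd θ).pow 2)
    refine h2.congr_deriv ?_
    have h3 : 1 / cos (2 * κ * (θ - m)) ^ 2 = 1 + tan (2 * κ * (θ - m)) ^ 2 := by
      rw [one_div, ← inv_one_add_tan_sq hcos, inv_inv]
    simp only [Function.comp, h3, Pi.pow_apply]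
    push_cast
    ring
  have key := intervalIntegral.sub_le_integral_of_hasDeriv_right_of_le hab
    (fun θ hθ => (hgd θ hθ).continuousAt.continuousWithinAt)
    (fun θ hθ => (hgd θ (Set.Ioo_subset_Icc_self hθ)).hasDerivWithinAt)
    (φ := fun θ => f₁ θ ^ 2 - 4 * κ ^ 2 * f θ ^ 2)
    (Continuous.integrableOn_Icc (by fun_prop))
    (fun θ _ => sub_le_self _ (sq_nonneg _))
  refine le_trans ?_ key
  have e1 : g b = -2 * κ * tan (κ * (b - a)) * f b ^ 2 := by
    simp only [hg, hm]; congr 3; ring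
  have e2 : g a = 2 * κ * tan (κ * (b - a)) * f a ^ 2 := by
    simp only [hg, hm]
    rw [show 2 * κ * (a - (a + b) / 2) = -(κ * (b - a)) by ring, tan_neg]
    ring
  have ht0 : 0 ≤ tan (κ * (b - a)) :=
    tan_nonneg_of_nonneg_of_le_pi_div_two (by nlinarith) (by nlinarith)
  have ht : tan (κ * (b - a)) ≤ tan (κ * (π / 2)) := by
    refine Real.strictMonoOn_tan.monotoneOn ⟨by nlinarith, by nlinarith⟩
      ⟨by nlinarith, by nlinarith⟩ ?_
    exact mul_le_mul_of_nonneg_left hlen hκ.le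
  have h1 : tan (κ * (b - a)) * f a ^ 2 ≤ tan (κ * (π / 2)) * η :=
    mul_le_mul ht ha (sq_nonneg _) (ht0.trans ht)
  have h2 : tan (κ * (b - a)) * f b ^ 2 ≤ tan (κ * (π / 2)) * η :=
    mul_le_mul ht hb (sq_nonneg _) (ht0.trans ht)
  rw [e1, e2]
  nlinarith

/-- The factorisation `h - 1 / h = (h - 1) (h + 1) / h`, with `(h + 1) / h ≤ 2` for `h ≥ 1`,
reduces the two-area integrand to the quadratic one of Wirtinger's inequality. -/
lemma integrand_le {x : ℝ} (hx : 1 ≤ x) : x ^ 2 + 1 / x ^ 2 ≤ 2 + 4 * (x - 1) ^ 2 := by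
  have hx0 : 0 < x := by linarith
  have h1 : x - 1 / x ≤ 2 * (x - 1) := by
    have : 2 ≤ x + 1 / x := by
      have h := sq_nonneg (x - 1)
      have e : x + 1 / x - 2 = (x - 1) ^ 2 / x := by field_simp; ring
      have := div_nonneg h hx0.le
      linarith
    linarith
  have h0 : 0 ≤ x - 1 / x := by
    have : 1 / x ≤ 1 := (div_le_one hx0).2 hx
    linarith
  have h2 : (x - 1 / x) ^ 2 ≤ (2 * (x - 1)) ^ 2 := pow_le_pow_left₀ h0 h1 2
  have h3 : (x - 1 / x) ^ 2 = x ^ 2 + 1 / x ^ 2 - 2 := by field_simp; ring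
  linarith

lemma inv_sq_le {x y : ℝ} (hx : 1 ≤ x) (hxy : x ≤ y) :
    1 / x ^ 2 ≤ 1 / y ^ 2 + 2 * (y - x) := by
  have hx0 : 0 < x := by linarith
  have hy0 : 0 < y := by linarith
  have h1 : 1 / x - 1 / y ≤ y - x := by
    rw [div_sub_div _ _ hx0.ne' hy0.ne', div_le_iff₀ (by positivity)]
    nlinarith [mul_nonneg (sub_nonneg.2 hxy) (show 0 ≤ x * y - 1 by nlinarith)]
  have h0 : 0 ≤ 1 / x - 1 / y := sub_nonneg.2 (one_div_le_one_div_of_le hx0 hxy)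
  have h2 : 1 / x ≤ 1 := (div_le_one hx0).2 hx
  have h3 : 1 / y ≤ 1 := (div_le_one hy0).2 (by linarith)
  have h4 : 1 / x ^ 2 - 1 / y ^ 2 = (1 / x - 1 / y) * (1 / x + 1 / y) := by field_simp; ring
  nlinarith

/-- The analytic estimate for a smooth majorant `H` of `h`, with error terms vanishing as
`ε → 0` and then `κ → 1`. -/
lemma analytic_bound {h H H₁ : ℝ → ℝ} (hc : Continuous h) (hd : ∀ θ, HasDerivAt H (H₁ θ) θ)
    (hc1 : Continuous H₁) (hp : Function.Periodic H π) (h1 : ∀ θ, 1 ≤ h θ) {M D ε κ : ℝ}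
    (hhM : ∀ θ, h θ ≤ M) (hle : ∀ θ, h θ ≤ H θ) (hge : ∀ θ, H θ ≤ h θ + D * ε)
    (hD : 0 ≤ D) (hε1 : ε ≤ 1) (hκ : 0 < κ) (hκ1 : κ < 1)
    {a₀ a₁ a₂ : ℝ} (e₀ : h a₀ = 1) (e₁ : h a₁ = 1) (e₂ : h a₂ = 1)
    (h01 : a₀ ≤ a₁) (h12 : a₁ ≤ a₂) (h23 : a₂ ≤ a₀ + π)
    (g01 : a₁ - a₀ ≤ π / 2) (g12 : a₂ - a₁ ≤ π / 2) (g23 : a₀ + π - a₂ ≤ π / 2) :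
    (∫ θ in a₀..(a₀ + π), (H θ ^ 2 - H₁ θ ^ 2)) + ∫ θ in a₀..(a₀ + π), 1 / h θ ^ 2
      ≤ 2 * π + 4 * (1 - κ ^ 2) * (M + D) ^ 2 * π + 2 * D * ε * π
        + 3 * (4 * κ * tan (κ * (π / 2)) * (D * ε) ^ 2) := by
  have hπ := pi_pos
  have hHc : Continuous H := continuous_iff_continuousAt.2 fun θ => (hd θ).continuousAt
  set f : ℝ → ℝ := fun θ => H θ - 1 with hf
  have hfd : ∀ θ, HasDerivAt f (H₁ θ) θ := fun θ => (hd θ).sub_const 1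
  have hsmall : ∀ a, h a = 1 → f a ^ 2 ≤ (D * ε) ^ 2 := by
    intro a ha
    have := hle a
    have := hge a
    exact pow_le_pow_left₀ (by simp only [hf]; linarith) (by simp only [hf]; linarith) 2
  have s3 : f (a₀ + π) ^ 2 ≤ (D * ε) ^ 2 := by
    simp only [hf, hp a₀]
    exact hsmall a₀ e₀
  have w1 := wirtinger hfd hc1 h01 g01 hκ hκ1 (hsmall _ e₀) (hsmall _ e₁)
  have w2 := wirtinger hfd hc1 h12 g12 hκ hκ1 (hsmall _ e₁) (hsmall _ e₂)
  have w3 := wirtinger hfd hc1 h23 g23 hκ hκ1 (hsmall _ e₂) s3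
  have hcq : Continuous fun θ => H₁ θ ^ 2 - 4 * κ ^ 2 * f θ ^ 2 := by fun_prop
  have hsum : (∫ θ in a₀..a₁, (H₁ θ ^ 2 - 4 * κ ^ 2 * f θ ^ 2))
      + (∫ θ in a₁..a₂, (H₁ θ ^ 2 - 4 * κ ^ 2 * f θ ^ 2))
      + (∫ θ in a₂..(a₀ + π), (H₁ θ ^ 2 - 4 * κ ^ 2 * f θ ^ 2))
      = ∫ θ in a₀..(a₀ + π), (H₁ θ ^ 2 - 4 * κ ^ 2 * f θ ^ 2) := by
    rw [intervalIntegral.integral_add_adjacent_intervals (hcq.intervalIntegrable _ _)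
      (hcq.intervalIntegrable _ _), intervalIntegral.integral_add_adjacent_intervals
      (hcq.intervalIntegrable _ _) (hcq.intervalIntegrable _ _)]
  have hcA : Continuous fun θ => H θ ^ 2 - H₁ θ ^ 2 := by fun_prop
  have hcB : Continuous fun θ => 1 / h θ ^ 2 :=
    continuous_const.div (hc.pow 2) fun θ => (pow_pos (by linarith [h1 θ]) 2).ne'
  set C := 2 + 4 * (1 - κ ^ 2) * (M + D) ^ 2 + 2 * D * ε with hC
  have hmono : ∫ θ in a₀..(a₀ + π), ((H θ ^ 2 - H₁ θ ^ 2) + 1 / h θ ^ 2)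
      ≤ ∫ θ in a₀..(a₀ + π), (C - (H₁ θ ^ 2 - 4 * κ ^ 2 * f θ ^ 2)) := by
    refine intervalIntegral.integral_mono_on (by linarith)
      ((hcA.add hcB).intervalIntegrable _ _) ((continuous_const.sub hcq).intervalIntegrable _ _) ?_
    intro θ _
    have i1 := hle θ
    have i2 := hge θ
    have i3 := h1 θ
    have i4 := hhM θ
    have j1 := integrand_le (i3.trans i1)
    have j2 := inv_sq_le i3 i1
    have j3 : f θ ^ 2 ≤ (M + D) ^ 2 :=
      pow_le_pow_left₀ (by simp only [hf]; linarith) (by simp only [hf]; nlinarith) 2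
    have j4 : 4 * (1 - κ ^ 2) * f θ ^ 2 ≤ 4 * (1 - κ ^ 2) * (M + D) ^ 2 :=
      mul_le_mul_of_nonneg_left j3 (by nlinarith)
    have j5 : (H θ - 1) ^ 2 = f θ ^ 2 := rfl
    rw [j5] at j1
    linarith
  rw [intervalIntegral.integral_add (hcA.intervalIntegrable _ _) (hcB.intervalIntegrable _ _),
    intervalIntegral.integral_sub (by simp) (hcq.intervalIntegrable _ _),
    intervalIntegral.integral_const, smul_eq_mul, add_sub_cancel_left] at hmono
  have : π * C = 2 * π + 4 * (1 - κ ^ 2) * (M + D) ^ 2 * π + 2 * D * ε * π := by rw [hC]; ring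
  linarith

end Wirtinger

/-- Theorem B (John case): if B² is the John ellipse of the o-symmetric convex body K,
then V(K) + V(K*) ≤ 2π. -/
theorem area_sum_bound_john
    (K : Set E2) (hKcomp : IsCompact K) (hKconv : Convex ℝ K)
    (hKint : (interior K).Nonempty) (hsym : K = -K)
    (hBK : Metric.closedBall (0 : E2) 1 ⊆ K)
    (hJohn : ∀ T : E2 →ₗ[ℝ] E2, Function.Bijective T →
      ⇑T '' Metric.closedBall (0 : E2) 1 ⊆ K → |LinearMap.det T| ≤ 1) :
    volume K + volume (polarBody K) ≤ ENNReal.ofReal (2 * π) := by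
  have hπ := pi_pos
  have hne : K.Nonempty := hKint.mono interior_subset
  obtain ⟨M, hM0, hhM, hM⟩ := supp_lipschitz hKcomp hne
  have hc : Continuous (supp K) :=
    (LipschitzWith.of_dist_le_mul (K := ⟨M, hM0⟩) (fun a b => hM a b)).continuous
  have hper := supp_periodic hsym
  have h1 := one_le_supp hKcomp hBK
  obtain ⟨a₀, a₁, a₂, e₀, e₁, e₂, h01, h12, h23, g01, g12, g23⟩ :=
    exists_contacts hKcomp hKconv hsym hBK hJohn
  set D := 2 * M + 1 with hD
  have main : ∀ κ ∈ Set.Ioo (0:ℝ) 1, ∀ ε ∈ Set.Ioo (0:ℝ) 1,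
      volume K + volume (polarBody K) ≤ ENNReal.ofReal (2 * π
        + 4 * (1 - κ ^ 2) * (M + D) ^ 2 * π + 2 * D * ε * π
        + 3 * (4 * κ * tan (κ * (π / 2)) * (D * ε) ^ 2)) := by
    rintro κ ⟨hκ, hκ1⟩ ε ⟨hε, hε1⟩
    obtain ⟨H, H₁, H₂, hd, hd', hc2, hp, hp1, hle, hge, hcurv⟩ :=
      exists_smooth hM0 hM hper h1 (supp_midpoint hKcomp hne) hε
    have hpos : ∀ θ, 0 < H θ := fun θ => by linarith [h1 θ, hle θ]
    have hc1 : Continuous H₁ := continuous_iff_continuousAt.2 fun θ => (hd' θ).continuousAt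
    have v1 := volume_le hKcomp hd hd' hc2 hp hp1 hpos hle hcurv a₀
    have v2 := volume_polar_le hKcomp hne hc hper h1 a₀
    have n1 : 0 ≤ (∫ θ in a₀..(a₀ + 2 * π), H θ * (H θ + H₂ θ)) / 2 :=
      div_nonneg (intervalIntegral.integral_nonneg (by linarith)
        fun θ _ => (mul_pos (hpos θ) (hcurv θ)).le) zero_le_two
    have n2 : 0 ≤ ∫ θ in a₀..(a₀ + π), 1 / supp K θ ^ 2 :=
      intervalIntegral.integral_nonneg (by linarith) fun θ _ => by positivity
    refine (add_le_add v1 v2).trans ?_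
    rw [← ENNReal.ofReal_add n1 n2, area_by_parts hd hd' hc2 hp hp1]
    exact ENNReal.ofReal_le_ofReal (analytic_bound hc hd hc1 hp h1 hhM hle hge (by linarith)
      hε1.le hκ hκ1 e₀ e₁ e₂ h01 h12 h23 g01 g12 g23)
  have step : ∀ κ ∈ Set.Ioo (0:ℝ) 1, volume K + volume (polarBody K)
      ≤ ENNReal.ofReal (2 * π + 4 * (1 - κ ^ 2) * (M + D) ^ 2 * π) := by
    intro κ hκ
    have ht : Filter.Tendsto (fun ε : ℝ => ENNReal.ofReal (2 * π
        + 4 * (1 - κ ^ 2) * (M + D) ^ 2 * π + 2 * D * ε * π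
        + 3 * (4 * κ * tan (κ * (π / 2)) * (D * ε) ^ 2))) (nhdsWithin 0 (Set.Ioi 0))
        (nhds (ENNReal.ofReal (2 * π + 4 * (1 - κ ^ 2) * (M + D) ^ 2 * π))) := by
      refine ENNReal.tendsto_ofReal (Filter.Tendsto.mono_left ?_ nhdsWithin_le_nhds)
      refine Continuous.tendsto' (by fun_prop) _ _ (by simp)
    exact ge_of_tendsto ht (Filter.mem_of_superset (Ioo_mem_nhdsGT one_pos) (main κ hκ))
  have ht : Filter.Tendsto (fun κ : ℝ => ENNReal.ofReal (2 * π
      + 4 * (1 - κ ^ 2) * (M + D) ^ 2 * π)) (nhdsWithin 1 (Set.Iio 1))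
      (nhds (ENNReal.ofReal (2 * π))) := by
    refine ENNReal.tendsto_ofReal (Filter.Tendsto.mono_left ?_ nhdsWithin_le_nhds)
    refine Continuous.tendsto' (by fun_prop) _ _ (by simp)
  exact ge_of_tendsto ht (Filter.mem_of_superset (Ioo_mem_nhdsLT one_pos) step)
end
end

section
/- Let K ⊂ ℝ² be an o-symmetric convex body such that B² is the Löwner ellipse of K, i.e. K ⊆ B² and |det T| ≥ 1 for every invertible linear map T : ℝ² → ℝ² with K ⊆ T(B²). Then V(K) + V(K*) ≤ 2π. -/
open MeasureTheory Real
open scoped Pointwise RealInnerProductSpace ENNReal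

noncomputable section

/-!
Write `B` for the unit disk. Since `K ⊆ B`, it is enough to show `V(K* \ B) ≤ V(B \ K)`, and this
is done by cutting the plane into cones and mapping one region into the other, area-preservingly,
inside each cone.

*Contact points.* Minimality of `B` forces `0` into the convex hull of the doubled-angle vectors
`q u = (u₀² - u₁², 2 u₀ u₁)`, `u ∈ K ∩ S¹`: a functional separating `0` from this hull is a
traceless quadratic form that is positive at all contact points, and a small deformation of `B`
along it gives an ellipse of smaller area still containing `K` (`not_quadratic_pos`). As
`⟪q u, q y⟫ = 2 ⟪u, y⟫² - ‖u‖² ‖y‖²`, there is a finite set `F` of contact points such that every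
`y` is within 45° of some `u ∈ F` (`exists_contact_points`).

*Cells.* The cone of points whose nearest direction in `F` is `u` is halved by the line through
`u`. In orthonormal coordinates `(y₁, y₂)` with first axis `u` and `y₂ > 0` on the half-cell, put
`s = √(1 - y₁²)` and send `y` to `x = ((1 - s y₂) / y₁, s)` (`shearMap`). This map is injective
with Jacobian determinant `-1`, and `⟪x, y⟫ = 1`, so `y ∈ K*` implies `x ∉ int K`. If moreover
`y ∉ B`, then `s < y₂`, which gives `‖x‖ ≤ 1`. Finally `x` stays in the half-cell because this
half-cell has angle at most 45° (`shear_slope`, `shearMap_mem`). Hence `V(K* \ B) ≤ V(B \ K)` on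
every half-cell (`volume_cell_le`), and summing over the half-cells, which cover the plane up to
finitely many lines, finishes the proof (`volume_polar_diff_le`).
-/

open Set

/-! ### Contact points of the Löwner ellipse -/

/-- By Carathéodory, the hull of a compact plane set is a continuous image of
`Δ₂ × S × S × S`. -/
theorem isCompact_convexHull_plane {S : Set (ℝ × ℝ)} (hS : IsCompact S) :
    IsCompact (convexHull ℝ S) := by
  have h : convexHull ℝ S =
      (fun p : (Fin 3 → ℝ) × (Fin 3 → ℝ × ℝ) => ∑ i, p.1 i • p.2 i) ''
        (stdSimplex ℝ (Fin 3) ×ˢ Set.univ.pi fun _ => S) := by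
    apply Set.Subset.antisymm
    · intro x hx
      obtain ⟨ι, _, z, w, hzS, hind, hw, hw1, rfl⟩ := eq_pos_convex_span_of_mem_convexHull hx
      have hne : Nonempty ι := by
        by_contra hemp
        rw [not_nonempty_iff] at hemp
        simp at hw1
      obtain ⟨i₀⟩ := hne
      have hcard : Fintype.card ι ≤ Fintype.card (Fin 3) := by
        have h1 := hind.card_le_finrank_succ
        have h2 := Submodule.finrank_le (vectorSpan ℝ (Set.range z))
        have h3 : Module.finrank ℝ (ℝ × ℝ) = 2 := by simp
        simp only [Fintype.card_fin]
        omega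
      obtain ⟨e⟩ := Function.Embedding.nonempty_of_card_le hcard
      refine ⟨(Function.extend e w 0, Function.extend e z fun _ => z i₀), ⟨⟨?_, ?_⟩, ?_⟩, ?_⟩
      · intro j
        by_cases hj : ∃ i, e i = j
        · obtain ⟨i, rfl⟩ := hj
          simpa [e.injective.extend_apply] using (hw i).le
        · simp [Function.extend_apply' _ _ _ hj]
      · rw [← hw1]
        symm
        apply Fintype.sum_of_injective e e.injective
        · intro j hj
          exact Function.extend_apply' _ _ _ hj
        · intro i
          simp [e.injective.extend_apply]
      · intro j _
        by_cases hj : ∃ i, e i = j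
        · obtain ⟨i, rfl⟩ := hj
          simpa [e.injective.extend_apply] using hzS ⟨i, rfl⟩
        · simpa [Function.extend_apply' _ _ _ hj] using hzS ⟨i₀, rfl⟩
      · symm
        apply Fintype.sum_of_injective e e.injective
        · intro j hj
          simp [Function.extend_apply' _ _ _ hj]
        · intro i
          simp [e.injective.extend_apply]
    · rintro _ ⟨⟨w, z⟩, ⟨hw, hz⟩, rfl⟩
      exact (convex_convexHull ℝ S).sum_mem (fun i _ => hw.1 i) hw.2
        fun i _ => subset_convexHull ℝ S (hz i trivial)
  rw [h]
  exact ((isCompact_stdSimplex ℝ _).prod (isCompact_univ_pi fun _ => hS)).image (by fun_prop)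

/-- A function positive on the contact points `K ∩ S¹` becomes bounded below by a positive constant
on all of `K` once a large multiple of `|1 - ‖x‖²|` is added. One `n` gives both the multiple
and the bound, so that compactness applies to a single increasing open cover. -/
theorem exists_penalty {K : Set E2} (hK : IsCompact K) {Q : E2 → ℝ} (hQ : Continuous Q)
    (hpos : ∀ x ∈ K, ‖x‖ = 1 → 0 < Q x) :
    ∃ n : ℕ, ∀ x ∈ K, 1 / ((n : ℝ) + 1) < Q x + n * |1 - ‖x‖ ^ 2| := by
  let U : ℕ → Set E2 := fun n => {x | 1 / ((n : ℝ) + 1) < Q x + n * |1 - ‖x‖ ^ 2|}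
  have hopen : ∀ n, IsOpen (U n) := fun n => isOpen_lt (by fun_prop) (by fun_prop)
  have hcover : K ⊆ ⋃ n, U n := by
    intro x hx
    rw [Set.mem_iUnion]
    by_cases h1 : ‖x‖ = 1
    · obtain ⟨n, hn⟩ := exists_nat_one_div_lt (hpos x hx h1)
      exact ⟨n, by simpa [U, h1] using hn⟩
    · have hg : 0 < |1 - ‖x‖ ^ 2| := by
        rw [abs_pos]
        intro h
        apply h1
        nlinarith [norm_nonneg x]
      obtain ⟨n, hn⟩ := exists_nat_gt ((1 - Q x) / |1 - ‖x‖ ^ 2|)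
      refine ⟨n + 1, ?_⟩
      rw [div_lt_iff₀ hg] at hn
      have : 1 / (((n + 1 : ℕ) : ℝ) + 1) ≤ 1 := by
        rw [div_le_one (by positivity)]
        push_cast
        linarith [(n.cast_nonneg : (0 : ℝ) ≤ n)]
      simp only [U, Set.mem_ofPred_eq]
      push_cast at *
      linarith
  have hmono : Monotone U := by
    intro n m hnm x hx
    simp only [U, Set.mem_ofPred_eq] at hx ⊢
    have hnm' : (n : ℝ) ≤ m := by exact_mod_cast hnm
    have h1 : 1 / ((m : ℝ) + 1) ≤ 1 / ((n : ℝ) + 1) := by gcongr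
    have h2 : (n : ℝ) * |1 - ‖x‖ ^ 2| ≤ m * |1 - ‖x‖ ^ 2| := by gcongr
    linarith
  obtain ⟨n, hn⟩ := hK.elim_directed_cover U hopen hcover hmono.directed_le
  exact ⟨n, fun x hx => hn hx⟩

/-- If `B²` is the Löwner ellipse of `K`, no traceless quadratic form is positive at every contact
point. Otherwise, with `S = !![α, β; β, -α]`, the ellipse `{x | ‖(1 - ε S) x‖² ≤ lam}` contains `K`
for a suitable `lam`, and its area is `π * lam / (1 - ε² m) < π` for small `ε`, where
`m = α² + β²`. -/
theorem not_quadratic_pos (K : Set E2) (hKcomp : IsCompact K)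
    (hKB : K ⊆ Metric.closedBall (0 : E2) 1)
    (hLoewner : ∀ T : E2 →ₗ[ℝ] E2, Function.Bijective T →
      K ⊆ ⇑T '' Metric.closedBall (0 : E2) 1 → 1 ≤ |LinearMap.det T|) (α β : ℝ) :
    ¬ ∀ x ∈ K, ‖x‖ = 1 → 0 < α * (x 0 ^ 2 - x 1 ^ 2) + β * (2 * x 0 * x 1) := by
  intro hpos
  obtain ⟨n, hn⟩ := exists_penalty hKcomp
    (Q := fun x => α * (x 0 ^ 2 - x 1 ^ 2) + β * (2 * x 0 * x 1)) (by fun_prop) hpos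
  set m := α ^ 2 + β ^ 2 with hm
  have hm0 : 0 ≤ m := by positivity
  set δ : ℝ := 1 / ((n : ℝ) + 1) with hδ
  have hδ0 : 0 < δ := by positivity
  have hδ1 : δ ≤ 1 := by
    rw [hδ, div_le_one (by positivity)]
    linarith [(n.cast_nonneg : (0 : ℝ) ≤ n)]
  have hδn : δ * n ≤ 1 := by
    rw [hδ]
    field_simp
    linarith
  -- `ε` is small against both `δ / m` (the area gain is first order in `ε`, the loss second order)
  -- and `1 / n` (the penalty term is absorbed by `1 - ‖x‖²`).
  set ε : ℝ := δ / (4 * (1 + m)) with hε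
  have hε0 : 0 < ε := by positivity
  have hεm : 4 * (ε * (1 + m)) = δ := by
    rw [hε]; field_simp
  have hεδ : 4 * ε ≤ δ := by nlinarith [mul_nonneg hε0.le hm0]
  have hεm' : 4 * (ε * m) ≤ δ := by nlinarith
  have hεn : 2 * ε * n ≤ 1 := by
    have : (4 * ε) * n ≤ δ * n := by gcongr
    nlinarith [mul_nonneg hε0.le (n.cast_nonneg : (0 : ℝ) ≤ n)]
  -- An upper bound for `‖(1 - ε S) x‖² = (1 + ε² m) ‖x‖² - 2 ε ⟪S x, x⟫` on `K`.
  set lam : ℝ := 1 - 2 * ε * δ + 2 * ε ^ 2 * m with hlam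
  have hlam0 : 0 < lam := by
    have : 2 * ε * δ ≤ 2 * (1 / 4) * 1 := by gcongr; linarith
    have : 0 ≤ ε ^ 2 * m := by positivity
    linarith
  have hD : lam < 1 - ε ^ 2 * m := by
    have : ε * (4 * (ε * m)) ≤ ε * δ := by gcongr
    have : 0 < ε * δ := by positivity
    rw [hlam]
    linarith
  set D := 1 - ε ^ 2 * m with hDdef
  have hD0 : 0 < D := hlam0.trans hD
  have hsq : √lam ^ 2 = lam := Real.sq_sqrt hlam0.le
  have hs0 : 0 < √lam := Real.sqrt_pos.2 hlam0
  -- `T = √lam (1 - ε S)⁻¹`, using `(1 - ε S)(1 + ε S) = D`.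
  let T : E2 →ₗ[ℝ] E2 := Matrix.toLpLin 2 2
    ((√lam / D) • !![1 + ε * α, ε * β; ε * β, 1 - ε * α])
  have hdet : LinearMap.det T = lam / D := by
    simp only [T, LinearMap.det_toLpLin, Matrix.det_smul, Matrix.det_fin_two_of, Fintype.card_fin,
      div_pow, hsq]
    rw [show (1 + ε * α) * (1 - ε * α) - ε * β * (ε * β) = D by rw [hDdef, hm]; ring]
    field_simp
  have hbij : Function.Bijective T := by
    rw [← Module.End.isUnit_iff, LinearMap.isUnit_iff_isUnit_det, hdet, isUnit_iff_ne_zero]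
    positivity
  have key := hLoewner T hbij ?_
  · rw [hdet, abs_of_pos (by positivity), le_div_iff₀ hD0] at key
    linarith
  · intro x hx
    refine ⟨WithLp.toLp 2 ![((1 - ε * α) * x 0 - ε * β * x 1) / √lam,
      (-(ε * β) * x 0 + (1 + ε * α) * x 1) / √lam], ?_, ?_⟩
    · have hx1 : ‖x‖ ^ 2 ≤ 1 := by
        have := hKB hx
        rw [mem_closedBall_zero_iff] at this
        nlinarith [norm_nonneg x]
      have h2 := hn x hx
      rw [abs_of_nonneg (by linarith)] at h2
      have hxn : ‖x‖ ^ 2 = x 0 ^ 2 + x 1 ^ 2 := by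
        rw [EuclideanSpace.norm_sq_eq]; simp [Fin.sum_univ_two]
      rw [mem_closedBall_zero_iff, ← sq_le_one_iff₀ (norm_nonneg _), EuclideanSpace.norm_sq_eq]
      simp only [Fin.sum_univ_two, Matrix.cons_val_zero, Matrix.cons_val_one, Real.norm_eq_abs,
        sq_abs, div_pow, hsq]
      rw [← add_div, div_le_one hlam0]
      set g := 1 - ‖x‖ ^ 2 with hg
      have hg0 : 0 ≤ g := by linarith
      set q := α * (x 0 ^ 2 - x 1 ^ 2) + β * (2 * x 0 * x 1) with hq
      have e1 : ((1 - ε * α) * x 0 - ε * β * x 1) ^ 2 + (-(ε * β) * x 0 + (1 + ε * α) * x 1) ^ 2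
          = (1 + ε ^ 2 * m) * (1 - g) - 2 * ε * q := by
        rw [hg, hxn, hq, hm]; ring
      rw [e1, hlam]
      have a1 : 2 * ε * δ ≤ 2 * ε * (q + n * g) := by gcongr
      have a2 : (2 * ε * n) * g ≤ 1 * g := by gcongr
      have a3 : 0 ≤ ε ^ 2 * m * g := by positivity
      have a4 : 0 ≤ ε ^ 2 * m := by positivity
      linarith
    · ext i
      fin_cases i
      · simp [T, Matrix.toLpLin_apply]
        field_simp
        rw [hDdef, hm]; ring
      · simp [T, Matrix.toLpLin_apply]
        field_simp
        rw [hDdef, hm]; ring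

theorem inner_E2 (x y : E2) : ⟪x, y⟫ = x 0 * y 0 + x 1 * y 1 := by
  simp [PiLp.inner_apply, Fin.sum_univ_two, mul_comm]

/-- There are finitely many contact points of `K` with the unit circle such that every direction
makes an angle of at most 45° with one of them. -/
theorem exists_contact_points (K : Set E2) (hKcomp : IsCompact K) (hsym : K = -K)
    (hKB : K ⊆ Metric.closedBall (0 : E2) 1)
    (hLoewner : ∀ T : E2 →ₗ[ℝ] E2, Function.Bijective T →
      K ⊆ ⇑T '' Metric.closedBall (0 : E2) 1 → 1 ≤ |LinearMap.det T|) :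
    ∃ F : Finset E2, (∀ u ∈ F, u ∈ K ∧ ‖u‖ = 1) ∧
      ∀ y : E2, ∃ u ∈ F, 0 ≤ ⟪u, y⟫ ∧ ‖y‖ ^ 2 ≤ 2 * ⟪u, y⟫ ^ 2 := by
  classical
  -- `q` is the complex squaring map.
  let q : E2 → ℝ × ℝ := fun x => (x 0 ^ 2 - x 1 ^ 2, 2 * x 0 * x 1)
  have hq : Continuous q := by fun_prop
  let C : Set E2 := K ∩ Metric.sphere 0 1
  have hC : IsCompact C := hKcomp.inter_right Metric.isClosed_sphere
  have h0 : (0 : ℝ × ℝ) ∈ convexHull ℝ (q '' C) := by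
    by_contra h0
    obtain ⟨f, c, hc, hf⟩ := geometric_hahn_banach_point_closed (convex_convexHull ℝ _)
      (isCompact_convexHull_plane (hC.image hq)).isClosed h0
    rw [map_zero] at hc
    refine not_quadratic_pos K hKcomp hKB hLoewner (f (1, 0)) (f (0, 1)) fun x hx hx1 => ?_
    have h1 := hf (q x) (subset_convexHull ℝ _ ⟨x, ⟨hx, by simpa using hx1⟩, rfl⟩)
    have h2 : q x = (x 0 ^ 2 - x 1 ^ 2) • ((1 : ℝ), (0 : ℝ))
        + (2 * x 0 * x 1) • ((0 : ℝ), (1 : ℝ)) := by simp [q]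
    rw [h2, map_add, map_smul, map_smul, smul_eq_mul, smul_eq_mul] at h1
    linarith
  rw [convexHull_eq_union_convexHull_finite_subsets] at h0
  simp only [Set.mem_iUnion] at h0
  obtain ⟨t, ht, h0⟩ := h0
  obtain ⟨F, hF, rfl⟩ := Finset.subset_set_image_iff.1 ht
  -- `q` does not distinguish `u` from `-u`, so both are needed to get `0 ≤ ⟪u, y⟫`.
  refine ⟨F ∪ F.image Neg.neg, ?_, ?_⟩
  · intro u hu
    rw [Finset.mem_union, Finset.mem_image] at hu
    rcases hu with hu | ⟨v, hv, rfl⟩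
    · exact ⟨(hF hu).1, by simpa using (hF hu).2⟩
    · refine ⟨?_, by simpa using (hF hv).2⟩
      rw [hsym]
      simpa using (hF hv).1
  · intro y
    obtain ⟨u, hu, huy⟩ : ∃ u ∈ F, ‖y‖ ^ 2 ≤ 2 * ⟪u, y⟫ ^ 2 := by
      by_contra! hcon
      -- Otherwise all `q u`, `u ∈ F`, lie in an open half-plane bounded by a line through `0`.
      have hconv : Convex ℝ {z : ℝ × ℝ | (q y).1 * z.1 + (q y).2 * z.2 < 0} := by
        apply convex_halfSpace_lt
        constructor
        · intro a b; simp; ring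
        · intro a b; simp; ring
      have hsub := convexHull_min (s := ((F.image q : Finset (ℝ × ℝ)) : Set (ℝ × ℝ))) (by
        intro z hz
        rw [Finset.mem_coe, Finset.mem_image] at hz
        obtain ⟨u, hu, rfl⟩ := hz
        have h1 := hcon u hu
        have hu1 : ‖u‖ = 1 := by simpa using (hF hu).2
        have hu2 : ‖u‖ ^ 2 = u 0 ^ 2 + u 1 ^ 2 := by
          rw [EuclideanSpace.norm_sq_eq]; simp [Fin.sum_univ_two]
        have hy2 : ‖y‖ ^ 2 = y 0 ^ 2 + y 1 ^ 2 := by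
          rw [EuclideanSpace.norm_sq_eq]; simp [Fin.sum_univ_two]
        rw [hu1] at hu2
        rw [hy2, inner_E2] at h1
        simp only [q, Set.mem_ofPred_eq]
        have : (y 0 ^ 2 - y 1 ^ 2) * (u 0 ^ 2 - u 1 ^ 2) + 2 * y 0 * y 1 * (2 * u 0 * u 1)
            = 2 * (u 0 * y 0 + u 1 * y 1) ^ 2 - (u 0 ^ 2 + u 1 ^ 2) * (y 0 ^ 2 + y 1 ^ 2) := by ring
        rw [this, ← hu2]
        linarith) hconv h0
      simp at hsub
    rcases le_total 0 ⟪u, y⟫ with h | h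
    · exact ⟨u, Finset.mem_union_left _ hu, h, huy⟩
    · refine ⟨-u, Finset.mem_union_right _ (Finset.mem_image_of_mem _ hu), ?_, ?_⟩
      · rw [inner_neg_left]; linarith
      · rw [inner_neg_left, neg_sq]; exact huy

/-! ### The area-preserving map -/

/-- Sends `y = (y₁, y₂)` to the point where the line `{x | ⟪x, y⟫ = 1}` meets the horizontal line
`x₂ = √(1 - y₁²)` through the point of the unit circle with abscissa `y₁`. Only used for
`0 < y₁ < 1`. -/
def shearMap (p : ℝ × ℝ) : ℝ × ℝ := ((1 - √(1 - p.1 ^ 2) * p.2) / p.1, √(1 - p.1 ^ 2))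

/-- The diagonal entry `a` is left unspecified: the entry opposite to it vanishes, so it does not
enter the determinant. -/
theorem hasFDerivAt_shearMap {p : ℝ × ℝ} (h0 : 0 < p.1) (h1 : p.1 < 1) :
    ∃ a : ℝ, HasFDerivAt shearMap
      (Matrix.toLin (.finTwoProd ℝ) (.finTwoProd ℝ)
        !![a, -√(1 - p.1 ^ 2) / p.1; -p.1 / √(1 - p.1 ^ 2), 0]).toContinuousLinearMap p := by
  have hpos : 0 < 1 - p.1 ^ 2 := by nlinarith
  have hs : HasDerivAt (fun t : ℝ => √(1 - t ^ 2)) (-p.1 / √(1 - p.1 ^ 2)) p.1 := by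
    have h := ((hasDerivAt_pow 2 p.1).const_sub 1).sqrt hpos.ne'
    convert h using 1
    simp
    field_simp
  have hs' : HasFDerivAt (fun q : ℝ × ℝ => √(1 - q.1 ^ 2))
      ((-p.1 / √(1 - p.1 ^ 2)) • ContinuousLinearMap.fst ℝ ℝ ℝ) p :=
    hs.comp_hasFDerivAt p hasFDerivAt_fst
  have hi : HasFDerivAt (fun q : ℝ × ℝ => q.1⁻¹)
      ((-(p.1 ^ 2)⁻¹) • ContinuousLinearMap.fst ℝ ℝ ℝ) p :=
    (hasDerivAt_inv h0.ne').comp_hasFDerivAt p hasFDerivAt_fst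
  have hx : HasFDerivAt (fun q : ℝ × ℝ => (1 - √(1 - q.1 ^ 2) * q.2) * q.1⁻¹) _ p :=
    ((hs'.mul hasFDerivAt_snd).const_sub 1).mul hi
  refine ⟨-(1 - √(1 - p.1 ^ 2) * p.2) / p.1 ^ 2 + p.2 / √(1 - p.1 ^ 2), ?_⟩
  rw [Matrix.toLin_finTwoProd_toContinuousLinearMap]
  have hsne : √(1 - p.1 ^ 2) ≠ 0 := (Real.sqrt_pos.2 hpos).ne'
  have hF : HasFDerivAt shearMap _ p := hx.prodMk hs'
  refine hF.congr_fderiv ?_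
  ext <;> simp <;> field_simp
  ring

/-- `shearMap` is injective with Jacobian determinant `-1` on the strip `0 < y₁ < 1`. -/
theorem volume_image_shearMap {A : Set (ℝ × ℝ)} (hA : MeasurableSet A)
    (hA' : ∀ p ∈ A, 0 < p.1 ∧ p.1 < 1) : volume (shearMap '' A) = volume A := by
  have hd : ∀ p : ℝ × ℝ, ∃ f' : ℝ × ℝ →L[ℝ] ℝ × ℝ,
      p ∈ A → HasFDerivAt shearMap f' p ∧ |f'.det| = 1 := by
    intro p
    by_cases hp : p ∈ A
    · obtain ⟨h0, h1⟩ := hA' p hp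
      obtain ⟨a, ha⟩ := hasFDerivAt_shearMap h0 h1
      refine ⟨_, fun _ => ⟨ha, ?_⟩⟩
      have hsne : √(1 - p.1 ^ 2) ≠ 0 := (Real.sqrt_pos.2 (by nlinarith)).ne'
      simp only [LinearMap.det_toContinuousLinearMap, LinearMap.det_toLin, Matrix.det_fin_two_of]
      rw [show a * 0 - -√(1 - p.1 ^ 2) / p.1 * (-p.1 / √(1 - p.1 ^ 2)) = -1 by
        field_simp; ring]
      simp
    · exact ⟨0, fun h => absurd h hp⟩
  choose f' hf' using hd
  have hinj : InjOn shearMap A := by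
    intro p hp q hq hpq
    obtain ⟨hp0, hp1⟩ := hA' p hp
    obtain ⟨hq0, hq1⟩ := hA' q hq
    simp only [shearMap, Prod.mk.injEq] at hpq
    obtain ⟨h1, h2⟩ := hpq
    rw [Real.sqrt_inj (by nlinarith) (by nlinarith)] at h2
    have h3 : p.1 = q.1 := by nlinarith
    have hsne : √(1 - q.1 ^ 2) ≠ 0 := (Real.sqrt_pos.2 (by nlinarith)).ne'
    rw [h3, div_left_inj' hq0.ne', sub_right_inj, mul_right_inj' hsne] at h1
    exact Prod.ext h3 h1
  rw [← lintegral_abs_det_fderiv_eq_addHaar_image volume hA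
    (fun p hp => (hf' p hp).1.hasFDerivWithinAt) hinj]
  rw [setLIntegral_congr_fun hA (g := fun _ => 1)
    (fun p hp => by simp [(hf' p hp).2])]
  simp

/-- `shearMap` preserves the sector `y₂ < τ y₁`, where `τ = (1 - c) / d ≤ 1`, for points above the
unit circle. For a unit vector `u = (c, d)` with `d > 0` this sector is bounded by the bisector of
`u` and the first axis. The inequality reduces to `(y₁ - τ s) (τ y₁ - s) > 0`. -/
theorem shear_slope {y₁ y₂ s c d : ℝ} (hy₁ : 0 < y₁) (hs : 0 < s) (hsy : s ^ 2 + y₁ ^ 2 = 1)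
    (hsy₂ : s < y₂) (hd : 0 < d) (hcd : 1 - c ≤ d) (hc : 0 < 1 - c)
    (h : y₂ * d < y₁ * (1 - c)) :
    s * d < (1 - s * y₂) / y₁ * (1 - c) := by
  obtain ⟨τ, hτ⟩ : ∃ τ, 1 - c = τ * d := ⟨(1 - c) / d, by field_simp⟩
  rw [hτ] at h hcd hc ⊢
  have hτ0 : 0 < τ := by
    by_contra hneg
    nlinarith
  have hτ1 : τ ≤ 1 := by
    by_contra hneg
    nlinarith
  have h2 : y₂ < τ * y₁ := by nlinarith
  have h3 : s < τ * y₁ := hsy₂.trans h2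
  have h4 : τ * s < y₁ := by nlinarith
  have h5 : s * y₁ * (1 + τ ^ 2) < τ := by nlinarith [mul_pos (sub_pos.2 h3) (sub_pos.2 h4)]
  have h6 : s * y₂ * τ ≤ s * (τ * y₁) * τ := by gcongr
  have h7 : s * y₁ < τ * (1 - s * y₂) := by nlinarith
  have h8 : s < (1 - s * y₂) / y₁ * τ := by
    rw [div_mul_eq_mul_div, lt_div_iff₀ hy₁]
    linarith
  calc s * d < ((1 - s * y₂) / y₁ * τ) * d := by gcongr
    _ = _ := by ring

/-! ### Voronoi half-cells -/

/-- The half-cell of `b 0`: the open Voronoi cone of the points that have larger inner product with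
`b 0` than with any other member of `F`, intersected with the side of the line through `b 0` to
which `b 1` points. -/
def cell (F : Finset E2) (b : OrthonormalBasis (Fin 2) ℝ E2) : Set E2 :=
  {y | 0 < ⟪b 1, y⟫ ∧ ∀ u ∈ F, u ≠ b 0 → ⟪u, y⟫ < ⟪b 0, y⟫}

theorem inner_basis (b : OrthonormalBasis (Fin 2) ℝ E2) (x y : E2) :
    ⟪x, y⟫ = ⟪b 0, x⟫ * ⟪b 0, y⟫ + ⟪b 1, x⟫ * ⟪b 1, y⟫ := by
  rw [← b.sum_inner_mul_inner x y, Fin.sum_univ_two, real_inner_comm x, real_inner_comm x]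

theorem norm_sq_basis (b : OrthonormalBasis (Fin 2) ℝ E2) (x : E2) :
    ‖x‖ ^ 2 = ⟪b 0, x⟫ ^ 2 + ⟪b 1, x⟫ ^ 2 := by
  rw [← real_inner_self_eq_norm_sq, inner_basis b]; ring

theorem isOpen_cell (F : Finset E2) (b : OrthonormalBasis (Fin 2) ℝ E2) : IsOpen (cell F b) := by
  have h : cell F b = {y | 0 < ⟪b 1, y⟫} ∩ ⋂ u ∈ F, {y | u ≠ b 0 → ⟪u, y⟫ < ⟪b 0, y⟫} := by
    ext y; simp [cell]
  rw [h]
  refine (isOpen_lt (by fun_prop) (by fun_prop)).inter ?_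
  refine isOpen_biInter_finset fun u _ => ?_
  by_cases hu : u = b 0
  · simp [hu]
  · simpa [hu] using isOpen_lt (by fun_prop) (by fun_prop)

/-- The half-cell lies within 45° of `b 0`. -/
theorem cell_inner_le {F : Finset E2} {b : OrthonormalBasis (Fin 2) ℝ E2}
    (hgap : ∀ y : E2, ∃ u ∈ F, 0 ≤ ⟪u, y⟫ ∧ ‖y‖ ^ 2 ≤ 2 * ⟪u, y⟫ ^ 2) {y : E2}
    (hy : y ∈ cell F b) : ⟪b 1, y⟫ ≤ ⟪b 0, y⟫ := by
  obtain ⟨u, hu, h0, h1⟩ := hgap y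
  have h2 : ⟪u, y⟫ ≤ ⟪b 0, y⟫ := by
    by_cases h : u = b 0
    · rw [h]
    · exact (hy.2 u hu h).le
  rw [norm_sq_basis b] at h1
  have h3 : 0 < ⟪b 1, y⟫ := hy.1
  nlinarith

/-- Some member of `F` bounds the half-cell by a line of slope at most `1`; otherwise the half-cell
would reach beyond the diagonal, against `cell_inner_le`. -/
theorem exists_near_neighbour {F : Finset E2} {b : OrthonormalBasis (Fin 2) ℝ E2}
    (hgap : ∀ y : E2, ∃ u ∈ F, 0 ≤ ⟪u, y⟫ ∧ ‖y‖ ^ 2 ≤ 2 * ⟪u, y⟫ ^ 2) :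
    ∃ u ∈ F, u ≠ b 0 ∧ 1 - ⟪b 0, u⟫ ≤ ⟪b 1, u⟫ := by
  by_contra! hcon
  have hb01 : ⟪b 0, b 1⟫ = 0 := b.inner_eq_zero (by decide)
  have hb10 : ⟪b 1, b 0⟫ = 0 := b.inner_eq_zero (by decide)
  have hb0 : ⟪b 0, b 0⟫ = 1 := by simp
  have hb1 : ⟪b 1, b 1⟫ = 1 := by simp
  have hmem : b 0 + (1 : ℝ) • b 1 ∈ cell F b := by
    refine ⟨?_, fun u hu hne => ?_⟩
    · rw [inner_add_right, inner_smul_right, hb10, hb1]; norm_num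
    · rw [inner_add_right, inner_smul_right, inner_add_right, inner_smul_right, hb0, hb01,
        real_inner_comm, real_inner_comm (b 1)]
      linarith [hcon u hu hne]
  have hcont : Continuous fun t : ℝ => b 0 + t • b 1 := by fun_prop
  -- The diagonal direction `b 0 + b 1` is in the open cell, hence so is a slightly steeper one.
  have hev := hcont.continuousAt.eventually_mem ((isOpen_cell F b).mem_nhds hmem)
  obtain ⟨t, ht, h1⟩ := ((hev.filter_mono nhdsWithin_le_nhds).and
    (self_mem_nhdsWithin (a := (1 : ℝ)) (s := Ioi 1))).exists
  have h2 := cell_inner_le hgap ht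
  rw [inner_add_right, inner_smul_right, inner_add_right, inner_smul_right, hb0, hb01, hb10,
    hb1] at h2
  have : (1 : ℝ) < t := h1
  linarith

/-- Coordinates of the plane with respect to the orthonormal basis `b`, valued in `ℝ × ℝ`. -/
def planeEquiv (b : OrthonormalBasis (Fin 2) ℝ E2) : E2 ≃ᵐ ℝ × ℝ :=
  (b.measurableEquiv.trans (MeasurableEquiv.toLp 2 (Fin 2 → ℝ)).symm).trans
    MeasurableEquiv.finTwoArrow

theorem planeEquiv_apply (b : OrthonormalBasis (Fin 2) ℝ E2) (y : E2) :
    planeEquiv b y = (⟪b 0, y⟫, ⟪b 1, y⟫) := by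
  rw [← b.repr_apply_apply, ← b.repr_apply_apply]
  rfl

theorem measurePreserving_planeEquiv (b : OrthonormalBasis (Fin 2) ℝ E2) :
    MeasurePreserving (planeEquiv b) volume volume :=
  ((volume_preserving_finTwoArrow ℝ).comp
    (EuclideanSpace.volume_preserving_symm_measurableEquiv_toLp _)).comp
      b.measurePreserving_measurableEquiv

theorem volume_line {w : E2} (hw : w ≠ 0) (c : ℝ) : volume {y : E2 | ⟪w, y⟫ = c} = 0 := by
  rcases Set.eq_empty_or_nonempty {y : E2 | ⟪w, y⟫ = c} with h | ⟨y₀, hy₀⟩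
  · rw [h, measure_empty]
  · have hset : {y : E2 | ⟪w, y⟫ = c} =
        (fun y => y + -y₀) ⁻¹' (LinearMap.ker (innerₛₗ ℝ w) : Set E2) := by
      ext y
      have : ⟪w, y₀⟫ = c := hy₀
      simp [inner_add_right, this, add_neg_eq_zero]
    rw [hset, measure_preimage_add_right]
    apply Measure.addHaar_submodule
    intro htop
    have : w ∈ LinearMap.ker (innerₛₗ ℝ w) := htop ▸ Submodule.mem_top
    simp at this
    exact hw this

/-- A point `x` with `⟪x, y⟫ = 1` for some `y ∈ K*` cannot be interior to `K`, since `t • x` with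
`t > 1` slightly would also be in `K`. -/
theorem notMem_interior_of_polar {K : Set E2} {x y : E2} (hy : y ∈ polarBody K)
    (hxy : ⟪x, y⟫ = 1) : x ∉ interior K := by
  intro hx
  have hcont : Continuous fun t : ℝ => t • x := by fun_prop
  have hev := hcont.continuousAt.eventually_mem (x := (1 : ℝ))
    (isOpen_interior.mem_nhds (by simpa using hx))
  obtain ⟨t, ht, h1⟩ := ((hev.filter_mono nhdsWithin_le_nhds).and
    (self_mem_nhdsWithin (a := (1 : ℝ)) (s := Ioi 1))).exists
  have h2 := hy _ (interior_subset ht)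
  rw [real_inner_smul_left, hxy] at h2
  have : (1 : ℝ) < t := h1
  linarith

theorem isClosed_polarBody (K : Set E2) : IsClosed (polarBody K) := by
  have h : polarBody K = ⋂ x ∈ K, {y : E2 | ⟪x, y⟫ ≤ 1} := by
    ext y; simp [polarBody]
  rw [h]
  exact isClosed_biInter fun x _ => isClosed_le (by fun_prop) (by fun_prop)

/-- In the coordinates given by `b`, `shearMap` sends the part of `K* \ B²` in a half-cell into the
part of `B² \ int K` in the same half-cell. The line `⟪b 0, y⟫ = 1`, where `shearMap` is not
differentiable, is left out. -/
theorem shearMap_mem {K : Set E2} {F : Finset E2} {b : OrthonormalBasis (Fin 2) ℝ E2}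
    (hF : ∀ u ∈ F, u ∈ K ∧ ‖u‖ = 1) (hb : b 0 ∈ F)
    (hgap : ∀ y : E2, ∃ u ∈ F, 0 ≤ ⟪u, y⟫ ∧ ‖y‖ ^ 2 ≤ 2 * ⟪u, y⟫ ^ 2)
    {x y : E2} (hy : y ∈ cell F b) (hyP : y ∈ polarBody K)
    (hyB : y ∉ Metric.closedBall (0 : E2) 1) (hy1 : ⟪b 0, y⟫ ≠ 1)
    (hx : (⟪b 0, x⟫, ⟪b 1, x⟫) = shearMap (⟪b 0, y⟫, ⟪b 1, y⟫)) :
    x ∈ cell F b ∩ (Metric.closedBall (0 : E2) 1 \ interior K) := by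
  obtain ⟨v, hvF, hvne, hv⟩ := exists_near_neighbour hgap (b := b)
  have hcell : ∀ u ∈ F, u ≠ b 0 →
      ⟪b 1, y⟫ * ⟪b 1, u⟫ < ⟪b 0, y⟫ * (1 - ⟪b 0, u⟫) := by
    intro u hu hne
    have := hy.2 u hu hne
    rw [inner_basis b u y] at this
    linarith
  have hunit : ∀ u ∈ F, ⟪b 0, u⟫ ^ 2 + ⟪b 1, u⟫ ^ 2 = 1 := by
    intro u hu
    rw [← norm_sq_basis, (hF u hu).2, one_pow]
  have hlt1 : ∀ u ∈ F, u ≠ b 0 → 0 < 1 - ⟪b 0, u⟫ := by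
    intro u hu hne
    have h1 := inner_lt_one_iff_real_of_norm_eq_one (by simp : ‖b 0‖ = 1) (hF u hu).2
    have := h1.2 hne.symm
    linarith
  have h2pos : 0 < ⟪b 1, y⟫ := hy.1
  have h21 : ⟪b 1, y⟫ ≤ ⟪b 0, y⟫ := cell_inner_le hgap hy
  have h1le : ⟪b 0, y⟫ ≤ 1 := hyP _ (hF _ hb).1
  have hnorm : 1 < ‖y‖ ^ 2 := by
    rw [mem_closedBall_zero_iff, not_le] at hyB
    nlinarith
  rw [norm_sq_basis b] at hnorm
  set y₁ := ⟪b 0, y⟫ with hy₁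
  set y₂ := ⟪b 1, y⟫ with hy₂
  have h1lt : y₁ < 1 := lt_of_le_of_ne h1le hy1
  have h1pos : 0 < y₁ := h2pos.trans_le h21
  simp only [shearMap, Prod.mk.injEq] at hx
  set s := √(1 - y₁ ^ 2) with hs
  have hspos : 0 < s := Real.sqrt_pos.2 (by nlinarith)
  have hsq : s ^ 2 + y₁ ^ 2 = 1 := by
    rw [hs, Real.sq_sqrt (by nlinarith)]; ring
  have hsy : s < y₂ := by nlinarith
  obtain ⟨hx1, hx2⟩ := hx
  have hslope : ∀ u ∈ F, u ≠ b 0 → 0 < ⟪b 1, u⟫ → 1 - ⟪b 0, u⟫ ≤ ⟪b 1, u⟫ →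
      ⟪b 1, x⟫ * ⟪b 1, u⟫ < ⟪b 0, x⟫ * (1 - ⟪b 0, u⟫) := by
    intro u hu hne hd hcd
    rw [hx1, hx2]
    exact shear_slope h1pos hspos hsq hsy hd hcd (hlt1 u hu hne) (hcell u hu hne)
  have hv0 := hlt1 v hvF hvne
  have hdiag : ⟪b 1, x⟫ < ⟪b 0, x⟫ := by
    have := hslope v hvF hvne (by linarith) hv
    rw [hx2] at this ⊢
    nlinarith
  have hx2pos : 0 < ⟪b 1, x⟫ := by rw [hx2]; exact hspos
  refine ⟨⟨hx2pos, fun u hu hne => ?_⟩, ?_, ?_⟩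
  · have hu0 := hlt1 u hu hne
    have : ⟪b 1, x⟫ * ⟪b 1, u⟫ < ⟪b 0, x⟫ * (1 - ⟪b 0, u⟫) := by
      -- Neighbours on the other side, or at slope above `1`, do not constrain points below the
      -- diagonal; the others are handled by `shear_slope`.
      rcases le_or_gt ⟪b 1, u⟫ 0 with hd | hd
      · nlinarith
      · rcases le_or_gt (1 - ⟪b 0, u⟫) ⟪b 1, u⟫ with hcd | hcd
        · exact hslope u hu hne hd hcd
        · nlinarith
    rw [inner_basis b u x]
    linarith
  · rw [mem_closedBall_zero_iff, ← sq_le_one_iff₀ (norm_nonneg _), norm_sq_basis b, hx2]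
    -- As `s < y₂`, the point `x` lies to the left of the point `(y₁, s)` of the unit circle.
    have : ⟪b 0, x⟫ ≤ y₁ := by
      rw [hx1, div_le_iff₀ h1pos]
      nlinarith
    nlinarith
  · apply notMem_interior_of_polar hyP
    rw [inner_basis b x y, hx1, hx2, ← hy₁, ← hy₂]
    field_simp
    ring

/-- The inequality `V(K* \ B²) ≤ V(B² \ int K)` inside one half-cell. -/
theorem volume_cell_le {K : Set E2} {F : Finset E2} {b : OrthonormalBasis (Fin 2) ℝ E2}
    (hF : ∀ u ∈ F, u ∈ K ∧ ‖u‖ = 1) (hb : b 0 ∈ F)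
    (hgap : ∀ y : E2, ∃ u ∈ F, 0 ≤ ⟪u, y⟫ ∧ ‖y‖ ^ 2 ≤ 2 * ⟪u, y⟫ ^ 2) :
    volume (cell F b ∩ (polarBody K \ Metric.closedBall (0 : E2) 1)) ≤
      volume (cell F b ∩ (Metric.closedBall (0 : E2) 1 \ interior K)) := by
  set A := (cell F b ∩ (polarBody K \ Metric.closedBall (0 : E2) 1)) \ {y | ⟪b 0, y⟫ = 1} with hA
  have hb0 : b 0 ≠ 0 := b.orthonormal.ne_zero 0
  have hAm : MeasurableSet A :=
    ((isOpen_cell F b).measurableSet.inter ((isClosed_polarBody K).measurableSet.diff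
      Metric.isClosed_closedBall.measurableSet)).diff
      (isClosed_eq (by fun_prop) (by fun_prop)).measurableSet
  have hmp := (measurePreserving_planeEquiv b).symm
  rw [← measure_sdiff_null (volume_line hb0 1), ← hA, ← hmp.measure_preimage_equiv A,
    ← hmp.measure_preimage_equiv (cell F b ∩ _)]
  have hAm' : MeasurableSet ((planeEquiv b).symm ⁻¹' A) := (planeEquiv b).symm.measurable hAm
  have hcoord : ∀ p, (⟪b 0, (planeEquiv b).symm p⟫, ⟪b 1, (planeEquiv b).symm p⟫) = p := by
    intro p
    rw [← planeEquiv_apply, MeasurableEquiv.apply_symm_apply]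
  rw [← volume_image_shearMap hAm']
  · apply measure_mono
    rintro _ ⟨p, ⟨⟨hc, hP, hB⟩, h1⟩, rfl⟩
    refine shearMap_mem hF hb hgap hc hP hB h1 ?_
    rw [hcoord, hcoord]
  · rintro p ⟨⟨hc, hP, hB⟩, h1⟩
    have hp := hcoord p
    have hp1 : ⟪b 0, (planeEquiv b).symm p⟫ = p.1 := congrArg Prod.fst hp
    rw [← hp1]
    exact ⟨hc.1.trans_le (cell_inner_le hgap hc),
      lt_of_le_of_ne (hP _ (hF _ hb).1) h1⟩

/-! ### Summing over the half-cells -/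

/-- The two orthonormal bases with first vector `u`; `ε` selects the side of the second one. -/
theorem exists_basis {u : E2} (hu : ‖u‖ = 1) (ε : Bool) :
    ∃ b : OrthonormalBasis (Fin 2) ℝ E2, b 0 = u ∧
      b 1 = (if ε then (1 : ℝ) else -1) • (WithLp.toLp 2 ![-u 1, u 0] : E2) := by
  set v : E2 := (if ε then (1 : ℝ) else -1) • (WithLp.toLp 2 ![-u 1, u 0] : E2) with hv
  have hu2 : u 0 ^ 2 + u 1 ^ 2 = 1 := by
    have := EuclideanSpace.norm_sq_eq u
    rw [hu] at this
    simpa [Fin.sum_univ_two] using this.symm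
  have hv1 : ‖v‖ = 1 := by
    rw [hv, norm_smul, EuclideanSpace.norm_eq]
    have : u 1 ^ 2 + u 0 ^ 2 = 1 := by linarith
    cases ε <;> simp [Fin.sum_univ_two, this]
  have huv : ⟪u, v⟫ = 0 := by
    rw [hv, real_inner_smul_right, inner_E2]
    simp
    split_ifs <;> ring
  have hon : Orthonormal ℝ ![u, v] := by
    constructor
    · intro i
      fin_cases i
      · exact hu
      · exact hv1
    · intro i j hij
      fin_cases i <;> fin_cases j
      · exact absurd rfl hij
      · exact huv
      · simpa [real_inner_comm] using huv
      · exact absurd rfl hij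
  have hspan := hon.linearIndependent.span_eq_top_of_card_eq_finrank' (by simp)
  refine ⟨OrthonormalBasis.mk hon hspan.ge, ?_, ?_⟩ <;> simp

/-- The half-cells of all `u ∈ F` are disjoint and cover almost the whole plane, so the inequalities
of `volume_cell_le` add up. -/
theorem volume_polar_diff_le {K : Set E2} {F : Finset E2}
    (hF : ∀ u ∈ F, u ∈ K ∧ ‖u‖ = 1)
    (hgap : ∀ y : E2, ∃ u ∈ F, 0 ≤ ⟪u, y⟫ ∧ ‖y‖ ^ 2 ≤ 2 * ⟪u, y⟫ ^ 2) :
    volume (polarBody K \ Metric.closedBall (0 : E2) 1) ≤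
      volume (Metric.closedBall (0 : E2) 1 \ interior K) := by
  have hex : ∀ i : F × Bool, ∃ b : OrthonormalBasis (Fin 2) ℝ E2, b 0 = i.1 ∧
      b 1 = (if i.2 then (1 : ℝ) else -1) • (WithLp.toLp 2 ![-i.1.1 1, i.1.1 0] : E2) :=
    fun i => exists_basis (hF i.1 i.1.2).2 i.2
  choose b hb0 hb1 using hex
  have hdisj : Pairwise (Function.onFun Disjoint fun i => cell F (b i)) := by
    intro i j hij
    rw [Function.onFun, Set.disjoint_left]
    rintro y ⟨hi, hi'⟩ ⟨hj, hj'⟩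
    by_cases h : i.1 = j.1
    · have h2 : i.2 ≠ j.2 := fun h2 => hij (Prod.ext h h2)
      rw [hb1, real_inner_smul_left] at hi hj
      rw [h] at hi
      cases hi2 : i.2 <;> cases hj2 : j.2 <;> simp_all <;> linarith
    · have h1 := hi' j.1 j.1.2 (by rw [hb0]; exact fun e => h (Subtype.ext e.symm))
      have h2 := hj' i.1 i.1.2 (by rw [hb0]; exact fun e => h (Subtype.ext e))
      rw [hb0] at h1 h2
      linarith
  -- The lines bounding the half-cells.
  let N : Set E2 := (⋃ i : F × Bool, {y | ⟪b i 1, y⟫ = 0}) ∪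
    ⋃ q : {q : F × F // q.1 ≠ q.2}, {y | ⟪(q.1.1 : E2) - q.1.2, y⟫ = 0}
  have hN : volume N = 0 := by
    refine measure_union_null (measure_iUnion_null fun i => ?_) (measure_iUnion_null fun q => ?_)
    · exact volume_line ((b i).orthonormal.ne_zero 1) 0
    · exact volume_line (sub_ne_zero.2 fun h => q.2 (Subtype.ext h)) 0
  have hcover : ∀ y, y ∉ N → ∃ i, y ∈ cell F (b i) := by
    intro y hy
    simp only [N, Set.mem_union, Set.mem_iUnion, Set.mem_ofPred_eq, not_or, not_exists] at hy
    obtain ⟨hy1, hy2⟩ := hy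
    have hne : F.Nonempty := let ⟨u, hu, _⟩ := hgap 0; ⟨u, hu⟩
    obtain ⟨u, hu, hmax⟩ := F.exists_max_image (fun u => ⟪u, y⟫) hne
    have hlt : ∀ v ∈ F, v ≠ u → ⟪v, y⟫ < ⟪u, y⟫ := by
      intro v hv hvu
      refine lt_of_le_of_ne (hmax v hv) fun h => ?_
      refine hy2 ⟨(⟨v, hv⟩, ⟨u, hu⟩), fun h => hvu (congrArg Subtype.val h)⟩ ?_
      rw [inner_sub_left]
      exact sub_eq_zero.2 h
    have ht := hy1 (⟨u, hu⟩, true)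
    have ht' := hb1 (⟨u, hu⟩, true)
    have hf' := hb1 (⟨u, hu⟩, false)
    rcases lt_or_gt_of_ne ht with h | h
    · refine ⟨(⟨u, hu⟩, false), ?_, ?_⟩
      · rw [ht', real_inner_smul_left] at h
        rw [hf', real_inner_smul_left]
        simp only [if_true, Bool.false_eq_true, if_false] at h ⊢
        linarith
      · rw [hb0]; exact hlt
    · exact ⟨(⟨u, hu⟩, true), h, by rw [hb0]; exact hlt⟩
  set D := polarBody K \ Metric.closedBall (0 : E2) 1
  set D' := Metric.closedBall (0 : E2) 1 \ interior K
  have hD' : MeasurableSet D' :=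
    Metric.isClosed_closedBall.measurableSet.diff isOpen_interior.measurableSet
  calc volume D ≤ volume (N ∪ ⋃ i, cell F (b i) ∩ D) := by
        apply measure_mono
        intro y hy
        by_cases hyN : y ∈ N
        · exact Or.inl hyN
        · obtain ⟨i, hi⟩ := hcover y hyN
          exact Or.inr (Set.mem_iUnion.2 ⟨i, hi, hy⟩)
    _ ≤ volume N + volume (⋃ i, cell F (b i) ∩ D) := measure_union_le _ _
    _ ≤ 0 + ∑ i, volume (cell F (b i) ∩ D) := by
        rw [hN]
        gcongr
        exact measure_iUnion_fintype_le _ _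
    _ ≤ ∑ i, volume (cell F (b i) ∩ D') := by
        rw [zero_add]
        refine Finset.sum_le_sum fun i _ => volume_cell_le hF ?_ hgap
        rw [hb0]
        exact i.1.2
    _ = volume (⋃ i, cell F (b i) ∩ D') := by
        rw [measure_iUnion, tsum_fintype]
        · intro i j hij
          exact (hdisj hij).mono inter_subset_left inter_subset_left
        · exact fun i => (isOpen_cell F (b i)).measurableSet.inter hD'
    _ ≤ volume D' := measure_mono (Set.iUnion_subset fun i => inter_subset_right)

/-- Theorem B (Löwner case): if B² is the Löwner ellipse of the o-symmetric convex body K,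
then V(K) + V(K*) ≤ 2π. -/
theorem area_sum_bound_loewner
    (K : Set E2) (hKcomp : IsCompact K) (hKconv : Convex ℝ K)
    (hKint : (interior K).Nonempty) (hsym : K = -K)
    (hKB : K ⊆ Metric.closedBall (0 : E2) 1)
    (hLoewner : ∀ T : E2 →ₗ[ℝ] E2, Function.Bijective T →
      K ⊆ ⇑T '' Metric.closedBall (0 : E2) 1 → 1 ≤ |LinearMap.det T|) :
    volume K + volume (polarBody K) ≤ ENNReal.ofReal (2 * π) := by
  obtain ⟨F, hF, hgap⟩ := exists_contact_points K hKcomp hsym hKB hLoewner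
  have hmain := volume_polar_diff_le hF hgap
  set B : Set E2 := Metric.closedBall 0 1 with hB
  have hBvol : volume B = ENNReal.ofReal π := by
    rw [hB, EuclideanSpace.volume_closedBall_fin_two]
    simp [ENNReal.ofReal, Real.toNNReal_of_nonneg Real.pi_pos.le]
  have hK0 : volume (interior K) = volume K :=
    measure_congr (interior_ae_eq_of_null_frontier (hKconv.addHaar_frontier volume))
  have hsplit : volume (interior K) + volume (B \ interior K) = volume B := by
    have h := measure_inter_add_sdiff B (isOpen_interior (s := K)).measurableSet (μ := volume)
    rwa [Set.inter_eq_self_of_subset_right (interior_subset.trans hKB)] at h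
  have hP : volume (polarBody K) ≤ volume B + volume (polarBody K \ B) := by
    refine (measure_mono ?_).trans (measure_union_le _ _)
    intro y hy
    by_cases h : y ∈ B
    · exact Or.inl h
    · exact Or.inr ⟨hy, h⟩
  calc volume K + volume (polarBody K)
      ≤ volume (interior K) + (volume B + volume (B \ interior K)) := by
        rw [hK0]
        gcongr
        exact hP.trans (by gcongr)
    _ = volume B + (volume (interior K) + volume (B \ interior K)) := by ring
    _ = ENNReal.ofReal (2 * π) := by
        rw [hsplit, hBvol, ← ENNReal.ofReal_add Real.pi_pos.le Real.pi_pos.le, two_mul]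
end
end

section
/- For every integer d ≥ 4, the regular cross-polytope circumscribed about the unit ball, D^d = {x ∈ ℝ^d : |x₁| + ⋯ + |x_d| ≤ √d}, satisfies V(D^d) > 2κ_d, where κ_d is the volume of the d-dimensional Euclidean unit ball. -/
open MeasureTheory Real
open scoped ENNReal

/-!
Both volumes have closed forms: `V(D^d) = (2√d)^d / d!` and `κ_d = √π^d / Γ(d/2 + 1)`. Legendre's
duplication formula gives `d! √π = 2^d Γ((d+1)/2) Γ(d/2 + 1)`, so `2 κ_d < V(D^d)` is equivalent to
`2 √π^(d-1) Γ((d+1)/2) < √d^d`. Squared, with `d = n + 1`, this is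
`4 π^n Γ(n/2 + 1)^2 < (n+1)^(n+1)`, which is proved by induction in steps of two from `n = 3` and
`n = 4` (`four_mul_pi_pow_mul_Gamma_sq_lt`): the left side grows by the factor `π² (n/2 + 1)²`,
and the right side by at least `3 (n+3)²`, by Bernoulli's inequality.
-/

/-- Bernoulli's inequality for `(1 + 2/m)^m`, cleared of denominators. -/
lemma three_mul_pow_le (m : ℕ) (hm : 0 < m) : 3 * (m : ℝ) ^ m ≤ ((m : ℝ) + 2) ^ m := by
  have hm' : (0 : ℝ) < m := by exact_mod_cast hm
  have hb := one_add_mul_le_pow (a := 2 / (m : ℝ)) (by linarith [div_pos two_pos hm']) m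
  have h1 : 1 + (m : ℝ) * (2 / m) = 3 := by field_simp; norm_num
  have h2 : (m : ℝ) + 2 = (1 + 2 / m) * m := by field_simp
  rw [h1] at hb
  rw [h2, mul_pow]
  gcongr

lemma pi_pow_four_lt : π ^ 4 < 100 := by
  have h : π ^ 4 < 3.15 ^ 4 := by
    gcongr
    exact pi_lt_d2
  norm_num at h
  linarith

/-- The squared form of the volume comparison in dimension `n + 1`. -/
lemma four_mul_pi_pow_mul_Gamma_sq_lt (n : ℕ) (hn : 3 ≤ n) :
    4 * π ^ n * Gamma ((n : ℝ) / 2 + 1) ^ 2 < ((n : ℝ) + 1) ^ (n + 1) := by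
  induction n using Nat.strong_induction_on with
  | _ n ih =>
    rcases Nat.lt_or_ge n 5 with h5 | h5
    · have h4 := pi_pow_four_lt
      interval_cases n
      · have hG : Gamma (((3 : ℕ) : ℝ) / 2 + 1) = 3 / 4 * √π := by
          have e : ((3 : ℕ) : ℝ) / 2 = 1 / 2 + 1 := by norm_num
          rw [e, Gamma_add_one (by norm_num), Gamma_add_one (by norm_num), Gamma_one_half_eq]
          ring
        rw [hG, mul_pow, sq_sqrt pi_pos.le]
        norm_num
        nlinarith
      · have hG : Gamma (((4 : ℕ) : ℝ) / 2 + 1) = 2 := by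
          have e : ((4 : ℕ) : ℝ) / 2 + 1 = ((2 : ℕ) : ℝ) + 1 := by norm_num
          rw [e, Gamma_nat_eq_factorial]
          norm_num [Nat.factorial]
        rw [hG]
        norm_num
        linarith
    · obtain ⟨m, rfl⟩ : ∃ m, n = m + 2 := ⟨n - 2, by omega⟩
      have hm := ih m (by omega) (by omega)
      have hB := three_mul_pow_le (m + 1) (by omega)
      have hG : Gamma (((m + 2 : ℕ) : ℝ) / 2 + 1)
          = ((m : ℝ) / 2 + 1) * Gamma ((m : ℝ) / 2 + 1) := by
        rw [← Gamma_add_one (by positivity)]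
        congr 1
        push_cast
        ring
      have hpi : π ^ 2 ≤ 12 := by nlinarith [pi_lt_d2, pi_pos]
      have hfac : π ^ 2 * ((m : ℝ) / 2 + 1) ^ 2 ≤ 3 * ((m : ℝ) + 3) ^ 2 := by
        calc π ^ 2 * ((m : ℝ) / 2 + 1) ^ 2 ≤ 12 * ((m : ℝ) / 2 + 1) ^ 2 := by gcongr
          _ ≤ 3 * ((m : ℝ) + 3) ^ 2 := by nlinarith [Nat.cast_nonneg (α := ℝ) m]
      push_cast at hB
      rw [hG]
      calc 4 * π ^ (m + 2) * (((m : ℝ) / 2 + 1) * Gamma ((m : ℝ) / 2 + 1)) ^ 2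
          = (π ^ 2 * ((m : ℝ) / 2 + 1) ^ 2) * (4 * π ^ m * Gamma ((m : ℝ) / 2 + 1) ^ 2) := by ring
        _ < (π ^ 2 * ((m : ℝ) / 2 + 1) ^ 2) * ((m : ℝ) + 1) ^ (m + 1) := by gcongr
        _ ≤ (3 * ((m : ℝ) + 3) ^ 2) * ((m : ℝ) + 1) ^ (m + 1) := by gcongr
        _ = ((m : ℝ) + 3) ^ 2 * (3 * ((m : ℝ) + 1) ^ (m + 1)) := by ring
        _ ≤ ((m : ℝ) + 3) ^ 2 * ((m : ℝ) + 1 + 2) ^ (m + 1) := by gcongr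
        _ = (((m + 2 : ℕ) : ℝ) + 1) ^ (m + 2 + 1) := by
          push_cast
          ring

/-- The comparison of the two closed-form volumes, as real numbers. -/
lemma two_mul_ball_lt_crosspolytope (d : ℕ) (hd : 4 ≤ d) :
    2 * (√π ^ d / Gamma ((d : ℝ) / 2 + 1)) < √d ^ d * (2 ^ d / Gamma ((d : ℝ) + 1)) := by
  obtain ⟨n, rfl⟩ : ∃ n, d = n + 1 := ⟨d - 1, by omega⟩
  have hsq := four_mul_pi_pow_mul_Gamma_sq_lt n (by omega)
  set A := Gamma ((n : ℝ) / 2 + 1) with hA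
  have hApos : 0 < A := Gamma_pos_of_pos (by positivity)
  have hBpos : 0 < Gamma (((n + 1 : ℕ) : ℝ) / 2 + 1) := Gamma_pos_of_pos (by positivity)
  have hCpos : 0 < Gamma (((n + 1 : ℕ) : ℝ) + 1) := Gamma_pos_of_pos (by positivity)
  have hroot : 2 * √π ^ n * A < √((n + 1 : ℕ) : ℝ) ^ (n + 1) := by
    refine lt_of_pow_lt_pow_left₀ 2 (by positivity) ?_
    have e1 : (2 * √π ^ n * A) ^ 2 = 4 * π ^ n * A ^ 2 := by
      rw [mul_pow, mul_pow, ← pow_mul, mul_comm n 2, pow_mul, sq_sqrt pi_pos.le]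
      norm_num
    have e2 : (√((n + 1 : ℕ) : ℝ) ^ (n + 1)) ^ 2 = ((n : ℝ) + 1) ^ (n + 1) := by
      rw [← pow_mul, mul_comm (n + 1) 2, pow_mul, sq_sqrt (by positivity)]
      push_cast
      rfl
    rw [e1, e2]
    exact hsq
  -- Legendre duplication at `s = n/2 + 1 = (d+1)/2`.
  have hdup : A * Gamma (((n + 1 : ℕ) : ℝ) / 2 + 1) * 2 ^ (n + 1)
      = Gamma (((n + 1 : ℕ) : ℝ) + 1) * √π := by
    have h := Gamma_mul_Gamma_add_half ((n : ℝ) / 2 + 1)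
    have e1 : (n : ℝ) / 2 + 1 + 1 / 2 = ((n + 1 : ℕ) : ℝ) / 2 + 1 := by push_cast; ring
    have e2 : 2 * ((n : ℝ) / 2 + 1) = ((n + 1 : ℕ) : ℝ) + 1 := by push_cast; ring
    have e3 : (1 : ℝ) - (((n + 1 : ℕ) : ℝ) + 1) = -((n + 1 : ℕ) : ℝ) := by ring
    rw [e1, e2, e3, rpow_neg two_pos.le, rpow_natCast] at h
    rw [hA, h]
    field_simp
  rw [← mul_div_assoc, ← mul_div_assoc, div_lt_div_iff₀ hBpos hCpos]
  calc 2 * √π ^ (n + 1) * Gamma (((n + 1 : ℕ) : ℝ) + 1)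
      = 2 * √π ^ n * (Gamma (((n + 1 : ℕ) : ℝ) + 1) * √π) := by ring
    _ = (2 * √π ^ n * A) * (2 ^ (n + 1) * Gamma (((n + 1 : ℕ) : ℝ) / 2 + 1)) := by
      rw [← hdup]
      ring
    _ < √((n + 1 : ℕ) : ℝ) ^ (n + 1) * (2 ^ (n + 1) * Gamma (((n + 1 : ℕ) : ℝ) / 2 + 1)) := by
      gcongr
    _ = √((n + 1 : ℕ) : ℝ) ^ (n + 1) * 2 ^ (n + 1) * Gamma (((n + 1 : ℕ) : ℝ) / 2 + 1) := by ring

lemma volume_crosspolytope (d : ℕ) (hd : 0 < d) (r : ℝ) :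
    volume {x : EuclideanSpace ℝ (Fin d) | ∑ i, |x i| ≤ r}
      = .ofReal r ^ d * .ofReal (2 ^ d / Gamma ((d : ℝ) + 1)) := by
  haveI : Nonempty (Fin d) := ⟨⟨0, hd⟩⟩
  have h := volume_sum_rpow_le (ι := Fin d) le_rfl r
  have hG : Gamma 2 = 1 := by simp
  simp only [rpow_one, div_one, Fintype.card_fin, one_add_one_eq_two, hG, mul_one] at h
  rw [← h, ← (EuclideanSpace.volume_preserving_symm_measurableEquiv_toLp (Fin d)).measure_preimage_equiv]
  rfl

/-- For d ≥ 4, the regular cross-polytope circumscribed about the unit ball has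
volume greater than twice the volume of the unit ball. -/
theorem crosspolytope_volume_gt_two_ball
    (d : ℕ) (hd : 4 ≤ d)
    (D : Set (EuclideanSpace ℝ (Fin d)))
    (hD : D = {x : EuclideanSpace ℝ (Fin d) | ∑ i, |x i| ≤ Real.sqrt d}) :
    2 * volume (Metric.closedBall (0 : EuclideanSpace ℝ (Fin d)) 1) < volume D := by
  haveI : Nonempty (Fin d) := ⟨⟨0, by omega⟩⟩
  have hlt := two_mul_ball_lt_crosspolytope d hd
  have hpos : 0 ≤ 2 * (√π ^ d / Gamma ((d : ℝ) / 2 + 1)) := by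
    have := Gamma_pos_of_pos (s := (d : ℝ) / 2 + 1) (by positivity)
    positivity
  have htwo : (2 : ℝ≥0∞) = ENNReal.ofReal 2 := by simp
  rw [hD, volume_crosspolytope d (by omega), EuclideanSpace.volume_closedBall, Fintype.card_fin,
    ENNReal.ofReal_one, one_pow, one_mul, htwo, ← ENNReal.ofReal_mul two_pos.le,
    ← ENNReal.ofReal_pow (sqrt_nonneg _), ← ENNReal.ofReal_mul (by positivity)]
  exact (ENNReal.ofReal_lt_ofReal_iff (hpos.trans_lt hlt)).2 hlt
end
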